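/- Let ((v_k(t))_{k≥1,t∈[0,T]}, r) be a solution of the integrated Burgers control problem such that Σ_{k≥1} v_k(t) = 1 for every t ∈ [0,T] and Σ_{k≥1} k v_k(0) = ∞ (so T_gel = 0). Fix t̄ ∈ (0,T] and x̄ > 0, and suppose there are constants 0 < c ≤ C < ∞ with c ≤ E(0,x) ≤ C and |∂_x E(0,x)| ≤ C·x^{−1/2} for all x ∈ (0, x̄ + t̄]. Then there exist a Lipschitz-continuous function φ : [0, t̄] → (0,∞) with r(t) = ∫₀ᵗ φ(s) ds, and a constant C' > 1, such that C'^{−1} ≤ φ(t) ≤ C' and, for all (t,x) ∈ [0, t̄] × (0, x̄]: |−V(t,x) − √(2φ(t))·x^{1/2}| ≤ C'·x, |−∂_x V(t,x) − √(φ(t)/2)·x^{−1/2}| ≤ C', |∂_x² V(t,x) − √(φ(t)/8)·x^{−3/2}| ≤ C'·x^{−1}, and |V(t,x)·∂_x V(t,x) − φ(t)| ≤ C'·x^{1/2}. -/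

import Mathlib

open MeasureTheory Filter Topology Set

/-- The generating function of the time-dependent cluster size distribution
`(v_k(t))_{k ≥ 1}`: `V(t,x) = ∑_{k≥1} v_k(t) e^(−kx) − 1`. -/
noncomputable def genFun (v : ℕ → ℝ → ℝ) (t x : ℝ) : ℝ :=
  (∑' k : ℕ, v (k + 1) t * Real.exp (-((k : ℝ) + 1) * x)) - 1

/-- `(v, r)` is a solution of the integrated Burgers control problem on `[0, T]`:
the `v_k(t)` are nonnegative with total mass at most one, `r` is nondecreasing on
`[0, T]` with `r 0 = 0`, `r T ≤ 1 + T/2`, and the generating function satisfies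
`V(t,x) − V(0,x) + ∫₀ᵗ V(s,x)·∂ₓV(s,x) ds = e^(−x)·r(t)` for `t ∈ [0,T]`, `x > 0`. -/
def IsBurgersSolution (T : ℝ) (v : ℕ → ℝ → ℝ) (r : ℝ → ℝ) : Prop :=
  (∀ k, 1 ≤ k → ∀ t ∈ Set.Icc (0:ℝ) T, 0 ≤ v k t) ∧
  (∀ t ∈ Set.Icc (0:ℝ) T, Summable (fun k : ℕ => v (k + 1) t)) ∧
  (∀ t ∈ Set.Icc (0:ℝ) T, (∑' k : ℕ, v (k + 1) t) ≤ 1) ∧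
  MonotoneOn r (Set.Icc 0 T) ∧
  r 0 = 0 ∧
  (∀ t ∈ Set.Icc (0:ℝ) T, 0 ≤ r t) ∧
  r T ≤ 1 + T / 2 ∧
  (∀ t ∈ Set.Icc (0:ℝ) T, ∀ x : ℝ, 0 < x →
    genFun v t x - genFun v 0 x
        + ∫ s in (0:ℝ)..t, genFun v s x * deriv (genFun v s) x
      = Real.exp (-x) * r t)

/-- `E(t,x) = −(∂ₓV(t,x))³ / ∂ₓ²V(t,x)`. -/
noncomputable def EFun (v : ℕ → ℝ → ℝ) (t x : ℝ) : ℝ :=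
  -(deriv (genFun v t) x) ^ 3 / iteratedDeriv 2 (genFun v t) x

/-! ### Series facts for a fixed size distribution -/

/-- The `n`-th moment generating series `∑ (k+1)^n a_k e^{-(k+1)x}`. -/
noncomputable def momSer (a : ℕ → ℝ) (n : ℕ) (x : ℝ) : ℝ :=
  ∑' k : ℕ, a k * ((k : ℝ) + 1) ^ n * Real.exp (-((k : ℝ) + 1) * x)

lemma pow_mul_exp_neg_le (n : ℕ) {y : ℝ} (hy : 0 ≤ y) :
    y ^ n * Real.exp (-y) ≤ n.factorial := by
  have h := Real.pow_div_factorial_le_exp y hy n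
  have hf : (0:ℝ) < n.factorial := by exact_mod_cast n.factorial_pos
  rw [div_le_iff₀ hf] at h
  calc y ^ n * Real.exp (-y) ≤ (Real.exp y * n.factorial) * Real.exp (-y) := by gcongr
    _ = n.factorial * (Real.exp y * Real.exp (-y)) := by ring
    _ = n.factorial := by rw [← Real.exp_add]; simp

lemma momSer_term_le (n : ℕ) (k : ℕ) {x : ℝ} (hx : 0 < x) :
    ((k : ℝ) + 1) ^ n * Real.exp (-((k : ℝ) + 1) * x) ≤ n.factorial / x ^ n := by
  rw [le_div_iff₀ (by positivity)]
  have := pow_mul_exp_neg_le n (y := ((k:ℝ)+1) * x) (by positivity)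
  rw [mul_pow] at this
  calc _ = ((k : ℝ) + 1) ^ n * x ^ n * Real.exp (-(((k : ℝ) + 1) * x)) := by
        rw [neg_mul]; ring
    _ ≤ _ := this

lemma momSer_summable {a : ℕ → ℝ} (ha : ∀ k, 0 ≤ a k) (hs : HasSum a 1) (n : ℕ) {x : ℝ}
    (hx : 0 < x) :
    Summable (fun k : ℕ => a k * ((k : ℝ) + 1) ^ n * Real.exp (-((k : ℝ) + 1) * x)) := by
  refine Summable.of_nonneg_of_le (fun k => ?_) (fun k => ?_)
    (hs.summable.mul_right ((n.factorial : ℝ) / x ^ n))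
  · have := ha k; positivity
  · rw [mul_assoc]
    exact mul_le_mul_of_nonneg_left (momSer_term_le n k hx) (ha k)

lemma momSer_bd {a : ℕ → ℝ} (ha : ∀ k, 0 ≤ a k) (hs : HasSum a 1) (n : ℕ) {x : ℝ}
    (hx : 0 < x) : x ^ n * momSer a n x ≤ n.factorial := by
  have h : momSer a n x ≤ ∑' k, a k * ((n.factorial : ℝ) / x ^ n) := by
    refine Summable.tsum_le_tsum (fun k => ?_) (momSer_summable ha hs n hx)
      (hs.summable.mul_right _)
    rw [mul_assoc]
    exact mul_le_mul_of_nonneg_left (momSer_term_le n k hx) (ha k)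
  rw [tsum_mul_right, hs.tsum_eq, one_mul, le_div_iff₀ (by positivity)] at h
  linarith

lemma momSer_pos {a : ℕ → ℝ} (ha : ∀ k, 0 ≤ a k) (hs : HasSum a 1) (n : ℕ) {x : ℝ}
    (hx : 0 < x) : 0 < momSer a n x := by
  have hex : ∃ k, a k ≠ 0 := by
    by_contra h
    push Not at h
    have : a = 0 := funext h
    rw [this] at hs
    have := hs.unique hasSum_zero
    norm_num at this
  obtain ⟨k, hk⟩ := hex
  have hk' : 0 < a k := lt_of_le_of_ne (ha k) (Ne.symm hk)
  refine (momSer_summable ha hs n hx).tsum_pos (fun j => ?_) k (by positivity)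
  have := ha j; positivity

lemma momSer_der {a : ℕ → ℝ} (ha : ∀ k, 0 ≤ a k) (hs : HasSum a 1) (n : ℕ) {x : ℝ}
    (hx : 0 < x) : HasDerivAt (momSer a n) (-momSer a (n+1) x) x := by
  have key := hasDerivAt_tsum_of_isPreconnected (𝕜 := ℝ) (F := ℝ)
    (u := fun k : ℕ => a k * (((n+1).factorial : ℝ) / (x/2) ^ (n+1)))
    (g := fun (k : ℕ) y => a k * ((k : ℝ) + 1) ^ n * Real.exp (-((k : ℝ) + 1) * y))
    (g' := fun (k : ℕ) y => -(a k * ((k : ℝ) + 1) ^ (n+1) * Real.exp (-((k : ℝ) + 1) * y)))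
    (t := Ioi (x/2)) (y₀ := x) (y := x)
    (hs.summable.mul_right _) isOpen_Ioi isPreconnected_Ioi ?_ ?_ (by simp; linarith)
    (momSer_summable ha hs n hx) (by simp; linarith)
  · rw [tsum_neg] at key
    exact key
  · intro k y hy
    have h1 : HasDerivAt (fun y : ℝ => -((k : ℝ) + 1) * y) (-((k : ℝ) + 1)) y := by
      simpa using (hasDerivAt_id y).const_mul (-((k : ℝ) + 1))
    have h2 := (h1.exp).const_mul (a k * ((k : ℝ) + 1) ^ n)
    refine h2.congr_deriv ?_
    ring
  · intro k y hy
    have hy' : x/2 < y := hy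
    have hak := ha k
    rw [norm_neg, Real.norm_of_nonneg (by positivity), mul_assoc]
    refine mul_le_mul_of_nonneg_left ?_ hak
    refine le_trans ?_ (momSer_term_le (n+1) k (x := x/2) (by linarith))
    refine mul_le_mul_of_nonneg_left (Real.exp_le_exp.mpr ?_) (by positivity)
    have : (0:ℝ) ≤ (k:ℝ) := by positivity
    nlinarith

lemma momSer_xP {a : ℕ → ℝ} (ha : ∀ k, 0 ≤ a k) (hs : HasSum a 1) {x : ℝ}
    (hx : 0 < x) : x * momSer a 1 x ≤ 1 - momSer a 0 x := by
  have h0 := momSer_summable ha hs 0 hx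
  have h1 := momSer_summable ha hs 1 hx
  have : x * momSer a 1 x + momSer a 0 x ≤ 1 := by
    rw [← hs.tsum_eq]
    unfold momSer
    rw [← tsum_mul_left, ← (h1.mul_left x).tsum_add h0]
    refine Summable.tsum_le_tsum (fun k => ?_) ((h1.mul_left x).add h0) hs.summable
    have h := Real.add_one_le_exp (((k:ℝ)+1) * x)
    have h2 : Real.exp (-((k : ℝ) + 1) * x) * (((k:ℝ)+1) * x + 1) ≤ 1 := by
      calc _ ≤ Real.exp (-((k : ℝ) + 1) * x) * Real.exp (((k:ℝ)+1) * x) := by gcongr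
        _ = 1 := by rw [← Real.exp_add, neg_mul, neg_add_cancel, Real.exp_zero]
    calc _ = a k * (Real.exp (-((k : ℝ) + 1) * x) * (((k:ℝ)+1) * x + 1)) := by ring
      _ ≤ a k * 1 := mul_le_mul_of_nonneg_left h2 (ha k)
      _ = a k := mul_one _
  linarith

lemma momSer_xZ {a : ℕ → ℝ} (ha : ∀ k, 0 ≤ a k) (hs : HasSum a 1) {x : ℝ}
    (hx : 0 < x) : x * momSer a 3 x ≤ 2 * momSer a 2 (x/2) := by
  have h3 := momSer_summable ha hs 3 hx
  have h2 := momSer_summable ha hs 2 (x := x/2) (by linarith)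
  unfold momSer
  rw [← tsum_mul_left, ← tsum_mul_left]
  refine Summable.tsum_le_tsum (fun k => ?_) (h3.mul_left x) (h2.mul_left 2)
  have h := Real.add_one_le_exp (((k:ℝ)+1) * (x/2))
  have e : Real.exp (-((k : ℝ) + 1) * (x/2))
      = Real.exp (((k:ℝ)+1) * (x/2)) * Real.exp (-((k : ℝ) + 1) * x) := by
    rw [← Real.exp_add]; congr 1; ring
  rw [e]
  have hak := ha k
  have hpos : 0 ≤ a k * ((k : ℝ) + 1) ^ 2 * Real.exp (-((k : ℝ) + 1) * x) := by positivity
  nlinarith [mul_le_mul_of_nonneg_left h hpos]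

lemma momSer_lim {a : ℕ → ℝ} (ha : ∀ k, 0 ≤ a k) (hs : HasSum a 1) :
    Tendsto (momSer a 0) (𝓝[>] 0) (𝓝 1) := by
  rw [← hs.tsum_eq]
  refine tendsto_tsum_of_dominated_convergence (bound := a) hs.summable (fun k => ?_) ?_
  · have : ContinuousAt (fun x : ℝ => a k * ((k : ℝ) + 1) ^ 0 * Real.exp (-((k : ℝ) + 1) * x)) 0 := by
      fun_prop
    have := this.tendsto
    simp only [mul_zero, Real.exp_zero, pow_zero, mul_one] at this
    simpa using this.mono_left nhdsWithin_le_nhds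
  · filter_upwards [self_mem_nhdsWithin] with x hx k
    have hx' : (0:ℝ) < x := hx
    have hak := ha k
    rw [Real.norm_of_nonneg (by positivity), pow_zero, mul_one]
    refine mul_le_of_le_one_right hak ?_
    rw [Real.exp_le_one_iff]
    have : (0:ℝ) ≤ (k:ℝ) := by positivity
    nlinarith

/-- If the first moment series is bounded on `x > 0`, the first moment is finite. -/
lemma momSer_one_unbounded {a : ℕ → ℝ} (ha : ∀ k, 0 ≤ a k) (hs : HasSum a 1)
    (h : ¬ Summable (fun k : ℕ => ((k : ℝ) + 1) * a k)) (m : ℝ) :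
    ∃ x, 0 < x ∧ m < momSer a 1 x := by
  by_contra hcon
  push Not at hcon
  apply h
  refine summable_of_sum_le (c := m) (fun k => ?_) (fun u => ?_)
  · have := ha k; positivity
  · have hc : ContinuousAt (fun x : ℝ => ∑ k ∈ u, a k * ((k : ℝ) + 1) ^ 1 *
        Real.exp (-((k : ℝ) + 1) * x)) 0 := by fun_prop
    have ht := hc.tendsto.mono_left (nhdsWithin_le_nhds (s := Ioi 0))
    simp only [mul_zero, Real.exp_zero, pow_one, mul_one] at ht
    have : ∑ k ∈ u, a k * ((k : ℝ) + 1) ≤ m := by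
      refine le_of_tendsto ht ?_
      filter_upwards [self_mem_nhdsWithin] with x hx
      refine le_trans ?_ (hcon x hx)
      have hsum := momSer_summable ha hs 1 (x := x) hx
      simp only [pow_one] at hsum
      unfold momSer
      simp only [pow_one]
      refine hsum.sum_le_tsum u (fun k _ => ?_)
      have := ha k; positivity
    calc _ = ∑ k ∈ u, a k * ((k : ℝ) + 1) := Finset.sum_congr rfl (fun k _ => mul_comm _ _)
      _ ≤ m := this

/-! ### The abstract system -/

/-- The family `D n t x = ∑ k^n v_k(t) e^{-kx}` (with time clamped to `[0,T]`) and its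
properties which are used in the proof. -/
structure Sys (T : ℝ) (D : ℕ → ℝ → ℝ → ℝ) (r : ℝ → ℝ) : Prop where
  der : ∀ n t x, 0 < x → HasDerivAt (D n t) (-D (n+1) t x) x
  pos : ∀ n t x, 0 < x → 0 < D n t x
  bd : ∀ n t x, 0 < x → x ^ n * D n t x ≤ n.factorial
  xP : ∀ t x, 0 < x → x * D 1 t x ≤ 1 - D 0 t x
  xZ : ∀ t x, 0 < x → x * D 3 t x ≤ 2 * D 2 t (x/2)
  lim : ∀ t, Tendsto (D 0 t) (𝓝[>] 0) (𝓝 1)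
  meas : ∀ n x, 0 < x → Measurable (fun t => D n t x)
  rmono : Monotone r
  r0 : r 0 = 0
  eqn : ∀ s t x, 0 ≤ s → s ≤ t → t ≤ T → 0 < x →
    D 0 t x = D 0 s x - (∫ τ in s..t, (1 - D 0 τ x) * D 1 τ x) + Real.exp (-x) * (r t - r s)

/-- Primitives are measurable on an interval, whatever the integrand. -/
lemma measurable_primitive_clamp (h : ℝ → ℝ) (T : ℝ) (hT : 0 < T) :
    Measurable (fun t => ∫ s in (0:ℝ)..(max 0 (min t T)), h s) := by
  classical
  set S : Set ℝ := {t | t ∈ Icc 0 T ∧ IntervalIntegrable h volume 0 t} with hS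
  have hmono : ∀ t ∈ S, ∀ u, 0 ≤ u → u ≤ t → u ∈ S := by
    rintro t ⟨ht, hi⟩ u hu hut
    refine ⟨⟨hu, hut.trans ht.2⟩, hi.mono_set ?_⟩
    rw [uIcc_of_le hu, uIcc_of_le ht.1]
    exact Icc_subset_Icc le_rfl hut
  have hSm : MeasurableSet S := by
    apply OrdConnected.measurableSet
    refine ⟨fun a ha b hb u hu => hmono b hb u (ha.1.1.trans hu.1) hu.2⟩
  have hcont : ContinuousOn (fun t => ∫ s in (0:ℝ)..t, h s) S := by
    have hc : ∀ t ∈ S, ContinuousOn (fun t => ∫ s in (0:ℝ)..t, h s) (Icc 0 t) := by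
      rintro t ⟨ht, hi⟩
      have := intervalIntegral.continuousOn_primitive_interval (μ := volume) (f := h)
        (a := 0) (b := t) ?_
      · rwa [uIcc_of_le ht.1] at this
      · rw [uIcc_of_le ht.1, integrableOn_Icc_iff_integrableOn_Ioc]
        exact (intervalIntegrable_iff_integrableOn_Ioc_of_le ht.1).mp hi
    intro t ht
    by_cases hmax : ∃ u ∈ S, t < u
    · obtain ⟨u, hu, htu⟩ := hmax
      have h1 := hc u hu t ⟨ht.1.1, htu.le⟩
      refine h1.mono_of_mem_nhdsWithin ?_
      filter_upwards [self_mem_nhdsWithin, mem_nhdsWithin_of_mem_nhds (Iio_mem_nhds htu)]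
        with y hy hyu
      exact ⟨hy.1.1, le_of_lt hyu⟩
    · push Not at hmax
      exact (hc t ht t ⟨ht.1.1, le_rfl⟩).mono (fun y hy => ⟨hy.1.1, hmax y hy⟩)
  have hpw := hcont.measurable_piecewise (g := fun _ => (0:ℝ)) continuousOn_const hSm
  have hcl : Measurable (fun t : ℝ => max 0 (min t T)) := by fun_prop
  have := hpw.comp hcl
  convert this using 1
  funext t
  simp only [Function.comp, Set.piecewise]
  split_ifs with hif
  · rfl
  · have : ¬ IntervalIntegrable h volume 0 (max 0 (min t T)) := by
      intro hi
      exact hif ⟨⟨le_max_left _ _, max_le hT.le (min_le_right _ _)⟩, hi⟩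
    exact intervalIntegral.integral_undef this

lemma measurable_of_deriv_family {f f' : ℝ → ℝ → ℝ}
    (hf : ∀ x, 0 < x → Measurable (fun t => f t x))
    (hd : ∀ t x, 0 < x → HasDerivAt (f t) (f' t x) x) :
    ∀ x, 0 < x → Measurable (fun t => f' t x) := by
  intro x hx
  refine measurable_of_tendsto_metrizable
    (f := fun (m : ℕ) t => ((m:ℝ) + 1) * (f t (x + 1 / ((m:ℝ) + 1)) - f t x)) (fun m => ?_) ?_
  · exact ((hf _ (by positivity)).sub (hf x hx)).const_mul _
  · rw [tendsto_pi_nhds]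
    intro t
    have h1 := hasDerivAt_iff_tendsto_slope.mp (hd t x hx)
    have h2 : Tendsto (fun m : ℕ => x + 1 / ((m:ℝ) + 1)) atTop (𝓝[≠] x) := by
      rw [tendsto_nhdsWithin_iff]
      constructor
      · have := (tendsto_one_div_add_atTop_nhds_zero_nat (𝕜 := ℝ)).const_add x
        simpa using this
      · refine Eventually.of_forall (fun m => ?_)
        have : (0:ℝ) < 1 / ((m:ℝ) + 1) := by positivity
        simp only [mem_compl_iff, mem_singleton_iff]
        intro h
        linarith
    have h3 := h1.comp h2
    refine h3.congr (fun m => ?_)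
    simp only [Function.comp, slope_def_field]
    have : (0:ℝ) < (m:ℝ) + 1 := by positivity
    field_simp
    ring_nf

lemma genFun_eq (v : ℕ → ℝ → ℝ) (t x : ℝ) :
    genFun v t x = momSer (fun k => v (k+1) t) 0 x - 1 := by
  simp [genFun, momSer]

lemma genFun_hasDerivAt {v : ℕ → ℝ → ℝ} {t : ℝ} (ha : ∀ k, 0 ≤ v (k+1) t)
    (hs : HasSum (fun k => v (k+1) t) 1) {x : ℝ} (hx : 0 < x) :
    HasDerivAt (genFun v t) (-momSer (fun k => v (k+1) t) 1 x) x := by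
  have h := (momSer_der ha hs 0 hx).sub_const 1
  exact h.congr_of_eventuallyEq (Eventually.of_forall (fun y => genFun_eq v t y))

lemma genFun_deriv {v : ℕ → ℝ → ℝ} {t : ℝ} (ha : ∀ k, 0 ≤ v (k+1) t)
    (hs : HasSum (fun k => v (k+1) t) 1) {x : ℝ} (hx : 0 < x) :
    deriv (genFun v t) x = -momSer (fun k => v (k+1) t) 1 x :=
  (genFun_hasDerivAt ha hs hx).deriv

lemma genFun_deriv2 {v : ℕ → ℝ → ℝ} {t : ℝ} (ha : ∀ k, 0 ≤ v (k+1) t)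
    (hs : HasSum (fun k => v (k+1) t) 1) {x : ℝ} (hx : 0 < x) :
    iteratedDeriv 2 (genFun v t) x = momSer (fun k => v (k+1) t) 2 x := by
  rw [iteratedDeriv_succ, iteratedDeriv_one]
  have h := (momSer_der ha hs 1 hx).neg
  rw [neg_neg] at h
  refine (h.congr_of_eventuallyEq ?_).deriv
  filter_upwards [Ioi_mem_nhds hx] with y hy
  exact genFun_deriv ha hs hy

lemma EFun_eq {v : ℕ → ℝ → ℝ} {t : ℝ} (ha : ∀ k, 0 ≤ v (k+1) t)
    (hs : HasSum (fun k => v (k+1) t) 1) {x : ℝ} (hx : 0 < x) :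
    EFun v t x = momSer (fun k => v (k+1) t) 1 x ^ 3 / momSer (fun k => v (k+1) t) 2 x := by
  rw [EFun, genFun_deriv ha hs hx, genFun_deriv2 ha hs hx]
  congr 1; ring

lemma sys_of_solution {T : ℝ} {v : ℕ → ℝ → ℝ} {r : ℝ → ℝ}
    (hsol : IsBurgersSolution T v r)
    (hcons : ∀ t ∈ Set.Icc (0:ℝ) T, HasSum (fun k : ℕ => v (k + 1) t) 1)
    {tbar : ℝ} (htbar : tbar ∈ Set.Ioc (0:ℝ) T) :
    Sys tbar (fun n t x => momSer (fun k => v (k+1) (max 0 (min t tbar))) n x)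
      (fun t => r (max 0 (min t tbar))) := by
  obtain ⟨hnn, -, -, hrm, hr0, -, -, heq⟩ := hsol
  have hcl : ∀ t : ℝ, max 0 (min t tbar) ∈ Icc (0:ℝ) T := fun t =>
    ⟨le_max_left _ _, max_le (htbar.1.le.trans htbar.2) ((min_le_right _ _).trans htbar.2)⟩
  have hcid : ∀ t : ℝ, 0 ≤ t → t ≤ tbar → max 0 (min t tbar) = t := fun t h0 h1 => by
    rw [min_eq_left h1, max_eq_right h0]
  have ha : ∀ t, ∀ k, 0 ≤ v (k+1) (max 0 (min t tbar)) := fun t k =>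
    hnn (k+1) (by omega) _ (hcl t)
  have hs : ∀ t, HasSum (fun k => v (k+1) (max 0 (min t tbar))) 1 := fun t => hcons _ (hcl t)
  have ha' : ∀ t ∈ Icc (0:ℝ) T, ∀ k, 0 ≤ v (k+1) t := fun t ht k => hnn (k+1) (by omega) _ ht
  have hrmono : Monotone (fun t => r (max 0 (min t tbar))) := fun a b hab =>
    hrm (hcl a) (hcl b) (by gcongr)
  have hder : ∀ n t x, 0 < x → HasDerivAt
      ((fun n t x => momSer (fun k => v (k+1) (max 0 (min t tbar))) n x) n t)
      (-momSer (fun k => v (k+1) (max 0 (min t tbar))) (n+1) x) x := fun n t x hx =>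
    momSer_der (ha t) (hs t) n hx
  have hmeas : ∀ n x, 0 < x →
      Measurable (fun t => momSer (fun k => v (k+1) (max 0 (min t tbar))) n x) := by
    intro n
    induction n with
    | zero =>
      intro x hx
      have h1 := measurable_primitive_clamp
        (fun s => genFun v s x * deriv (genFun v s) x) tbar htbar.1
      have h2 : Measurable (fun t => genFun v 0 x + 1 -
          (∫ s in (0:ℝ)..(max 0 (min t tbar)), genFun v s x * deriv (genFun v s) x)
          + Real.exp (-x) * r (max 0 (min t tbar))) :=
        (measurable_const.sub h1).add (hrmono.measurable.const_mul _)
      convert h2 using 1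
      funext t
      have := heq _ (hcl t) x hx
      rw [genFun_eq v (max 0 (min t tbar))] at this
      linarith
    | succ n ih =>
      intro x hx
      have := measurable_of_deriv_family ih (hder n) x hx
      convert this.neg using 1
      funext t
      simp
  refine ⟨hder, fun n t x hx => momSer_pos (ha t) (hs t) n hx,
    fun n t x hx => momSer_bd (ha t) (hs t) n hx, fun t x hx => momSer_xP (ha t) (hs t) hx,
    fun t x hx => momSer_xZ (ha t) (hs t) hx, fun t => momSer_lim (ha t) (hs t), hmeas,
    hrmono, ?_, ?_⟩
  · simp only [hcid 0 le_rfl htbar.1.le, hr0]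
  · intro s t x hs0 hst htT hx
    have key : ∀ t, 0 ≤ t → t ≤ tbar → momSer (fun k => v (k+1) (max 0 (min t tbar))) 0 x
        = momSer (fun k => v (k+1) 0) 0 x - (∫ τ in (0:ℝ)..t,
          (1 - momSer (fun k => v (k+1) (max 0 (min τ tbar))) 0 x) *
            momSer (fun k => v (k+1) (max 0 (min τ tbar))) 1 x)
          + Real.exp (-x) * r (max 0 (min t tbar)) := by
      intro t ht0 htT
      have h1 := heq t ⟨ht0, htT.trans htbar.2⟩ x hx
      have h2 : (∫ s in (0:ℝ)..t, genFun v s x * deriv (genFun v s) x) = ∫ τ in (0:ℝ)..t,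
          (1 - momSer (fun k => v (k+1) (max 0 (min τ tbar))) 0 x) *
            momSer (fun k => v (k+1) (max 0 (min τ tbar))) 1 x := by
        refine intervalIntegral.integral_congr (fun τ hτ => ?_)
        rw [uIcc_of_le ht0] at hτ
        have hτT : τ ∈ Icc (0:ℝ) T := ⟨hτ.1, hτ.2.trans (htT.trans htbar.2)⟩
        simp only [hcid τ hτ.1 (hτ.2.trans htT)]
        rw [genFun_eq, genFun_deriv (ha' τ hτT) (hcons τ hτT) hx]
        ring
      rw [h2, genFun_eq, genFun_eq] at h1
      rw [hcid t ht0 htT]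
      linarith
    have hItg : ∀ a b : ℝ, IntervalIntegrable (fun τ =>
        (1 - momSer (fun k => v (k+1) (max 0 (min τ tbar))) 0 x) *
            momSer (fun k => v (k+1) (max 0 (min τ tbar))) 1 x) volume a b := by
      intro a b
      refine (intervalIntegrable_const (c := 1 / x)).mono_fun
        ((measurable_const.sub (hmeas 0 x hx)).mul (hmeas 1 x hx)).aestronglyMeasurable
        (Eventually.of_forall (fun τ => ?_))
      have h1 := momSer_bd (ha τ) (hs τ) 1 hx
      have h2 := momSer_pos (ha τ) (hs τ) 1 hx
      have h3 := momSer_pos (ha τ) (hs τ) 0 hx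
      have h4 := momSer_xP (ha τ) (hs τ) hx
      have h5 : 0 ≤ 1 - momSer (fun k => v (k+1) (max 0 (min τ tbar))) 0 x := by
        have : 0 < x * momSer (fun k => v (k+1) (max 0 (min τ tbar))) 1 x := by positivity
        linarith
      simp only
      rw [Real.norm_of_nonneg (by positivity), Real.norm_of_nonneg (by positivity),
        le_div_iff₀ hx]
      simp only [pow_one, Nat.factorial_one, Nat.cast_one] at h1
      nlinarith
    have e1 := key t (hs0.trans hst) htT
    have e2 := key s hs0 (hst.trans htT)
    have e3 := intervalIntegral.integral_add_adjacent_intervals (hItg 0 s) (hItg s t)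
    beta_reduce
    rw [e1, e2, ← e3]
    ring

/-! ### Basic consequences -/

namespace Sys

variable {T : ℝ} {D : ℕ → ℝ → ℝ → ℝ} {r : ℝ → ℝ}

lemma W_pos (h : Sys T D r) (t : ℝ) {x : ℝ} (hx : 0 < x) : 0 < 1 - D 0 t x := by
  have h1 := h.xP t x hx
  have h2 := h.pos 1 t x hx
  have : 0 < x * D 1 t x := by positivity
  linarith

lemma W_le_one (h : Sys T D r) (t : ℝ) {x : ℝ} (hx : 0 < x) : 1 - D 0 t x ≤ 1 := by
  linarith [h.pos 0 t x hx]

lemma anti (h : Sys T D r) (n : ℕ) (t : ℝ) {x y : ℝ} (hx : 0 < x) (hxy : x ≤ y) :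
    D n t y ≤ D n t x := by
  have : AntitoneOn (D n t) (Ioi 0) := by
    refine antitoneOn_of_hasDerivWithinAt_nonpos (f' := fun x => -D (n+1) t x) (convex_Ioi 0)
      (fun x hx => (h.der n t x hx).continuousAt.continuousWithinAt)
      (fun x hx => ?_) (fun x hx => ?_)
    · rw [interior_Ioi] at hx
      exact (h.der n t x hx).hasDerivWithinAt
    · rw [interior_Ioi] at hx
      linarith [h.pos (n+1) t x hx]
  exact this hx (lt_of_lt_of_le hx hxy) hxy

lemma le_of_ge (h : Sys T D r) (n : ℕ) (t : ℝ) {x y : ℝ} (hx : 0 < x) (hxy : x ≤ y) :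
    D n t y ≤ n.factorial / x ^ n := by
  refine (h.anti n t hx hxy).trans ?_
  rw [le_div_iff₀ (by positivity)]
  linarith [h.bd n t x hx]

lemma abs_le_of_ge (h : Sys T D r) (n : ℕ) (t : ℝ) {x y : ℝ} (hx : 0 < x) (hxy : x ≤ y) :
    |D n t y| ≤ n.factorial / x ^ n := by
  rw [abs_of_pos (h.pos n t y (hx.trans_le hxy))]
  exact h.le_of_ge n t hx hxy

lemma lip (h : Sys T D r) (n : ℕ) (t : ℝ) {x y z : ℝ} (hx : 0 < x) (hy : x ≤ y) (hz : x ≤ z) :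
    |D n t y - D n t z| ≤ (n+1).factorial / x ^ (n+1) * |y - z| := by
  have := (convex_Ici x).norm_image_sub_le_of_norm_hasDerivWithin_le (f := D n t)
    (f' := fun x => -D (n+1) t x) (C := (n+1).factorial / x ^ (n+1)) (x := z) (y := y)
    (fun u hu => (h.der n t u (hx.trans_le hu)).hasDerivWithinAt)
    (fun u hu => by rw [norm_neg]; exact h.abs_le_of_ge (n+1) t hx hu) hz hy
  simpa [Real.norm_eq_abs] using this

end Sys

lemma intervalIntegrable_of_bdd {f : ℝ → ℝ} (hf : Measurable f) (M : ℝ)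
    (hM : ∀ t, |f t| ≤ M) (a b : ℝ) : IntervalIntegrable f volume a b := by
  refine (intervalIntegrable_const (c := M)).mono_fun hf.aestronglyMeasurable
    (Eventually.of_forall (fun τ => ?_))
  exact (hM τ).trans (le_abs_self _)

/-- Differentiating an integrated equation in `x`. -/
lemma diff_eqn {U0 U1 g0 g1 : ℝ → ℝ → ℝ} {s t ρ k : ℝ}
    (hU : ∀ t x, 0 < x → HasDerivAt (U0 t) (U1 t x) x)
    (hg : ∀ t x, 0 < x → HasDerivAt (g0 t) (g1 t x) x)
    (hm0 : ∀ x, 0 < x → Measurable (fun t => g0 t x))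
    (hb0 : ∀ x, 0 < x → ∃ M, ∀ t, |g0 t x| ≤ M)
    (hb1 : ∀ x, 0 < x → ∃ M, ∀ t y, x ≤ y → |g1 t y| ≤ M)
    (heq : ∀ x, 0 < x → U0 t x = U0 s x + (∫ τ in s..t, g0 τ x) + k * (Real.exp (-x) * ρ))
    {x : ℝ} (hx : 0 < x) :
    U1 t x = U1 s x + (∫ τ in s..t, g1 τ x) - k * (Real.exp (-x) * ρ) := by
  obtain ⟨M0, hM0⟩ := hb0 x hx
  obtain ⟨M, hM⟩ := hb1 (x/2) (by linarith)
  have hm1 := measurable_of_deriv_family hm0 hg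
  have hI := (intervalIntegral.hasDerivAt_integral_of_dominated_loc_of_deriv_le (μ := volume)
    (a := s) (b := t) (bound := fun _ => M) (F := fun x τ => g0 τ x) (F' := fun x τ => g1 τ x)
    (x₀ := x) (s := Ioi (x/2)) (Ioi_mem_nhds (by linarith)) ?_
    (intervalIntegrable_of_bdd (hm0 x hx) M0 hM0 s t) (hm1 x hx).aestronglyMeasurable
    (Eventually.of_forall (fun τ _ y hy => hM τ y (le_of_lt hy))) intervalIntegrable_const
    (Eventually.of_forall (fun τ _ y hy => hg τ y (by
      have : x/2 < y := hy
      linarith)))).2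
  · have hexp : HasDerivAt (fun x => k * (Real.exp (-x) * ρ)) (-(k * (Real.exp (-x) * ρ))) x := by
      have := (((hasDerivAt_id x).neg.exp).mul_const ρ).const_mul k
      refine this.congr_deriv ?_
      simp only [id_eq, Pi.neg_apply]
      ring
    have h1 := ((hU s x hx).add hI).add hexp
    have h2 : HasDerivAt (U0 t) _ x := h1.congr_of_eventuallyEq (by
      filter_upwards [Ioi_mem_nhds hx] with y hy
      rw [heq y hy]; rfl)
    have := (hU t x hx).unique h2
    rw [this]; ring
  · filter_upwards [Ioi_mem_nhds hx] with y hy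
    exact (hm0 y hy).aestronglyMeasurable

lemma abs_mul_le_mul {a b A B : ℝ} (ha : |a| ≤ A) (hb : |b| ≤ B) : |a * b| ≤ A * B := by
  rw [abs_mul]
  exact mul_le_mul ha hb (abs_nonneg _) ((abs_nonneg _).trans ha)

namespace Sys

variable {T : ℝ} {D : ℕ → ℝ → ℝ → ℝ} {r : ℝ → ℝ}

lemma absW (h : Sys T D r) (t : ℝ) {x : ℝ} (hx : 0 < x) : |1 - D 0 t x| ≤ 1 := by
  rw [abs_of_pos (h.W_pos t hx)]; exact h.W_le_one t hx

lemma derW (h : Sys T D r) (t : ℝ) {x : ℝ} (hx : 0 < x) :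
    HasDerivAt (fun y => 1 - D 0 t y) (D 1 t x) x := by
  have := (h.der 0 t x hx).const_sub 1
  simpa using this

lemma g0_bd (h : Sys T D r) {x : ℝ} (hx : 0 < x) (t y : ℝ) (hy : x ≤ y) :
    |(1 - D 0 t y) * D 1 t y| ≤ 1 * ((1:ℕ).factorial / x ^ 1) :=
  abs_mul_le_mul (h.absW t (hx.trans_le hy)) (h.abs_le_of_ge 1 t hx hy)

lemma g1_bd (h : Sys T D r) {x : ℝ} (hx : 0 < x) (t y : ℝ) (hy : x ≤ y) :
    |D 1 t y ^ 2 - (1 - D 0 t y) * D 2 t y| ≤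
      ((1:ℕ).factorial / x ^ 1) * ((1:ℕ).factorial / x ^ 1) + 1 * ((2:ℕ).factorial / x ^ 2) := by
  refine (abs_sub _ _).trans (add_le_add ?_ ?_)
  · rw [sq]
    exact abs_mul_le_mul (h.abs_le_of_ge 1 t hx hy) (h.abs_le_of_ge 1 t hx hy)
  · exact abs_mul_le_mul (h.absW t (hx.trans_le hy)) (h.abs_le_of_ge 2 t hx hy)

lemma g2_bd (h : Sys T D r) {x : ℝ} (hx : 0 < x) (t y : ℝ) (hy : x ≤ y) :
    |3 * (D 1 t y * D 2 t y) - (1 - D 0 t y) * D 3 t y| ≤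
      3 * (((1:ℕ).factorial / x ^ 1) * ((2:ℕ).factorial / x ^ 2))
        + 1 * ((3:ℕ).factorial / x ^ 3) := by
  refine (abs_sub _ _).trans (add_le_add ?_ ?_)
  · refine abs_mul_le_mul (by norm_num)
      (abs_mul_le_mul (h.abs_le_of_ge 1 t hx hy) (h.abs_le_of_ge 2 t hx hy))
  · exact abs_mul_le_mul (h.absW t (hx.trans_le hy)) (h.abs_le_of_ge 3 t hx hy)

lemma g0_meas (h : Sys T D r) {x : ℝ} (hx : 0 < x) :
    Measurable (fun t => (1 - D 0 t x) * D 1 t x) :=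
  (measurable_const.sub (h.meas 0 x hx)).mul (h.meas 1 x hx)

lemma g1_meas (h : Sys T D r) {x : ℝ} (hx : 0 < x) :
    Measurable (fun t => D 1 t x ^ 2 - (1 - D 0 t x) * D 2 t x) :=
  ((h.meas 1 x hx).pow_const 2).sub ((measurable_const.sub (h.meas 0 x hx)).mul (h.meas 2 x hx))

lemma g2_meas (h : Sys T D r) {x : ℝ} (hx : 0 < x) :
    Measurable (fun t => 3 * (D 1 t x * D 2 t x) - (1 - D 0 t x) * D 3 t x) :=
  (((h.meas 1 x hx).mul (h.meas 2 x hx)).const_mul 3).sub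
    ((measurable_const.sub (h.meas 0 x hx)).mul (h.meas 3 x hx))

lemma eqn1 (h : Sys T D r) {s t x : ℝ} (hs : 0 ≤ s) (hst : s ≤ t) (htT : t ≤ T) (hx : 0 < x) :
    D 1 t x = D 1 s x + (∫ τ in s..t, (D 1 τ x ^ 2 - (1 - D 0 τ x) * D 2 τ x))
      + Real.exp (-x) * (r t - r s) := by
  have := diff_eqn (U0 := fun t x => 1 - D 0 t x) (U1 := fun t x => D 1 t x)
    (g0 := fun t x => (1 - D 0 t x) * D 1 t x)
    (g1 := fun t x => D 1 t x ^ 2 - (1 - D 0 t x) * D 2 t x)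
    (s := s) (t := t) (ρ := r t - r s) (k := -1)
    (fun t x hx => h.derW t hx)
    (fun t x hx => ((h.derW t hx).mul (h.der 1 t x hx)).congr_deriv (by ring))
    (fun x hx => h.g0_meas hx) (fun x hx => ⟨_, fun t => h.g0_bd hx t x le_rfl⟩)
    (fun x hx => ⟨_, fun t y hy => h.g1_bd hx t y hy⟩)
    (fun x hx => by
      have := h.eqn s t x hs hst htT hx
      rw [this]; ring) hx
  rw [this]; ring

lemma eqn2 (h : Sys T D r) {s t x : ℝ} (hs : 0 ≤ s) (hst : s ≤ t) (htT : t ≤ T) (hx : 0 < x) :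
    D 2 t x = D 2 s x + (∫ τ in s..t, (3 * (D 1 τ x * D 2 τ x) - (1 - D 0 τ x) * D 3 τ x))
      + Real.exp (-x) * (r t - r s) := by
  have := diff_eqn (U0 := fun t x => D 1 t x) (U1 := fun t x => - D 2 t x)
    (g0 := fun t x => D 1 t x ^ 2 - (1 - D 0 t x) * D 2 t x)
    (g1 := fun t x => -(3 * (D 1 t x * D 2 t x) - (1 - D 0 t x) * D 3 t x))
    (s := s) (t := t) (ρ := r t - r s) (k := 1)
    (fun t x hx => h.der 1 t x hx)
    (fun t x hx => (((h.der 1 t x hx).pow 2).sub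
      ((h.derW t hx).mul (h.der 2 t x hx))).congr_deriv (by simp; ring))
    (fun x hx => h.g1_meas hx) (fun x hx => ⟨_, fun t => h.g1_bd hx t x le_rfl⟩)
    (fun x hx => ⟨_, fun t y hy => by rw [abs_neg]; exact h.g2_bd hx t y hy⟩)
    (fun x hx => by
      have := h.eqn1 hs hst htT hx
      rw [this]; ring) hx
  simp only [intervalIntegral.integral_neg] at this
  linarith

/-- Right continuity of `r`. -/
lemma r_right (h : Sys T D r) {s : ℝ} (hs : 0 ≤ s) (hsT : s < T) :
    Tendsto r (𝓝[≥] s) (𝓝 (r s)) := by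
  rw [Metric.tendsto_nhds]
  intro ε hε
  have hlim := h.lim s
  have h1 : ∀ᶠ x in 𝓝[>] (0:ℝ), 1 - D 0 s x < ε / 6 := by
    have : Tendsto (fun x => 1 - D 0 s x) (𝓝[>] 0) (𝓝 (1 - 1)) := tendsto_const_nhds.sub hlim
    rw [sub_self] at this
    exact this.eventually (gt_mem_nhds (by linarith))
  have h2 : ∀ᶠ x in 𝓝[>] (0:ℝ), x < 1 :=
    mem_nhdsWithin_of_mem_nhds (Iio_mem_nhds one_pos)
  obtain ⟨x, ⟨hx1, hx2⟩, hx0⟩ := ((h1.and h2).and self_mem_nhdsWithin).exists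
  have hx : 0 < x := hx0
  have hδ : 0 < ε * x / 6 := by positivity
  filter_upwards [self_mem_nhdsWithin, mem_nhdsWithin_of_mem_nhds (Iio_mem_nhds hsT),
    mem_nhdsWithin_of_mem_nhds (Iio_mem_nhds (show s < s + ε * x / 6 by linarith))] with t hst htT ht
  have hst' : s ≤ t := hst
  have htT' : t < T := htT
  have ht' : t < s + ε * x / 6 := ht
  have e := h.eqn s t x hs hst' htT'.le hx
  have hI : |∫ τ in s..t, (1 - D 0 τ x) * D 1 τ x| ≤ (1 / x) * |t - s| := by
    rw [← Real.norm_eq_abs]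
    refine intervalIntegral.norm_integral_le_of_norm_le_const (fun τ _ => ?_)
    have := h.g0_bd hx τ x le_rfl
    simpa using this
  rw [abs_of_nonneg (sub_nonneg.mpr hst')] at hI
  have hI2 : (1 / x) * (t - s) ≤ ε / 6 := by
    rw [one_div, inv_mul_le_iff₀ hx]; nlinarith
  have hW := h.W_pos t hx
  have hr : 0 ≤ r t - r s := sub_nonneg.mpr (h.rmono hst')
  have hle : Real.exp (-x) * (r t - r s) ≤ ε / 3 := by
    have := (le_abs_self _).trans hI
    linarith
  have hexp : (1:ℝ)/3 < Real.exp (-x) := by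
    have h3 := Real.exp_one_lt_d9
    have h4 : Real.exp (-1) < Real.exp (-x) := Real.exp_lt_exp.mpr (by linarith)
    have h5 : Real.exp (-1) * Real.exp 1 = 1 := by rw [← Real.exp_add]; simp
    have h6 := Real.exp_pos (-1)
    nlinarith
  rw [Real.dist_eq, abs_of_nonneg hr]
  by_contra hcon
  push Not at hcon
  have : (1/3) * ε < Real.exp (-x) * (r t - r s) :=
    calc (1/3) * ε < Real.exp (-x) * ε := by gcongr
      _ ≤ _ := by gcongr
  linarith

/-- If the lower family is right continuous pointwise so is the derivative. -/
lemma cont_step (h : Sys T D r) (n : ℕ) {l : Filter ℝ} {s : ℝ}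
    (ih : ∀ x, 0 < x → Tendsto (fun t => D n t x) l (𝓝 (D n s x))) :
    ∀ x, 0 < x → Tendsto (fun t => D (n+1) t x) l (𝓝 (D (n+1) s x)) := by
  intro x hx
  -- finite difference approximation with uniform error
  set M : ℝ := (n+2).factorial / x ^ (n+2) with hM
  have hMpos : 0 < M := by positivity
  have key : ∀ η, 0 < η → ∀ t, |D (n+1) t x - (D n t x - D n t (x+η)) / η| ≤ M * η := by
    intro η hη t
    obtain ⟨c, hc, hc'⟩ := exists_hasDerivAt_eq_slope (D n t) (fun y => -D (n+1) t y)
      (show x < x + η by linarith)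
      (fun y hy => (h.der n t y (hx.trans_le hy.1)).continuousAt.continuousWithinAt)
      (fun y hy => h.der n t y (hx.trans hy.1))
    have e : (D n t x - D n t (x+η)) / η = D (n+1) t c := by
      have : D (n+1) t c = -((D n t (x+η) - D n t x) / (x + η - x)) := by rw [← hc']; ring
      rw [this]
      rw [show x + η - x = η by ring]
      ring
    rw [e]
    refine (h.lip (n+1) t hx le_rfl hc.1.le).trans ?_
    refine mul_le_mul_of_nonneg_left ?_ hMpos.le
    rw [abs_sub_comm, abs_of_pos (by linarith [hc.1])]
    linarith [hc.2]
  rw [Metric.tendsto_nhds]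
  intro ε hε
  set η := ε / (4 * M) with hη
  have hηpos : 0 < η := by positivity
  have hMη : M * η = ε / 4 := by rw [hη]; field_simp
  have h1 : Tendsto (fun t => (D n t x - D n t (x+η)) / η) l
      (𝓝 ((D n s x - D n s (x+η)) / η)) :=
    ((ih x hx).sub (ih (x+η) (by linarith))).div_const η
  have h2 := (Metric.tendsto_nhds.mp h1) (ε/4) (by linarith)
  filter_upwards [h2] with t ht
  rw [Real.dist_eq] at ht ⊢
  have k1 := abs_le.mp (key η hηpos t)
  have k2 := abs_le.mp (key η hηpos s)
  have k3 := abs_lt.mp ht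
  rw [hMη] at k1 k2
  rw [abs_lt]
  constructor <;> linarith

lemma D_right (h : Sys T D r) (n : ℕ) {s : ℝ} (hs : 0 ≤ s) (hsT : s < T) :
    ∀ x, 0 < x → Tendsto (fun t => D n t x) (𝓝[≥] s) (𝓝 (D n s x)) := by
  induction n with
  | zero =>
    intro x hx
    have hI : Tendsto (fun t => ∫ τ in s..t, (1 - D 0 τ x) * D 1 τ x) (𝓝[≥] s) (𝓝 0) := by
      have hc : Continuous (fun t => ∫ τ in s..t, (1 - D 0 τ x) * D 1 τ x) :=
        intervalIntegral.continuous_primitive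
          (fun a b => intervalIntegrable_of_bdd (h.g0_meas hx) _ (fun t => h.g0_bd hx t x le_rfl) a b) s
      have := (hc.tendsto s).mono_left (nhdsWithin_le_nhds (s := Ici s))
      simpa using this
    have hr := (h.r_right hs hsT).sub_const (r s)
    have h2 := ((tendsto_const_nhds (x := D 0 s x)).sub hI).add (hr.const_mul (Real.exp (-x)))
    simp only [sub_self, mul_zero, sub_zero, add_zero] at h2
    refine h2.congr' ?_
    filter_upwards [self_mem_nhdsWithin, mem_nhdsWithin_of_mem_nhds (Iio_mem_nhds hsT)] with t h1 h2
    exact (h.eqn s t x hs h1 (le_of_lt h2) hx).symm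
  | succ n ih => exact h.cont_step n ih

lemma D_joint (h : Sys T D r) (n : ℕ) {l : Filter ℝ} {s y : ℝ} (hy : 0 < y)
    (hl : ∀ x, 0 < x → Tendsto (fun t => D n t x) l (𝓝 (D n s x))) :
    Tendsto (fun q : ℝ × ℝ => D n q.1 q.2) (l ×ˢ 𝓝 y) (𝓝 (D n s y)) := by
  have h1 : Tendsto (fun q : ℝ × ℝ => D n q.1 y) (l ×ˢ 𝓝 y) (𝓝 (D n s y)) :=
    (hl y hy).comp tendsto_fst
  have h2 : Tendsto (fun q : ℝ × ℝ => D n q.1 q.2 - D n q.1 y) (l ×ˢ 𝓝 y) (𝓝 0) := by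
    have hz : Tendsto (fun q : ℝ × ℝ => ((n+1).factorial / (y/2) ^ (n+1) : ℝ) * |q.2 - y|)
        (l ×ˢ 𝓝 y) (𝓝 0) := by
      have : Tendsto (fun z : ℝ => ((n+1).factorial / (y/2) ^ (n+1) : ℝ) * |z - y|) (𝓝 y) (𝓝 0) := by
        have hc : Continuous (fun z : ℝ => ((n+1).factorial / (y/2) ^ (n+1) : ℝ) * |z - y|) := by
          fun_prop
        simpa using hc.tendsto y
      exact this.comp tendsto_snd
    refine squeeze_zero_norm' ?_ hz
    have : ∀ᶠ q : ℝ × ℝ in l ×ˢ 𝓝 y, y/2 < q.2 :=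
      tendsto_snd.eventually (Ioi_mem_nhds (by linarith))
    filter_upwards [this] with q hq
    exact h.lip n q.1 (by linarith) hq.le (by linarith)
  have := h2.add h1
  simpa using this

end Sys

/-! ### Right expansions with respect to `ds` and `dr`, and a monotonicity lemma -/

open Asymptotics

/-- `H` has the right expansion `dH = a ds + b dr` at `s`. -/
def RExp (r H : ℝ → ℝ) (s a b : ℝ) : Prop :=
  (fun σ => H σ - H s - a * (σ - s) - b * (r σ - r s)) =o[𝓝[>] s]
    (fun σ => (σ - s) + (r σ - r s))

namespace RExp

variable {r H K : ℝ → ℝ} {s a b a' b' : ℝ}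

lemma add (h : RExp r H s a b) (k : RExp r K s a' b') :
    RExp r (fun σ => H σ + K σ) s (a + a') (b + b') := by
  refine (IsLittleO.add h k).congr_left (fun σ => ?_)
  ring

lemma const_mul (h : RExp r H s a b) (c : ℝ) :
    RExp r (fun σ => c * H σ) s (c * a) (c * b) := by
  refine (h.const_mul_left c).congr_left (fun σ => ?_)
  ring

lemma neg (h : RExp r H s a b) : RExp r (fun σ => - H σ) s (-a) (-b) := by
  refine (IsLittleO.neg_left h).congr_left (fun σ => ?_)
  ring

lemma sub (h : RExp r H s a b) (k : RExp r K s a' b') :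
    RExp r (fun σ => H σ - K σ) s (a - a') (b - b') := by
  refine (IsLittleO.sub h k).congr_left (fun σ => ?_)
  ring

lemma congr_coef (h : RExp r H s a b) (ha : a = a') (hb : b = b') : RExp r H s a' b' := by
  subst ha; subst hb; exact h

lemma self : RExp r r s 0 1 := by
  refine (isLittleO_zero _ _).congr_left (fun σ => ?_)
  ring

lemma lin (c : ℝ) : RExp r (fun σ => c * σ) s c 0 := by
  refine (isLittleO_zero _ _).congr_left (fun σ => ?_)
  ring

lemma isBigO_id (hr : Monotone r) :
    (fun σ => σ - s) =O[𝓝[>] s] (fun σ => (σ - s) + (r σ - r s)) := by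
  refine IsBigO.of_bound 1 ?_
  filter_upwards [self_mem_nhdsWithin] with σ hσ
  have h1 : s < σ := hσ
  have h2 := hr h1.le
  rw [Real.norm_of_nonneg (by linarith), Real.norm_of_nonneg (by linarith)]
  linarith

lemma isBigO_r (hr : Monotone r) :
    (fun σ => r σ - r s) =O[𝓝[>] s] (fun σ => (σ - s) + (r σ - r s)) := by
  refine IsBigO.of_bound 1 ?_
  filter_upwards [self_mem_nhdsWithin] with σ hσ
  have h1 : s < σ := hσ
  have h2 := hr h1.le
  rw [Real.norm_of_nonneg (by linarith), Real.norm_of_nonneg (by linarith)]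
  linarith

lemma of_deriv (hr : Monotone r) (h : HasDerivWithinAt H a (Ici s) s) : RExp r H s a 0 := by
  have h1 : HasDerivWithinAt H a (Ioi s) s := h.mono Ioi_subset_Ici_self
  have h2 := hasDerivWithinAt_iff_isLittleO.mp h1
  refine ((h2.trans_isBigO (isBigO_id hr))).congr_left (fun σ => ?_)
  simp only [smul_eq_mul]; ring

lemma isBigO (hr : Monotone r) (h : RExp r H s a b) :
    (fun σ => H σ - H s) =O[𝓝[>] s] (fun σ => (σ - s) + (r σ - r s)) := by
  have := (IsLittleO.isBigO h).add (((isBigO_id hr).const_mul_left a).add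
    ((isBigO_r hr).const_mul_left b))
  refine this.congr_left (fun σ => ?_)
  ring

lemma tendsto (hr : Monotone r) (hrc : Tendsto r (𝓝[≥] s) (𝓝 (r s))) (h : RExp r H s a b) :
    Tendsto H (𝓝[>] s) (𝓝 (H s)) := by
  have h1 : Tendsto (fun σ => (σ - s) + (r σ - r s)) (𝓝[>] s) (𝓝 0) := by
    have e1 : Tendsto (fun σ : ℝ => σ - s) (𝓝[>] s) (𝓝 0) := by
      have : Tendsto (fun σ : ℝ => σ - s) (𝓝 s) (𝓝 (s - s)) := tendsto_id.sub_const s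
      rw [sub_self] at this
      exact this.mono_left nhdsWithin_le_nhds
    have e2 : Tendsto (fun σ : ℝ => r σ - r s) (𝓝[>] s) (𝓝 0) := by
      have := (hrc.mono_left (nhdsWithin_mono s Ioi_subset_Ici_self)).sub_const (r s)
      rwa [sub_self] at this
    simpa using e1.add e2
  have h2 := (h.isBigO hr).trans_tendsto h1
  have := h2.add_const (H s)
  simpa using this

lemma comp (hr : Monotone r) (hrc : Tendsto r (𝓝[≥] s) (𝓝 (r s))) (h : RExp r H s a b)
    {f : ℝ → ℝ} {f' : ℝ} (hf : HasDerivAt f f' (H s)) :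
    RExp r (fun σ => f (H σ)) s (f' * a) (f' * b) := by
  have h1 := (hasDerivAt_iff_isLittleO.mp hf).comp_tendsto (h.tendsto hr hrc)
  have h2 : (fun σ => f (H σ) - f (H s) - (H σ - H s) * f') =o[𝓝[>] s]
      (fun σ => (σ - s) + (r σ - r s)) :=
    IsLittleO.trans_isBigO h1 (h.isBigO hr)
  have h3 := h2.add (h.const_mul_left f')
  refine h3.congr_left (fun σ => ?_)
  ring

end RExp

/-- Monotonicity lemma for functions with nonpositive right expansions. -/
lemma mono_lemma {r G : ℝ → ℝ} {a b : ℝ} (hab : a ≤ b) (hr : Monotone r)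
    (hR : ∀ s ∈ Ico a b, ∃ α β, α ≤ 0 ∧ β ≤ 0 ∧ RExp r G s α β)
    (hL : ∀ s ∈ Ioc a b, ∀ ε > 0, ∀ᶠ u in 𝓝[<] s, G s ≤ G u + ε) : G b ≤ G a := by
  set μ : ℝ → ℝ := fun s => s + r s with hμ
  have hμm : Monotone μ := fun x y hxy => add_le_add hxy (hr hxy)
  have claim : ∀ ε > 0, G b ≤ G a + ε * (μ b - μ a) := by
    intro ε hε
    set S : Set ℝ := {s | s ∈ Icc a b ∧ ∀ u ∈ Icc a s, G u ≤ G a + ε * (μ u - μ a)} with hS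
    have haS : a ∈ S := by
      refine ⟨⟨le_rfl, hab⟩, fun u hu => ?_⟩
      have : u = a := le_antisymm hu.2 hu.1
      subst this; simp
    have hbdd : BddAbove S := ⟨b, fun s hs => hs.1.2⟩
    set σ := sSup S with hσ
    have haσ : a ≤ σ := le_csSup hbdd haS
    have hσb : σ ≤ b := csSup_le ⟨a, haS⟩ (fun s hs => hs.1.2)
    have hlt : ∀ u, a ≤ u → u < σ → G u ≤ G a + ε * (μ u - μ a) := by
      intro u hau huσ
      obtain ⟨s, hs, hus⟩ := exists_lt_of_lt_csSup ⟨a, haS⟩ huσ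
      exact hs.2 u ⟨hau, hus.le⟩
    have hσS : G σ ≤ G a + ε * (μ σ - μ a) := by
      rcases haσ.eq_or_lt with h | h
      · rw [← h]; simp
      · refine le_of_forall_pos_le_add (fun ε' hε' => ?_)
        have h1 := hL σ ⟨h, hσb⟩ ε' hε'
        have h2 : ∀ᶠ u in 𝓝[<] σ, a < u := mem_nhdsWithin_of_mem_nhds (Ioi_mem_nhds h)
        obtain ⟨u, ⟨hu1, hu2⟩, hu3⟩ := ((h1.and h2).and self_mem_nhdsWithin).exists
        have hu3' : u < σ := hu3
        have h3 := hlt u hu2.le hu3'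
        have h4 : ε * (μ u - μ a) ≤ ε * (μ σ - μ a) := by
          have := hμm hu3'.le
          gcongr
        linarith
    rcases hσb.eq_or_lt with h | h
    · rw [← h]; exact hσS
    · exfalso
      obtain ⟨α, β, hα, hβ, hx⟩ := hR σ ⟨haσ, h⟩
      have h1 := hx.bound hε
      have h2 : ∀ᶠ u in 𝓝[>] σ, u < b := mem_nhdsWithin_of_mem_nhds (Iio_mem_nhds h)
      obtain ⟨z, hz, hz2⟩ := mem_nhdsGT_iff_exists_Ioo_subset.mp (h1.and h2)
      have hz' : σ < z := hz
      have hm : (σ + z) / 2 ∈ S := by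
        refine ⟨⟨by linarith, ?_⟩, fun u hu => ?_⟩
        · exact (hz2 (show (σ + z) / 2 ∈ Ioo σ z from ⟨by linarith, by linarith⟩)).2.le
        · rcases lt_trichotomy u σ with hlt' | heq | hgt
          · exact hlt u hu.1 hlt'
          · rw [heq]; exact hσS
          · have hu' := (hz2 (show u ∈ Ioo σ z from ⟨hgt, by linarith [hu.2]⟩)).1
            have hru := hr hgt.le
            rw [Real.norm_of_nonneg (show 0 ≤ (u - σ) + (r u - r σ) by linarith)] at hu'
            have hu'' := (le_abs_self _).trans hu'
            have e1 : α * (u - σ) ≤ 0 := mul_nonpos_of_nonpos_of_nonneg hα (by linarith)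
            have e2 : β * (r u - r σ) ≤ 0 := mul_nonpos_of_nonpos_of_nonneg hβ (by linarith)
            have e3 : ε * (u - σ + (r u - r σ)) = ε * (μ u - μ σ) := by simp only [hμ]; ring
            rw [e3] at hu''
            have e4 : ε * (μ u - μ a) = ε * (μ u - μ σ) + ε * (μ σ - μ a) := by ring
            linarith
      have := le_csSup hbdd hm
      linarith
  have hc : 0 ≤ μ b - μ a := sub_nonneg.mpr (hμm hab)
  refine le_of_forall_pos_le_add (fun ε hε => ?_)
  refine (claim (ε / (μ b - μ a + 1)) (by positivity)).trans ?_
  have : ε / (μ b - μ a + 1) * (μ b - μ a) ≤ ε := by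
    rw [div_mul_eq_mul_div, div_le_iff₀ (by linarith)]
    nlinarith
  linarith

/-- Version for continuous functions. -/
lemma mono_lemma_cont {r G : ℝ → ℝ} {a b : ℝ} (hab : a ≤ b) (hr : Monotone r)
    (hR : ∀ s ∈ Ico a b, ∃ α β, α ≤ 0 ∧ β ≤ 0 ∧ RExp r G s α β)
    (hG : ContinuousOn G (Icc a b)) : G b ≤ G a := by
  refine mono_lemma hab hr hR (fun s hs ε hε => ?_)
  have h1 : ContinuousWithinAt G (Icc a b) s := hG s ⟨hs.1.le, hs.2⟩
  have h2 : Tendsto G (𝓝[<] s) (𝓝 (G s)) := by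
    refine h1.tendsto.mono_left ?_
    rw [nhdsWithin_le_iff]
    filter_upwards [self_mem_nhdsWithin, mem_nhdsWithin_of_mem_nhds (Ioi_mem_nhds hs.1)] with u hu hu'
    exact ⟨le_of_lt hu', (le_of_lt hu).trans hs.2⟩
  filter_upwards [h2.eventually (lt_mem_nhds (show G s - ε < G s by linarith))] with u hu
  linarith

/-- Averages of a jointly right continuous function. -/
lemma average_isLittleO {g : ℝ → ℝ → ℝ} {ξ : ℝ → ℝ} {s : ℝ}
    (hξ : Tendsto ξ (𝓝[>] s) (𝓝 (ξ s)))
    (hξpos : 0 < ξ s)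
    (hg : Tendsto (fun q : ℝ × ℝ => g q.1 q.2) (𝓝[≥] s ×ˢ 𝓝 (ξ s)) (𝓝 (g s (ξ s))))
    (hItg : ∀ x, 0 < x → ∀ a b, IntervalIntegrable (fun τ => g τ x) volume a b) :
    (fun σ => (∫ τ in s..σ, g τ (ξ σ)) - g s (ξ s) * (σ - s)) =o[𝓝[>] s] (fun σ => σ - s) := by
  rw [isLittleO_iff]
  intro ε hε
  have h1 := (Metric.tendsto_nhds.mp hg) ε hε
  rw [eventually_prod_iff] at h1
  obtain ⟨pa, hpa, pb, hpb, hp⟩ := h1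
  obtain ⟨z, hz, hz2⟩ := mem_nhdsGE_iff_exists_Ico_subset.mp hpa
  have hz' : s < z := hz
  filter_upwards [hξ.eventually hpb, self_mem_nhdsWithin,
    mem_nhdsWithin_of_mem_nhds (Iio_mem_nhds hz'), hξ.eventually (lt_mem_nhds hξpos)]
    with σ hσ hsσ hσz hpos
  have hsσ' : s < σ := hsσ
  have hσz' : σ < z := hσz
  have e : (∫ τ in s..σ, g τ (ξ σ)) - g s (ξ s) * (σ - s)
      = ∫ τ in s..σ, (g τ (ξ σ) - g s (ξ s)) := by
    rw [intervalIntegral.integral_sub (hItg _ hpos _ _) intervalIntegrable_const]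
    simp
    ring
  rw [e]
  refine intervalIntegral.norm_integral_le_of_norm_le_const (fun τ hτ => ?_)
  rw [uIoc_of_le hsσ'.le] at hτ
  have := hp (hz2 (show τ ∈ Ico s z from ⟨hτ.1.le, lt_of_le_of_lt hτ.2 hσz'⟩)) hσ
  rw [Real.dist_eq] at this
  exact this.le

lemma RExp.along {r ξ : ℝ → ℝ} {U g : ℝ → ℝ → ℝ} {s T u1 ξ' k : ℝ} (hr : Monotone r)
    (hrc : Tendsto r (𝓝[≥] s) (𝓝 (r s))) (hsT : s < T)
    (hξ : HasDerivWithinAt ξ ξ' (Ici s) s) (hξpos : 0 < ξ s)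
    (hU : HasDerivAt (U s) u1 (ξ s))
    (heq : ∀ σ x, s ≤ σ → σ ≤ T → 0 < x →
      U σ x = U s x + (∫ τ in s..σ, g τ x) + k * (Real.exp (-x) * (r σ - r s)))
    (hg : Tendsto (fun q : ℝ × ℝ => g q.1 q.2) (𝓝[≥] s ×ˢ 𝓝 (ξ s)) (𝓝 (g s (ξ s))))
    (hItg : ∀ x, 0 < x → ∀ a b, IntervalIntegrable (fun τ => g τ x) volume a b) :
    RExp r (fun σ => U σ (ξ σ)) s (u1 * ξ' + g s (ξ s)) (k * Real.exp (-ξ s)) := by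
  have hξc : Tendsto ξ (𝓝[>] s) (𝓝 (ξ s)) :=
    (hξ.continuousWithinAt.tendsto).mono_left (nhdsWithin_mono s Ioi_subset_Ici_self)
  have h1 : HasDerivWithinAt (fun σ => U s (ξ σ)) (u1 * ξ') (Ici s) s :=
    HasDerivAt.comp_hasDerivWithinAt s hU hξ
  have h1' : (fun σ => U s (ξ σ) - U s (ξ s) - (u1 * ξ') * (σ - s) - 0 * (r σ - r s))
      =o[𝓝[>] s] (fun σ => (σ - s) + (r σ - r s)) := RExp.of_deriv hr h1
  have h2 := (average_isLittleO hξc hξpos hg hItg).trans_isBigO (RExp.isBigO_id hr)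
  have h3 : (fun σ => (k * (Real.exp (-ξ σ) - Real.exp (-ξ s))) * (r σ - r s))
      =o[𝓝[>] s] (fun σ => (1:ℝ) * ((σ - s) + (r σ - r s))) := by
    refine IsLittleO.mul_isBigO ?_ (RExp.isBigO_r hr)
    rw [isLittleO_one_iff]
    have : Tendsto (fun σ => k * (Real.exp (-ξ σ) - Real.exp (-ξ s))) (𝓝[>] s)
        (𝓝 (k * (Real.exp (-ξ s) - Real.exp (-ξ s)))) :=
      (((Real.continuous_exp.tendsto _).comp hξc.neg).sub_const _).const_mul k
    simpa using this
  simp only [one_mul] at h3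
  refine ((h1'.add h2).add h3).congr' ?_ EventuallyEq.rfl
  filter_upwards [self_mem_nhdsWithin, mem_nhdsWithin_of_mem_nhds (Iio_mem_nhds hsT),
    hξc.eventually (lt_mem_nhds hξpos)] with σ hσ hσT hpos
  have hσ' : s < σ := hσ
  have hσT' : σ < T := hσT
  rw [heq σ (ξ σ) hσ'.le hσT'.le hpos]
  ring

/-! ### Characteristics -/

/-- A backward characteristic curve through `(t, x)`. -/
structure IsChar (D : ℕ → ℝ → ℝ → ℝ) (t x : ℝ) (ξ : ℝ → ℝ) : Prop where
  cont : ContinuousOn ξ (Icc 0 t)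
  fin : ξ t = x
  ge : ∀ s ∈ Icc 0 t, x ≤ ξ s
  le : ∀ s ∈ Icc 0 t, ξ s ≤ x + (t - s)
  der : ∀ s ∈ Ico 0 t, HasDerivWithinAt ξ (-(1 - D 0 s (ξ s))) (Ici s) s

lemma mono_of_right_deriv {G G' : ℝ → ℝ} {a b : ℝ} (hab : a ≤ b)
    (hc : ContinuousOn G (Icc a b))
    (hd : ∀ s ∈ Ico a b, HasDerivWithinAt G (G' s) (Ici s) s)
    (hn : ∀ s ∈ Ico a b, G' s ≤ 0) : G b ≤ G a := by
  have hr : Monotone (fun _ : ℝ => (0:ℝ)) := fun _ _ _ => le_rfl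
  refine mono_lemma_cont hab hr (fun s hs => ⟨G' s, 0, hn s hs, le_rfl, ?_⟩) hc
  exact RExp.of_deriv hr (hd s hs)

namespace Sys

variable {T : ℝ} {D : ℕ → ℝ → ℝ → ℝ} {r : ℝ → ℝ}

/-- The vector field used to construct characteristics in exponential coordinates. -/
lemma field_lip (h : Sys T D r) {t x : ℝ} (hx : 0 < x) (htT : t ≤ T)
    {s s' c c' : ℝ} (hs : s ∈ Icc 0 t) (hs' : s' ∈ Icc 0 t)
    (hc : c ∈ Icc (Real.exp x) (Real.exp (x+t))) (hc' : c' ∈ Icc (Real.exp x) (Real.exp (x+t))) :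
    |(c * (D 0 s (Real.log c) - 1) - r s) - (c' * (D 0 s' (Real.log c') - 1) - r s')|
      ≤ (1 + Real.exp (x+t) / x) * |c - c'| + Real.exp (x+t) / x * |s - s'| := by
  have hex : 1 ≤ Real.exp x := Real.one_le_exp hx.le
  have key1 : |(c * (D 0 s (Real.log c) - 1) - r s) - (c' * (D 0 s (Real.log c') - 1) - r s)|
      ≤ (1 + Real.exp (x+t) / x) * |c - c'| := by
    have hcp : 0 < c := by linarith [hc.1]
    have hcp' : 0 < c' := by linarith [hc'.1]
    have hl : x ≤ Real.log c := (Real.le_log_iff_exp_le hcp).mpr hc.1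
    have hl' : x ≤ Real.log c' := (Real.le_log_iff_exp_le hcp').mpr hc'.1
    have h1 := h.lip 0 s hx hl hl'
    have h2 : |Real.log c - Real.log c'| ≤ |c - c'| := by
      have aux : ∀ a b : ℝ, 1 ≤ a → 1 ≤ b → Real.log a - Real.log b ≤ |a - b| := by
        intro a b ha hb
        rw [← Real.log_div (by linarith) (by linarith)]
        have e1 := Real.log_le_sub_one_of_pos (show 0 < a / b by positivity)
        have e2 : a / b - 1 = (a - b) / b := by field_simp
        rw [e2] at e1
        refine e1.trans ((div_le_div_of_nonneg_right (le_abs_self _) (by linarith)).trans ?_)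
        exact div_le_self (abs_nonneg _) hb
      rw [abs_le]
      constructor
      · have := aux c' c (by linarith [hc'.1]) (by linarith [hc.1])
        rw [abs_sub_comm] at this; linarith
      · exact aux c c' (by linarith [hc.1]) (by linarith [hc'.1])
    have h3 : |D 0 s (Real.log c) - 1| ≤ 1 := by
      rw [abs_sub_comm]; exact h.absW s (hx.trans_le hl)
    have e : (c * (D 0 s (Real.log c) - 1) - r s) - (c' * (D 0 s (Real.log c') - 1) - r s)
        = (D 0 s (Real.log c) - 1) * (c - c') + c' * (D 0 s (Real.log c) - D 0 s (Real.log c')) := by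
      ring
    rw [e, add_mul]
    refine (abs_add_le _ _).trans (add_le_add ?_ ?_)
    · exact abs_mul_le_mul h3 le_rfl
    · have : |c'| ≤ Real.exp (x+t) := by rw [abs_of_pos hcp']; exact hc'.2
      refine (abs_mul_le_mul this (h1.trans
        (mul_le_mul_of_nonneg_left h2 (by positivity)))).trans (le_of_eq ?_)
      simp; ring
  have key2 : ∀ s s' : ℝ, s ∈ Icc 0 t → s' ∈ Icc 0 t → s ≤ s' →
      |(c' * (D 0 s (Real.log c') - 1) - r s) - (c' * (D 0 s' (Real.log c') - 1) - r s')|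
      ≤ Real.exp (x+t) / x * |s - s'| := by
    intro s s' hs hs' hss
    have hcp' : 0 < c' := by linarith [hc'.1]
    have hl' : x ≤ Real.log c' := (Real.le_log_iff_exp_le hcp').mpr hc'.1
    have h1 := h.eqn s s' (Real.log c') hs.1 hss (hs'.2.trans htT) (hx.trans_le hl')
    have hexp : c' * Real.exp (-Real.log c') = 1 := by
      rw [Real.exp_neg, Real.exp_log hcp']; field_simp
    have e : (c' * (D 0 s (Real.log c') - 1) - r s) - (c' * (D 0 s' (Real.log c') - 1) - r s')
        = c' * ∫ τ in s..s', (1 - D 0 τ (Real.log c')) * D 1 τ (Real.log c') := by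
      rw [h1]; linear_combination (r s - r s') * hexp
    rw [e]
    have : |c'| ≤ Real.exp (x+t) := by rw [abs_of_pos hcp']; exact hc'.2
    have hI : |∫ τ in s..s', (1 - D 0 τ (Real.log c')) * D 1 τ (Real.log c')| ≤ 1/x * |s' - s| := by
      rw [← Real.norm_eq_abs]
      refine intervalIntegral.norm_integral_le_of_norm_le_const (fun τ _ => ?_)
      have := h.g0_bd hx τ _ hl'
      simpa using this
    refine (abs_mul_le_mul this hI).trans (le_of_eq ?_)
    rw [abs_sub_comm s' s]; ring
  have key3 : |(c' * (D 0 s (Real.log c') - 1) - r s) - (c' * (D 0 s' (Real.log c') - 1) - r s')|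
      ≤ Real.exp (x+t) / x * |s - s'| := by
    rcases le_total s s' with hle | hle
    · exact key2 s s' hs hs' hle
    · have := key2 s' s hs' hs hle
      rwa [abs_sub_comm, abs_sub_comm s' s] at this
  calc _ = |((c * (D 0 s (Real.log c) - 1) - r s) - (c' * (D 0 s (Real.log c') - 1) - r s))
        + ((c' * (D 0 s (Real.log c') - 1) - r s) - (c' * (D 0 s' (Real.log c') - 1) - r s'))| := by
        congr 1; ring
    _ ≤ _ := (abs_add_le _ _).trans (add_le_add key1 key3)

lemma exists_char (h : Sys T D r) {t x : ℝ} (ht : 0 ≤ t) (htT : t ≤ T) (hx : 0 < x) :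
    ∃ ξ, IsChar D t x ξ := by
  set a : ℝ := Real.exp x with ha
  set b : ℝ := Real.exp (x+t) with hb
  have hab : a ≤ b := Real.exp_le_exp.mpr (by linarith)
  have ha1 : 1 ≤ a := Real.one_le_exp hx.le
  set cl : ℝ → ℝ := fun z => max a (min b z) with hcl
  have hcl_mem : ∀ z, cl z ∈ Icc a b := fun z =>
    ⟨le_max_left _ _, max_le hab (min_le_left _ _)⟩
  have hcl_lip : ∀ z z', |cl z - cl z'| ≤ |z - z'| := by
    intro z z'
    refine (abs_max_sub_max_le_max _ _ _ _).trans ?_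
    refine max_le (by simp) ((abs_min_sub_min_le_max _ _ _ _).trans (max_le (by simp) le_rfl))
  have hrint : ∀ u w, IntervalIntegrable r volume u w := fun u w => h.rmono.intervalIntegrable
  set R : ℝ → ℝ := fun s => ∫ τ in (0:ℝ)..s, r τ with hR
  have hRc : Continuous R := intervalIntegral.continuous_primitive hrint 0
  set F : ℝ → ℝ → ℝ := fun s z => cl (z + R s) * (D 0 s (Real.log (cl (z + R s))) - 1) - r s with hF
  have hrt : 0 ≤ r t := by rw [← h.r0]; exact h.rmono ht
  obtain ⟨K, hK⟩ : ∃ K : NNReal, (K:ℝ) = 1 + b / x := ⟨⟨1 + b/x, by positivity⟩, rfl⟩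
  obtain ⟨L, hL⟩ : ∃ L : NNReal, (L:ℝ) = b + r t := ⟨⟨b + r t, by positivity⟩, rfl⟩
  obtain ⟨A, hA⟩ : ∃ A : NNReal, (A:ℝ) = (b + r t) * t := ⟨⟨(b + r t) * t, by positivity⟩, rfl⟩
  have hPL : IsPicardLindelof F (tmin := 0) (tmax := t) ⟨t, ⟨ht, le_rfl⟩⟩ (a - R t) A 0 L K := by
    refine ⟨fun s hs => ?_, fun z _ => ?_, fun s hs z _ => ?_, ?_⟩
    · refine LipschitzOnWith.of_dist_le_mul (fun z _ z' _ => ?_)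
      rw [Real.dist_eq, Real.dist_eq, hK]
      have := h.field_lip hx htT hs hs (hcl_mem (z + R s)) (hcl_mem (z' + R s))
      rw [sub_self, abs_zero, mul_zero, add_zero] at this
      refine this.trans (mul_le_mul_of_nonneg_left ?_ (by positivity))
      refine (hcl_lip _ _).trans (le_of_eq ?_)
      congr 1; ring
    · intro s0 hs0
      rw [ContinuousWithinAt, tendsto_iff_dist_tendsto_zero]
      have hz : Tendsto (fun s => (1 + b / x) * |R s - R s0| + b / x * |s - s0|)
          (𝓝[Icc 0 t] s0) (𝓝 0) := by
        have : Continuous (fun s => (1 + b / x) * |R s - R s0| + b / x * |s - s0|) := by fun_prop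
        have h2 := this.tendsto s0
        simp only [sub_self, abs_zero, mul_zero, add_zero] at h2
        exact h2.mono_left nhdsWithin_le_nhds
      refine squeeze_zero' (Eventually.of_forall (fun _ => dist_nonneg)) ?_ hz
      filter_upwards [self_mem_nhdsWithin] with s hs
      rw [Real.dist_eq]
      refine (h.field_lip hx htT hs hs0 (hcl_mem (z + R s)) (hcl_mem (z + R s0))).trans ?_
      refine add_le_add (mul_le_mul_of_nonneg_left ?_ (by positivity)) le_rfl
      refine (hcl_lip _ _).trans (le_of_eq ?_)
      congr 1; ring
    · rw [Real.norm_eq_abs, hL]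
      have hm := hcl_mem (z + R s)
      have hcp : 0 < cl (z + R s) := by linarith [hm.1]
      have hl : x ≤ Real.log (cl (z + R s)) := (Real.le_log_iff_exp_le hcp).mpr hm.1
      refine (abs_sub _ _).trans (add_le_add ?_ ?_)
      · have e1 : |cl (z + R s)| ≤ b := by rw [abs_of_pos hcp]; exact hm.2
        have e2 : |D 0 s (Real.log (cl (z + R s))) - 1| ≤ 1 := by
          rw [abs_sub_comm]; exact h.absW s (hx.trans_le hl)
        simpa using abs_mul_le_mul e1 e2
      · have h0 : 0 ≤ r s := by rw [← h.r0]; exact h.rmono hs.1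
        rw [abs_of_nonneg h0]; exact h.rmono hs.2
    · simp only [sub_self, sub_zero, NNReal.coe_zero]
      rw [max_eq_right ht, hL, hA]
  obtain ⟨ζ, hζt, hζ⟩ := hPL.exists_eq_forall_mem_Icc_hasDerivWithinAt₀
  simp only at hζt
  set η : ℝ → ℝ := fun s => ζ s + R s with hη
  have hηc : ContinuousOn η (Icc 0 t) := by
    refine ContinuousOn.add (fun s hs => (hζ s hs).continuousWithinAt) hRc.continuousOn
  have hηd : ∀ s ∈ Ico 0 t,
      HasDerivWithinAt η (cl (η s) * (D 0 s (Real.log (cl (η s))) - 1)) (Ici s) s := by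
    intro s hs
    have h1 : HasDerivWithinAt ζ (F s (ζ s)) (Ici s) s := by
      refine (hζ s ⟨hs.1, hs.2.le⟩).mono_of_mem_nhdsWithin ?_
      filter_upwards [self_mem_nhdsWithin, mem_nhdsWithin_of_mem_nhds (Iio_mem_nhds hs.2)]
        with u hu hu2
      exact ⟨hs.1.trans hu, le_of_lt hu2⟩
    have h2 : HasDerivWithinAt R (r s) (Ici s) s := by
      refine intervalIntegral.integral_hasDerivWithinAt_right (hrint 0 s) (t := Ioi s) ?_ ?_
      · exact h.rmono.measurable.stronglyMeasurable.stronglyMeasurableAtFilter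
      · exact (h.r_right hs.1 (hs.2.trans_le htT)).mono_left (nhdsWithin_mono s Ioi_subset_Ici_self)
    have h3 := h1.add h2
    have e : F s (ζ s) + r s = cl (η s) * (D 0 s (Real.log (cl (η s))) - 1) := by
      change cl (ζ s + R s) * (D 0 s (Real.log (cl (ζ s + R s))) - 1) - r s + r s = _
      ring
    rw [e] at h3
    exact h3
  have hηt : η t = a := by simp only [hη, hζt]; ring
  have hlog : ∀ z, 0 < Real.log (cl z) := fun z => by
    have hm := hcl_mem z
    exact hx.trans_le ((Real.le_log_iff_exp_le (by linarith [hm.1])).mpr hm.1)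
  have hηa : ∀ s ∈ Icc 0 t, a ≤ η s := by
    intro s hs
    rw [← hηt]
    refine mono_of_right_deriv hs.2 (hηc.mono (Icc_subset_Icc hs.1 le_rfl))
      (fun u hu => hηd u ⟨hs.1.trans hu.1, hu.2⟩) (fun u hu => ?_)
    have hW := h.W_pos u (hlog (η u))
    have hm := hcl_mem (η u)
    nlinarith [hm.1]
  have hηb : ∀ s ∈ Icc 0 t, η s ≤ Real.exp (x + (t - s)) := by
    intro s hs
    have key : -(η t * Real.exp t) ≤ -(η s * Real.exp s) := by
      refine mono_of_right_deriv (G := fun u => -(η u * Real.exp u)) hs.2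
        ((hηc.mono (Icc_subset_Icc hs.1 le_rfl)).mul Real.continuous_exp.continuousOn).neg
        (fun u hu => ((hηd u ⟨hs.1.trans hu.1, hu.2⟩).mul
          (Real.hasDerivAt_exp u).hasDerivWithinAt).neg) (fun u hu => ?_)
      have hW := h.W_le_one u (hlog (η u))
      have hW0 := h.W_pos u (hlog (η u))
      have hm := hcl_mem (η u)
      have h5 : cl (η u) ≤ η u :=
        max_le (hηa u ⟨hs.1.trans hu.1, hu.2.le⟩) (min_le_right _ _)
      have h6 := Real.exp_pos u
      have : 0 ≤ η u - cl (η u) * (1 - D 0 u (Real.log (cl (η u)))) := by nlinarith [hm.1]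
      nlinarith
    rw [hηt, ha, ← Real.exp_add] at key
    have h6 := Real.exp_pos s
    have h7 : η s * Real.exp s ≤ Real.exp (x + (t - s)) * Real.exp s := by
      rw [← Real.exp_add]
      have : x + (t - s) + s = x + t := by ring
      rw [this]; linarith
    exact le_of_mul_le_mul_right h7 h6
  have hηcl : ∀ s ∈ Icc 0 t, cl (η s) = η s := by
    intro s hs
    have h1 : η s ≤ b := (hηb s hs).trans (Real.exp_le_exp.mpr (by linarith [hs.1]))
    simp only [hcl, min_eq_right h1, max_eq_right (hηa s hs)]
  have hηp : ∀ s ∈ Icc 0 t, 0 < η s := fun s hs => by linarith [hηa s hs]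
  refine ⟨fun s => Real.log (η s), ⟨?_, ?_, ?_, ?_, ?_⟩⟩
  · exact hηc.log (fun s hs => (hηp s hs).ne')
  · simp only [hηt, ha, Real.log_exp]
  · exact fun s hs => (Real.le_log_iff_exp_le (hηp s hs)).mpr (hηa s hs)
  · exact fun s hs => (Real.log_le_iff_le_exp (hηp s hs)).mpr (hηb s hs)
  · intro s hs
    have hs' : s ∈ Icc 0 t := ⟨hs.1, hs.2.le⟩
    have h1 := (hηd s hs).log (hηp s hs').ne'
    rw [hηcl s hs'] at h1
    convert h1 using 1
    field_simp [(hηp s hs').ne']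
    ring

end Sys

namespace Sys

variable {T : ℝ} {D : ℕ → ℝ → ℝ → ℝ} {r : ℝ → ℝ} {t x : ℝ} {ξ : ℝ → ℝ}

lemma char_pos (hch : IsChar D t x ξ) (hx : 0 < x) {s : ℝ} (hs : s ∈ Icc 0 t) : 0 < ξ s :=
  hx.trans_le (hch.ge s hs)

lemma char_anti (h : Sys T D r) (hch : IsChar D t x ξ) (hx : 0 < x) {u s : ℝ} (hu : 0 ≤ u)
    (hus : u ≤ s) (hst : s ≤ t) : ξ s ≤ ξ u := by
  refine mono_of_right_deriv hus (hch.cont.mono (Icc_subset_Icc hu hst))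
    (fun w hw => hch.der w ⟨hu.trans hw.1, hw.2.trans_le hst⟩) (fun w hw => ?_)
  have := h.W_pos w (char_pos hch hx (s := w) ⟨hu.trans hw.1, (hw.2.trans_le hst).le⟩)
  linarith

lemma char_lip (h : Sys T D r) (hch : IsChar D t x ξ) (hx : 0 < x) {u s : ℝ} (hu : 0 ≤ u)
    (hus : u ≤ s) (hst : s ≤ t) : ξ u - ξ s ≤ s - u := by
  have : -(ξ s + s) ≤ -(ξ u + u) := by
    refine mono_of_right_deriv (G := fun w => -(ξ w + w)) hus
      ((hch.cont.mono (Icc_subset_Icc hu hst)).add continuousOn_id).neg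
      (fun w hw => ((hch.der w ⟨hu.trans hw.1, hw.2.trans_le hst⟩).add
        (hasDerivWithinAt_id w (Ici w))).neg) (fun w hw => ?_)
    have := h.W_le_one w (char_pos hch hx (s := w) ⟨hu.trans hw.1, (hw.2.trans_le hst).le⟩)
    linarith
  linarith

lemma rexpW (h : Sys T D r) (hch : IsChar D t x ξ) (hx : 0 < x) (htT : t ≤ T) {s : ℝ}
    (hs : s ∈ Ico 0 t) :
    RExp r (fun σ => 1 - D 0 σ (ξ σ)) s 0 (-Real.exp (-ξ s)) := by
  have hsT : s < T := hs.2.trans_le htT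
  have hp := char_pos hch hx (s := s) ⟨hs.1, hs.2.le⟩
  have := RExp.along (U := fun σ y => 1 - D 0 σ y) (g := fun σ y => (1 - D 0 σ y) * D 1 σ y)
    (k := -1) h.rmono (h.r_right hs.1 hsT) hsT (hch.der s hs) hp (h.derW s hp)
    (fun σ y h1 h2 hy => by rw [h.eqn s σ y hs.1 h1 h2 hy]; ring)
    (((h.D_joint 0 hp (h.D_right 0 hs.1 hsT)).const_sub 1).mul
      (h.D_joint 1 hp (h.D_right 1 hs.1 hsT)))
    (fun y hy a b => intervalIntegrable_of_bdd (h.g0_meas hy) _ (fun τ => h.g0_bd hy τ y le_rfl) a b)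
  exact this.congr_coef (by ring) (by ring)

lemma rexpP (h : Sys T D r) (hch : IsChar D t x ξ) (hx : 0 < x) (htT : t ≤ T) {s : ℝ}
    (hs : s ∈ Ico 0 t) :
    RExp r (fun σ => D 1 σ (ξ σ)) s (D 1 s (ξ s) ^ 2) (Real.exp (-ξ s)) := by
  have hsT : s < T := hs.2.trans_le htT
  have hp := char_pos hch hx (s := s) ⟨hs.1, hs.2.le⟩
  have := RExp.along (U := fun σ y => D 1 σ y)
    (g := fun σ y => D 1 σ y ^ 2 - (1 - D 0 σ y) * D 2 σ y)
    (k := 1) h.rmono (h.r_right hs.1 hsT) hsT (hch.der s hs) hp (h.der 1 s (ξ s) hp)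
    (fun σ y h1 h2 hy => by rw [h.eqn1 hs.1 h1 h2 hy]; ring)
    (((h.D_joint 1 hp (h.D_right 1 hs.1 hsT)).pow 2).sub
      (((h.D_joint 0 hp (h.D_right 0 hs.1 hsT)).const_sub 1).mul
      (h.D_joint 2 hp (h.D_right 2 hs.1 hsT))))
    (fun y hy a b => intervalIntegrable_of_bdd (h.g1_meas hy) _ (fun τ => h.g1_bd hy τ y le_rfl) a b)
  exact this.congr_coef (by norm_num; ring) (by ring)

lemma rexpQ (h : Sys T D r) (hch : IsChar D t x ξ) (hx : 0 < x) (htT : t ≤ T) {s : ℝ}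
    (hs : s ∈ Ico 0 t) :
    RExp r (fun σ => D 2 σ (ξ σ)) s (3 * (D 1 s (ξ s) * D 2 s (ξ s))) (Real.exp (-ξ s)) := by
  have hsT : s < T := hs.2.trans_le htT
  have hp := char_pos hch hx (s := s) ⟨hs.1, hs.2.le⟩
  have := RExp.along (U := fun σ y => D 2 σ y)
    (g := fun σ y => 3 * (D 1 σ y * D 2 σ y) - (1 - D 0 σ y) * D 3 σ y)
    (k := 1) h.rmono (h.r_right hs.1 hsT) hsT (hch.der s hs) hp (h.der 2 s (ξ s) hp)
    (fun σ y h1 h2 hy => by rw [h.eqn2 hs.1 h1 h2 hy]; ring)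
    ((((h.D_joint 1 hp (h.D_right 1 hs.1 hsT)).mul
        (h.D_joint 2 hp (h.D_right 2 hs.1 hsT))).const_mul 3).sub
      (((h.D_joint 0 hp (h.D_right 0 hs.1 hsT)).const_sub 1).mul
      (h.D_joint 3 hp (h.D_right 3 hs.1 hsT))))
    (fun y hy a b => intervalIntegrable_of_bdd (h.g2_meas hy) _ (fun τ => h.g2_bd hy τ y le_rfl) a b)
  exact this.congr_coef (by norm_num; ring) (by ring)

/-- `F = log E` along a characteristic. -/
lemma rexpF (h : Sys T D r) (hch : IsChar D t x ξ) (hx : 0 < x) (htT : t ≤ T) {s : ℝ}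
    (hs : s ∈ Ico 0 t) :
    RExp r (fun σ => 3 * Real.log (D 1 σ (ξ σ)) - Real.log (D 2 σ (ξ σ))) s 0
      (Real.exp (-ξ s) * (3 / D 1 s (ξ s) - 1 / D 2 s (ξ s))) := by
  have hsT : s < T := hs.2.trans_le htT
  have hp := char_pos hch hx (s := s) ⟨hs.1, hs.2.le⟩
  have hP := h.pos 1 s _ hp
  have hQ := h.pos 2 s _ hp
  have h1 := ((h.rexpP hch hx htT hs).comp h.rmono (h.r_right hs.1 hsT)
    (Real.hasDerivAt_log hP.ne')).const_mul 3
  have h2 := (h.rexpQ hch hx htT hs).comp h.rmono (h.r_right hs.1 hsT)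
    (Real.hasDerivAt_log hQ.ne')
  refine (h1.sub h2).congr_coef ?_ ?_
  · field_simp; ring
  · field_simp

lemma left_bd (h : Sys T D r) (hch : IsChar D t x ξ) (hx : 0 < x) (htT : t ≤ T)
    {n : ℕ} {g : ℝ → ℝ → ℝ} {M0 : ℝ}
    (heq : ∀ u s y, 0 ≤ u → u ≤ s → s ≤ T → 0 < y → D n s y = D n u y + (∫ τ in u..s, g τ y)
      + Real.exp (-y) * (r s - r u))
    (hg : ∀ τ y, x ≤ y → |g τ y| ≤ M0) :
    ∃ M, 0 ≤ M ∧ ∀ u s, 0 ≤ u → u ≤ s → s ≤ t →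
      |D n s (ξ s) - D n u (ξ u) - Real.exp (-ξ s) * (r s - r u)| ≤ M * (s - u) := by
  have hM0 : 0 ≤ M0 := (abs_nonneg _).trans (hg 0 x le_rfl)
  refine ⟨M0 + (n+1).factorial / x ^ (n+1), by positivity, fun u s hu hus hst => ?_⟩
  have hs : s ∈ Icc 0 t := ⟨hu.trans hus, hst⟩
  have hu' : u ∈ Icc 0 t := ⟨hu, hus.trans hst⟩
  have e := heq u s (ξ s) hu hus (hst.trans htT) (char_pos hch hx hs)
  have e2 : D n s (ξ s) - D n u (ξ u) - Real.exp (-ξ s) * (r s - r u)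
      = (∫ τ in u..s, g τ (ξ s)) + (D n u (ξ s) - D n u (ξ u)) := by rw [e]; ring
  rw [e2, add_mul]
  refine (abs_add_le _ _).trans (add_le_add ?_ ?_)
  · have := intervalIntegral.norm_integral_le_of_norm_le_const (a := u) (b := s) (C := M0)
      (f := fun τ => g τ (ξ s)) (fun τ _ => hg τ (ξ s) (hch.ge s hs))
    rwa [Real.norm_eq_abs, abs_of_nonneg (sub_nonneg.mpr hus)] at this
  · refine (h.lip n u hx (hch.ge s hs) (hch.ge u hu')).trans ?_
    refine mul_le_mul_of_nonneg_left ?_ (by positivity)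
    rw [abs_sub_comm, abs_of_nonneg (sub_nonneg.mpr (h.char_anti hch hx hu hus hst))]
    exact h.char_lip hch hx hu hus hst

lemma left_P (h : Sys T D r) (hch : IsChar D t x ξ) (hx : 0 < x) (htT : t ≤ T) :
    ∃ M, 0 ≤ M ∧ ∀ u s, 0 ≤ u → u ≤ s → s ≤ t →
      |D 1 s (ξ s) - D 1 u (ξ u) - Real.exp (-ξ s) * (r s - r u)| ≤ M * (s - u) :=
  h.left_bd hch hx htT (fun _ _ _ h1 h2 h3 h4 => h.eqn1 h1 h2 h3 h4) (fun τ y hy => h.g1_bd hx τ y hy)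

lemma left_Q (h : Sys T D r) (hch : IsChar D t x ξ) (hx : 0 < x) (htT : t ≤ T) :
    ∃ M, 0 ≤ M ∧ ∀ u s, 0 ≤ u → u ≤ s → s ≤ t →
      |D 2 s (ξ s) - D 2 u (ξ u) - Real.exp (-ξ s) * (r s - r u)| ≤ M * (s - u) :=
  h.left_bd hch hx htT (fun _ _ _ h1 h2 h3 h4 => h.eqn2 h1 h2 h3 h4) (fun τ y hy => h.g2_bd hx τ y hy)

end Sys

lemma left_of_lip {G : ℝ → ℝ} {M a s : ℝ} (has : a < s) (hM : 0 ≤ M)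
    (hG : ∀ u, a ≤ u → u ≤ s → G s ≤ G u + M * (s - u)) :
    ∀ ε > 0, ∀ᶠ u in 𝓝[<] s, G s ≤ G u + ε := by
  intro ε hε
  have h1 : s - ε / (M + 1) < s := by have : 0 < ε / (M+1) := by positivity
                                      linarith
  filter_upwards [self_mem_nhdsWithin, mem_nhdsWithin_of_mem_nhds (Ioi_mem_nhds h1),
    mem_nhdsWithin_of_mem_nhds (Ioi_mem_nhds has)] with u hu hu2 hu3
  have h2 : s - u < ε / (M+1) := by simp only [mem_Ioi] at hu2; linarith
  rw [lt_div_iff₀ (by positivity)] at h2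
  have h3 := hG u (le_of_lt hu3) (le_of_lt hu)
  have h4 : u < s := hu
  nlinarith

namespace Sys

variable {T : ℝ} {D : ℕ → ℝ → ℝ → ℝ} {r : ℝ → ℝ} {t x : ℝ} {ξ : ℝ → ℝ}

lemma char_mono_aux (h : Sys T D r) {n : ℕ} {A : ℝ → ℝ}
    (hA : ∀ s ∈ Ico 0 t, 0 ≤ A s)
    (hR : ∀ s ∈ Ico 0 t, RExp r (fun σ => D n σ (ξ σ)) s (A s) (Real.exp (-ξ s)))
    (hL : ∃ M, 0 ≤ M ∧ ∀ u s, 0 ≤ u → u ≤ s → s ≤ t →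
      |D n s (ξ s) - D n u (ξ u) - Real.exp (-ξ s) * (r s - r u)| ≤ M * (s - u))
    {u s : ℝ} (hu : 0 ≤ u) (hus : u ≤ s) (hst : s ≤ t) : D n u (ξ u) ≤ D n s (ξ s) := by
  obtain ⟨M, hM, hL⟩ := hL
  have : -D n s (ξ s) ≤ -D n u (ξ u) := by
    refine mono_lemma (G := fun σ => -D n σ (ξ σ)) hus h.rmono (fun w hw => ?_) (fun w hw => ?_)
    · have hw' : w ∈ Ico 0 t := ⟨hu.trans hw.1, hw.2.trans_le hst⟩
      exact ⟨-A w, -Real.exp (-ξ w), by linarith [hA w hw'], by linarith [Real.exp_pos (-ξ w)],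
        (hR w hw').neg⟩
    · refine left_of_lip (G := fun σ => -D n σ (ξ σ)) hw.1 hM (fun z hz hzw => ?_)
      have h1 := (abs_le.mp (hL z w (hu.trans hz) hzw (hw.2.trans hst))).1
      have h2 := mul_nonneg (Real.exp_pos (-ξ w)).le (sub_nonneg.mpr (h.rmono hzw))
      linarith
  linarith

lemma char_monoP (h : Sys T D r) (hch : IsChar D t x ξ) (hx : 0 < x) (htT : t ≤ T)
    {u s : ℝ} (hu : 0 ≤ u) (hus : u ≤ s) (hst : s ≤ t) : D 1 u (ξ u) ≤ D 1 s (ξ s) :=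
  h.char_mono_aux (fun _ _ => sq_nonneg _) (fun _ hs => h.rexpP hch hx htT hs)
    (h.left_P hch hx htT) hu hus hst

lemma char_monoQ (h : Sys T D r) (hch : IsChar D t x ξ) (hx : 0 < x) (htT : t ≤ T)
    {u s : ℝ} (hu : 0 ≤ u) (hus : u ≤ s) (hst : s ≤ t) : D 2 u (ξ u) ≤ D 2 s (ξ s) := by
  refine h.char_mono_aux (A := fun s => 3 * (D 1 s (ξ s) * D 2 s (ξ s))) (fun s hs => ?_)
    (fun _ hs => h.rexpQ hch hx htT hs) (h.left_Q hch hx htT) hu hus hst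
  have hp := char_pos hch hx (s := s) ⟨hs.1, hs.2.le⟩
  have := h.pos 1 s _ hp
  have := h.pos 2 s _ hp
  positivity

lemma log_sub_le {a b m d : ℝ} (hm : 0 < m) (ha : m ≤ a) (hb : 0 < b) (hd : b - a ≤ d) (hd0 : 0 ≤ d) :
    Real.log b - Real.log a ≤ d / m := by
  have ha0 : 0 < a := hm.trans_le ha
  rw [← Real.log_div hb.ne' ha0.ne']
  have e1 := Real.log_le_sub_one_of_pos (show 0 < b / a by positivity)
  have e2 : b / a - 1 = (b - a) / a := by field_simp
  rw [e2] at e1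
  refine e1.trans ((div_le_div_of_nonneg_right hd ha0.le).trans ?_)
  exact div_le_div_of_nonneg_left hd0 hm ha

lemma char_F_le (h : Sys T D r) (hch : IsChar D t x ξ) (hx : 0 < x) (htT : t ≤ T)
    {p : ℝ} (hp : 0 < p) (hP : ∀ s ∈ Icc 0 t, p ≤ D 1 s (ξ s))
    {u s : ℝ} (hu : 0 ≤ u) (hus : u ≤ s) (hst : s ≤ t) :
    3 * Real.log (D 1 s (ξ s)) - Real.log (D 2 s (ξ s)) ≤
      3 * Real.log (D 1 u (ξ u)) - Real.log (D 2 u (ξ u)) + 3 / p * (r s - r u) := by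
  obtain ⟨M, hM, hL⟩ := h.left_P hch hx htT
  have key := mono_lemma (r := r) (a := u) (b := s)
    (G := fun σ => (3 * Real.log (D 1 σ (ξ σ)) - Real.log (D 2 σ (ξ σ))) - 3 / p * r σ) hus h.rmono
    (fun w hw => ?_) (fun w hw => ?_)
  · linarith
  · have hw' : w ∈ Ico 0 t := ⟨hu.trans hw.1, hw.2.trans_le hst⟩
    have hpos := char_pos hch hx (s := w) ⟨hw'.1, hw'.2.le⟩
    refine ⟨_, _, le_of_eq ?_, ?_, (h.rexpF hch hx htT hw').sub (RExp.self.const_mul (3/p))⟩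
    · ring
    · have e1 : Real.exp (-ξ w) ≤ 1 := Real.exp_le_one_iff.mpr (by linarith)
      have e0 := Real.exp_pos (-ξ w)
      have e2 : 3 / D 1 w (ξ w) ≤ 3 / p :=
        div_le_div_of_nonneg_left (by norm_num) hp (hP w ⟨hw'.1, hw'.2.le⟩)
      have e3 : 0 < 1 / D 2 w (ξ w) := one_div_pos.mpr (h.pos 2 w _ hpos)
      have e4 : 0 < 3 / p := by positivity
      nlinarith
  · refine left_of_lip (G := fun σ => (3 * Real.log (D 1 σ (ξ σ)) - Real.log (D 2 σ (ξ σ)))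
      - 3 / p * r σ) hw.1 (M := 3 * M / p) (by positivity) (fun z hz hzw => ?_)
    have hz0 : 0 ≤ z := hu.trans hz
    have hwt : w ≤ t := hw.2.trans hst
    have hpos := char_pos hch hx (s := w) ⟨hz0.trans hzw, hwt⟩
    have hposz := char_pos hch hx (s := z) ⟨hz0, hzw.trans hwt⟩
    have h1 := (abs_le.mp (hL z w hz0 hzw hwt)).2
    have e1 : Real.exp (-ξ w) ≤ 1 := Real.exp_le_one_iff.mpr (by linarith)
    have h2 := mul_le_mul_of_nonneg_right e1 (sub_nonneg.mpr (h.rmono hzw))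
    have h3 := log_sub_le (d := (r w - r z) + M * (w - z)) hp (hP z ⟨hz0, hzw.trans hwt⟩)
      (h.pos 1 w _ hpos) (by linarith)
      (add_nonneg (sub_nonneg.mpr (h.rmono hzw)) (mul_nonneg hM (sub_nonneg.mpr hzw)))
    have h4 := Real.log_le_log (h.pos 2 z _ hposz) (h.char_monoQ hch hx htT hz0 hzw hwt)
    have h5 : 3 * (((r w - r z) + M * (w - z)) / p) = 3 / p * r w - 3 / p * r z
      + 3 * M / p * (w - z) := by ring
    linarith

lemma char_F_ge (h : Sys T D r) (hch : IsChar D t x ξ) (hx : 0 < x) (htT : t ≤ T)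
    {q : ℝ} (hq : 0 < q) (hQ : ∀ s ∈ Icc 0 t, q ≤ D 2 s (ξ s))
    {u s : ℝ} (hu : 0 ≤ u) (hus : u ≤ s) (hst : s ≤ t) :
    3 * Real.log (D 1 u (ξ u)) - Real.log (D 2 u (ξ u)) - 1 / q * (r s - r u) ≤
    3 * Real.log (D 1 s (ξ s)) - Real.log (D 2 s (ξ s)) := by
  obtain ⟨M, hM, hL⟩ := h.left_Q hch hx htT
  have key := mono_lemma (r := r) (a := u) (b := s)
    (G := fun σ => -(3 * Real.log (D 1 σ (ξ σ)) - Real.log (D 2 σ (ξ σ))) - 1 / q * r σ) hus h.rmono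
    (fun w hw => ?_) (fun w hw => ?_)
  · linarith
  · have hw' : w ∈ Ico 0 t := ⟨hu.trans hw.1, hw.2.trans_le hst⟩
    have hpos := char_pos hch hx (s := w) ⟨hw'.1, hw'.2.le⟩
    refine ⟨_, _, le_of_eq ?_, ?_, (h.rexpF hch hx htT hw').neg.sub (RExp.self.const_mul (1/q))⟩
    · ring
    · have e1 : Real.exp (-ξ w) ≤ 1 := Real.exp_le_one_iff.mpr (by linarith)
      have e0 := Real.exp_pos (-ξ w)
      have e2 : 1 / D 2 w (ξ w) ≤ 1 / q :=
        div_le_div_of_nonneg_left (by norm_num) hq (hQ w ⟨hw'.1, hw'.2.le⟩)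
      have e3 : 0 < 3 / D 1 w (ξ w) := div_pos (by norm_num) (h.pos 1 w _ hpos)
      have e4 : 0 < 1 / q := by positivity
      nlinarith
  · refine left_of_lip (G := fun σ => -(3 * Real.log (D 1 σ (ξ σ)) - Real.log (D 2 σ (ξ σ)))
      - 1 / q * r σ) hw.1 (M := M / q) (by positivity) (fun z hz hzw => ?_)
    have hz0 : 0 ≤ z := hu.trans hz
    have hwt : w ≤ t := hw.2.trans hst
    have hpos := char_pos hch hx (s := w) ⟨hz0.trans hzw, hwt⟩
    have hposz := char_pos hch hx (s := z) ⟨hz0, hzw.trans hwt⟩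
    have h1 := (abs_le.mp (hL z w hz0 hzw hwt)).2
    have e1 : Real.exp (-ξ w) ≤ 1 := Real.exp_le_one_iff.mpr (by linarith)
    have h2 := mul_le_mul_of_nonneg_right e1 (sub_nonneg.mpr (h.rmono hzw))
    have h3 := log_sub_le (d := (r w - r z) + M * (w - z)) hq (hQ z ⟨hz0, hzw.trans hwt⟩)
      (h.pos 2 w _ hpos) (by linarith)
      (add_nonneg (sub_nonneg.mpr (h.rmono hzw)) (mul_nonneg hM (sub_nonneg.mpr hzw)))
    have h4 := Real.log_le_log (h.pos 1 z _ hposz) (h.char_monoP hch hx htT hz0 hzw hwt)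
    have h5 : (((r w - r z) + M * (w - z)) / q) = 1 / q * r w - 1 / q * r z
      + M / q * (w - z) := by ring
    linarith

end Sys

/-! ### Uniform energy bounds -/

/-- The region of uniform bounds. -/
structure Reg (T L : ℝ) (D : ℕ → ℝ → ℝ → ℝ) (r : ℝ → ℝ) (c C p q : ℝ) : Prop where
  sys : Sys T D r
  T0 : 0 < T
  TL : T < L
  c0 : 0 < c
  p0 : 0 < p
  q0 : 0 < q
  Pp : ∀ t ∈ Icc 0 T, ∀ y, 0 < y → t + y ≤ L → p ≤ D 1 t y
  Qq : ∀ t ∈ Icc 0 T, ∀ y, 0 < y → t + y ≤ L → q ≤ D 2 t y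
  Ec : ∀ t ∈ Icc 0 T, ∀ y, 0 < y → t + y ≤ L → c ≤ D 1 t y ^ 3 / D 2 t y
  EC : ∀ t ∈ Icc 0 T, ∀ y, 0 < y → t + y ≤ L → D 1 t y ^ 3 / D 2 t y ≤ C

lemma Sys.logE {T : ℝ} {D : ℕ → ℝ → ℝ → ℝ} {r : ℝ → ℝ} (h : Sys T D r) {t y : ℝ} (hy : 0 < y) :
    Real.log (D 1 t y ^ 3 / D 2 t y) = 3 * Real.log (D 1 t y) - Real.log (D 2 t y) := by
  have h1 := h.pos 1 t y hy
  have h2 := h.pos 2 t y hy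
  rw [Real.log_div (by positivity) (by positivity), Real.log_pow]
  norm_num

lemma Sys.Epos {T : ℝ} {D : ℕ → ℝ → ℝ → ℝ} {r : ℝ → ℝ} (h : Sys T D r) {t y : ℝ} (hy : 0 < y) :
    0 < D 1 t y ^ 3 / D 2 t y := by
  have h1 := h.pos 1 t y hy
  have h2 := h.pos 2 t y hy
  positivity

lemma reg_of_init {T L : ℝ} {D : ℕ → ℝ → ℝ → ℝ} {r : ℝ → ℝ} {c C : ℝ} (h : Sys T D r)
    (hT : 0 < T) (hTL : T < L) (hc : 0 < c)
    (hE : ∀ y, 0 < y → y ≤ L → c ≤ D 1 0 y ^ 3 / D 2 0 y ∧ D 1 0 y ^ 3 / D 2 0 y ≤ C) :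
    ∃ c1 C1 p q, Reg T L D r c1 C1 p q := by
  have hL : 0 < L := hT.trans hTL
  have hp := h.pos 1 0 L hL
  have hq := h.pos 2 0 L hL
  have hC : 0 < C := hc.trans_le ((hE L hL le_rfl).1.trans (hE L hL le_rfl).2)
  -- bounds along characteristics
  have hP : ∀ t ∈ Icc 0 T, ∀ y, 0 < y → t + y ≤ L → ∀ ξ, IsChar D t y ξ → ∀ s ∈ Icc 0 t,
      D 1 0 L ≤ D 1 s (ξ s) := by
    intro t ht y hy hyL ξ hch s hs
    have h0 := Sys.char_pos hch hy (s := 0) ⟨le_rfl, ht.1⟩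
    have h1 := hch.le 0 ⟨le_rfl, ht.1⟩
    exact (h.anti 1 0 h0 (by linarith)).trans (h.char_monoP hch hy ht.2 le_rfl hs.1 hs.2)
  have hQ : ∀ t ∈ Icc 0 T, ∀ y, 0 < y → t + y ≤ L → ∀ ξ, IsChar D t y ξ → ∀ s ∈ Icc 0 t,
      D 2 0 L ≤ D 2 s (ξ s) := by
    intro t ht y hy hyL ξ hch s hs
    have h0 := Sys.char_pos hch hy (s := 0) ⟨le_rfl, ht.1⟩
    have h1 := hch.le 0 ⟨le_rfl, ht.1⟩
    exact (h.anti 2 0 h0 (by linarith)).trans (h.char_monoQ hch hy ht.2 le_rfl hs.1 hs.2)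
  have hrT : 0 ≤ r T := by rw [← h.r0]; exact h.rmono hT.le
  refine ⟨c * Real.exp (-(1 / D 2 0 L * r T)), C * Real.exp (3 / D 1 0 L * r T),
    D 1 0 L, D 2 0 L, ⟨h, hT, hTL, by positivity, hp, hq, ?_, ?_, ?_, ?_⟩⟩
  · intro t ht y hy hyL
    obtain ⟨ξ, hch⟩ := h.exists_char ht.1 ht.2 hy
    have := hP t ht y hy hyL ξ hch t ⟨ht.1, le_rfl⟩
    rwa [hch.fin] at this
  · intro t ht y hy hyL
    obtain ⟨ξ, hch⟩ := h.exists_char ht.1 ht.2 hy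
    have := hQ t ht y hy hyL ξ hch t ⟨ht.1, le_rfl⟩
    rwa [hch.fin] at this
  · intro t ht y hy hyL
    obtain ⟨ξ, hch⟩ := h.exists_char ht.1 ht.2 hy
    have h0 := Sys.char_pos hch hy (s := 0) ⟨le_rfl, ht.1⟩
    have h1 := hch.le 0 ⟨le_rfl, ht.1⟩
    have hF := h.char_F_ge hch hy ht.2 hq (hQ t ht y hy hyL ξ hch) le_rfl ht.1 le_rfl
    rw [hch.fin, ← h.logE h0, ← h.logE hy, h.r0, sub_zero] at hF
    have h2 := (hE (ξ 0) h0 (by linarith)).1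
    have h3 := Real.log_le_log hc h2
    have h4 : 1 / D 2 0 L * r t ≤ 1 / D 2 0 L * r T :=
      mul_le_mul_of_nonneg_left (h.rmono ht.2) (by positivity)
    rw [← Real.log_le_log_iff (by positivity) (h.Epos hy), Real.log_mul hc.ne' (Real.exp_ne_zero _),
      Real.log_exp]
    linarith
  · intro t ht y hy hyL
    obtain ⟨ξ, hch⟩ := h.exists_char ht.1 ht.2 hy
    have h0 := Sys.char_pos hch hy (s := 0) ⟨le_rfl, ht.1⟩
    have h1 := hch.le 0 ⟨le_rfl, ht.1⟩
    have hF := h.char_F_le hch hy ht.2 hp (hP t ht y hy hyL ξ hch) le_rfl ht.1 le_rfl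
    rw [hch.fin, ← h.logE h0, ← h.logE hy, h.r0, sub_zero] at hF
    have h2 := (hE (ξ 0) h0 (by linarith)).2
    have h3 := Real.log_le_log (h.Epos h0) h2
    have h4 : 3 / D 1 0 L * r t ≤ 3 / D 1 0 L * r T :=
      mul_le_mul_of_nonneg_left (h.rmono ht.2) (by positivity)
    rw [← Real.log_le_log_iff (h.Epos hy) (by positivity), Real.log_mul hC.ne' (Real.exp_ne_zero _),
      Real.log_exp]
    linarith

namespace Sys

variable {T : ℝ} {D : ℕ → ℝ → ℝ → ℝ} {r : ℝ → ℝ}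

lemma W_lim (h : Sys T D r) (t : ℝ) : Tendsto (fun y => 1 - D 0 t y) (𝓝[>] 0) (𝓝 0) := by
  have := (h.lim t).const_sub 1
  rwa [sub_self] at this

lemma W_le_of (h : Sys T D r) {t y : ℝ} (hy : 0 < y) {f f' : ℝ → ℝ}
    (hf : ∀ z ∈ Ioc 0 y, HasDerivAt f (f' z) z) (hf0 : Tendsto f (𝓝[>] 0) (𝓝 0))
    (hle : ∀ z ∈ Ioc 0 y, D 1 t z ≤ f' z) : 1 - D 0 t y ≤ f y := by
  have hm : ∀ z ∈ Ioc 0 y, (1 - D 0 t y) - f y ≤ (1 - D 0 t z) - f z := by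
    intro z hz
    refine antitoneOn_of_hasDerivWithinAt_nonpos (D := Ioc 0 y) (f := fun z => (1 - D 0 t z) - f z)
      (f' := fun z => D 1 t z - f' z) (convex_Ioc 0 y)
      (fun w hw => ((h.derW t hw.1).sub (hf w hw)).continuousAt.continuousWithinAt)
      (fun w hw => ?_) (fun w hw => ?_) hz ⟨hy, le_rfl⟩ hz.2
    · have := interior_subset hw
      exact ((h.derW t this.1).sub (hf w this)).hasDerivWithinAt
    · have := hle w (interior_subset hw)
      linarith
  have hl := (h.W_lim t).sub hf0
  rw [sub_zero] at hl
  have := ge_of_tendsto hl (b := (1 - D 0 t y) - f y) (by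
    filter_upwards [Ioc_mem_nhdsGT hy] with z hz using hm z hz)
  linarith

lemma W_ge_of (h : Sys T D r) {t y : ℝ} (hy : 0 < y) {f f' : ℝ → ℝ}
    (hf : ∀ z ∈ Ioc 0 y, HasDerivAt f (f' z) z) (hf0 : Tendsto f (𝓝[>] 0) (𝓝 0))
    (hle : ∀ z ∈ Ioc 0 y, f' z ≤ D 1 t z) : f y ≤ 1 - D 0 t y := by
  have hm : ∀ z ∈ Ioc 0 y, f y - (1 - D 0 t y) ≤ f z - (1 - D 0 t z) := by
    intro z hz
    refine antitoneOn_of_hasDerivWithinAt_nonpos (D := Ioc 0 y) (f := fun z => f z - (1 - D 0 t z))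
      (f' := fun z => f' z - D 1 t z) (convex_Ioc 0 y)
      (fun w hw => ((hf w hw).sub (h.derW t hw.1)).continuousAt.continuousWithinAt)
      (fun w hw => ?_) (fun w hw => ?_) hz ⟨hy, le_rfl⟩ hz.2
    · have := interior_subset hw
      exact ((hf w this).sub (h.derW t this.1)).hasDerivWithinAt
    · have := hle w (interior_subset hw)
      linarith
  have hl := hf0.sub (h.W_lim t)
  rw [sub_zero] at hl
  have := ge_of_tendsto hl (b := f y - (1 - D 0 t y)) (by
    filter_upwards [Ioc_mem_nhdsGT hy] with z hz using hm z hz)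
  linarith

lemma r_lim (h : Sys T D r) {s t : ℝ} (hs : 0 ≤ s) (hst : s ≤ t) (htT : t ≤ T) :
    Tendsto (fun x => ∫ τ in s..t, (1 - D 0 τ x) * D 1 τ x) (𝓝[>] 0) (𝓝 (r t - r s)) := by
  have e : Tendsto (fun x : ℝ => Real.exp (-x)) (𝓝[>] 0) (𝓝 1) := by
    have : Continuous (fun x : ℝ => Real.exp (-x)) := by fun_prop
    have h2 := this.tendsto 0
    simp only [neg_zero, Real.exp_zero] at h2
    exact h2.mono_left nhdsWithin_le_nhds
  have h1 := ((h.lim s).sub (h.lim t)).add (e.mul_const (r t - r s))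
  rw [sub_self, zero_add, one_mul] at h1
  refine h1.congr' ?_
  filter_upwards [self_mem_nhdsWithin] with x hx
  rw [h.eqn s t x hs hst htT hx]; ring

end Sys

lemma hasDerivAt_sqrt_mul {a y : ℝ} (ha : 0 < a) (hy : 0 < y) :
    HasDerivAt (fun z => Real.sqrt (2 * a * z)) (Real.sqrt (a / (2 * y))) y := by
  have h1 : HasDerivAt (fun z : ℝ => 2 * a * z) (2 * a) y := by
    simpa using (hasDerivAt_id y).const_mul (2 * a)
  have h2 := h1.sqrt (by positivity)
  convert h2 using 1
  have e : a / (2 * y) = (2 * a / (2 * Real.sqrt (2 * a * y))) ^ 2 := by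
    rw [div_pow, mul_pow, mul_pow, Real.sq_sqrt (by positivity)]
    field_simp
  rw [e, Real.sqrt_sq (by positivity)]

lemma tendsto_sqrt_mul {a : ℝ} : Tendsto (fun z => Real.sqrt (2 * a * z)) (𝓝[>] 0) (𝓝 0) := by
  have : Continuous (fun z => Real.sqrt (2 * a * z)) := by fun_prop
  have h2 := this.tendsto 0
  simp only [mul_zero, Real.sqrt_zero] at h2
  exact h2.mono_left nhdsWithin_le_nhds

namespace Reg

variable {T L : ℝ} {D : ℕ → ℝ → ℝ → ℝ} {r : ℝ → ℝ} {c C p q : ℝ}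

lemma cC (R : Reg T L D r c C p q) : c ≤ C := by
  have h1 : (0:ℝ) ∈ Icc 0 T := ⟨le_rfl, R.T0.le⟩
  have h2 := R.TL
  have h3 := R.T0
  exact (R.Ec 0 h1 L (by linarith) (by linarith)).trans (R.EC 0 h1 L (by linarith) (by linarith))

lemma C0 (R : Reg T L D r c C p q) : 0 < C := R.c0.trans_le R.cC

lemma invP_der (R : Reg T L D r c C p q) (t : ℝ) {y : ℝ} (hy : 0 < y) :
    HasDerivAt (fun z => (D 1 t z ^ 2)⁻¹) (2 / (D 1 t y ^ 3 / D 2 t y)) y := by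
  have hP := R.sys.pos 1 t y hy
  have hQ := R.sys.pos 2 t y hy
  have h1 := ((R.sys.der 1 t y hy).fun_pow 2).fun_inv (pow_pos hP 2).ne'
  refine h1.congr_deriv ?_
  norm_num
  field_simp

lemma invP_ge (R : Reg T L D r c C p q) {t y1 y2 : ℝ} (ht : t ∈ Icc 0 T) (hy : 0 < y1)
    (hyy : y1 ≤ y2) (hyL : t + y2 ≤ L) :
    2 / C * (y2 - y1) ≤ (D 1 t y2 ^ 2)⁻¹ - (D 1 t y1 ^ 2)⁻¹ := by
  refine (convex_Icc y1 y2).mul_sub_le_image_sub_of_le_deriv (f := fun z => (D 1 t z ^ 2)⁻¹)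
    (fun w hw => (R.invP_der t (hy.trans_le hw.1)).continuousAt.continuousWithinAt)
    (fun w hw => (R.invP_der t (hy.trans_le (interior_subset hw).1)).differentiableAt.differentiableWithinAt)
    (fun w hw => ?_) y1 ⟨le_rfl, hyy⟩ y2 ⟨hyy, le_rfl⟩ hyy
  have hw' := interior_subset hw
  have hw0 := hy.trans_le hw'.1
  rw [(R.invP_der t hw0).deriv]
  exact div_le_div_of_nonneg_left (by norm_num) (R.sys.Epos hw0)
    (R.EC t ht w hw0 (by linarith [hw'.2]))

lemma invP_le (R : Reg T L D r c C p q) {t y1 y2 : ℝ} (ht : t ∈ Icc 0 T) (hy : 0 < y1)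
    (hyy : y1 ≤ y2) (hyL : t + y2 ≤ L) :
    (D 1 t y2 ^ 2)⁻¹ - (D 1 t y1 ^ 2)⁻¹ ≤ 2 / c * (y2 - y1) := by
  refine (convex_Icc y1 y2).image_sub_le_mul_sub_of_deriv_le (f := fun z => (D 1 t z ^ 2)⁻¹)
    (fun w hw => (R.invP_der t (hy.trans_le hw.1)).continuousAt.continuousWithinAt)
    (fun w hw => (R.invP_der t (hy.trans_le (interior_subset hw).1)).differentiableAt.differentiableWithinAt)
    (fun w hw => ?_) y1 ⟨le_rfl, hyy⟩ y2 ⟨hyy, le_rfl⟩ hyy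
  have hw' := interior_subset hw
  have hw0 := hy.trans_le hw'.1
  rw [(R.invP_der t hw0).deriv]
  exact div_le_div_of_nonneg_left (by norm_num) R.c0
    (R.Ec t ht w hw0 (by linarith [hw'.2]))

lemma invP_lb (R : Reg T L D r c C p q) {t y : ℝ} (ht : t ∈ Icc 0 T) (hy : 0 < y)
    (hyL : t + y ≤ L) : 2 * y / C ≤ (D 1 t y ^ 2)⁻¹ := by
  have hl : Tendsto (fun z => 2 / C * (y - z)) (𝓝[>] 0) (𝓝 (2 / C * (y - 0))) := by
    have : Continuous (fun z => 2 / C * (y - z)) := by fun_prop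
    exact (this.tendsto 0).mono_left nhdsWithin_le_nhds
  have := le_of_tendsto hl (b := (D 1 t y ^ 2)⁻¹) (by
    filter_upwards [Ioc_mem_nhdsGT hy] with z hz
    have h1 := R.invP_ge ht hz.1 hz.2 hyL
    have h2 : 0 < (D 1 t z ^ 2)⁻¹ := by have := R.sys.pos 1 t z hz.1; positivity
    linarith)
  calc 2 * y / C = 2 / C * (y - 0) := by ring
    _ ≤ _ := this

lemma P_sq_le (R : Reg T L D r c C p q) {t y : ℝ} (ht : t ∈ Icc 0 T) (hy : 0 < y)
    (hyL : t + y ≤ L) : D 1 t y ^ 2 ≤ C / (2 * y) := by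
  have h1 := R.invP_lb ht hy hyL
  have hP := R.sys.pos 1 t y hy
  have hC := R.C0
  have h2 := inv_anti₀ (by positivity) h1
  rwa [inv_inv, inv_div] at h2

lemma P_le (R : Reg T L D r c C p q) {t y : ℝ} (ht : t ∈ Icc 0 T) (hy : 0 < y)
    (hyL : t + y ≤ L) : D 1 t y ≤ Real.sqrt (C / (2 * y)) :=
  Real.le_sqrt_of_sq_le (R.P_sq_le ht hy hyL)

lemma W_le (R : Reg T L D r c C p q) {t y : ℝ} (ht : t ∈ Icc 0 T) (hy : 0 < y)
    (hyL : t + y ≤ L) : 1 - D 0 t y ≤ Real.sqrt (2 * C * y) :=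
  R.sys.W_le_of hy (fun z hz => hasDerivAt_sqrt_mul R.C0 hz.1) tendsto_sqrt_mul
    (fun z hz => R.P_le ht hz.1 (by linarith [hz.2]))

lemma WP_le (R : Reg T L D r c C p q) {t y : ℝ} (ht : t ∈ Icc 0 T) (hy : 0 < y)
    (hyL : t + y ≤ L) : (1 - D 0 t y) * D 1 t y ≤ C := by
  have hC := R.C0
  calc (1 - D 0 t y) * D 1 t y ≤ Real.sqrt (2 * C * y) * Real.sqrt (C / (2 * y)) :=
        mul_le_mul (R.W_le ht hy hyL) (R.P_le ht hy hyL) (R.sys.pos 1 t y hy).le (Real.sqrt_nonneg _)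
    _ = C := by
        rw [← Real.sqrt_mul (by positivity)]
        have : 2 * C * y * (C / (2 * y)) = C ^ 2 := by field_simp
        rw [this, Real.sqrt_sq hC.le]

lemma r_lip (R : Reg T L D r c C p q) {s t : ℝ} (hs : 0 ≤ s) (hst : s ≤ t) (htT : t ≤ T) :
    r t - r s ≤ C * (t - s) := by
  refine le_of_tendsto (R.sys.r_lim hs hst htT) ?_
  filter_upwards [Ioc_mem_nhdsGT (sub_pos.mpr R.TL)] with x hx
  have := intervalIntegral.integral_mono_on (μ := volume) hst
    (intervalIntegrable_of_bdd (R.sys.g0_meas hx.1) _ (fun τ => R.sys.g0_bd hx.1 τ x le_rfl) s t)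
    (intervalIntegrable_const (c := C))
    (fun τ hτ => R.WP_le ⟨hs.trans hτ.1, hτ.2.trans htT⟩ hx.1 (by linarith [hx.2, hτ.2]))
  refine this.trans (le_of_eq ?_)
  simp; ring

lemma r_contOn (R : Reg T L D r c C p q) : ContinuousOn r (Icc 0 T) := by
  have : LipschitzOnWith ⟨C, R.C0.le⟩ r (Icc 0 T) := by
    refine LipschitzOnWith.of_dist_le_mul (fun a ha b hb => ?_)
    rw [Real.dist_eq, Real.dist_eq]
    change _ ≤ C * _
    rcases le_total a b with hab | hab
    · rw [abs_sub_comm, abs_of_nonneg (sub_nonneg.mpr (R.sys.rmono hab)), abs_sub_comm,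
        abs_of_nonneg (sub_nonneg.mpr hab)]
      exact R.r_lip ha.1 hab hb.2
    · rw [abs_of_nonneg (sub_nonneg.mpr (R.sys.rmono hab)), abs_of_nonneg (sub_nonneg.mpr hab)]
      exact R.r_lip hb.1 hab ha.2
  exact this.continuousOn

lemma D_contOn (R : Reg T L D r c C p q) (n : ℕ) {s : ℝ} (hs : s ∈ Icc 0 T) :
    ∀ x, 0 < x → Tendsto (fun t => D n t x) (𝓝[Icc 0 T] s) (𝓝 (D n s x)) := by
  induction n with
  | zero =>
    intro x hx
    have hc : Continuous (fun t => ∫ τ in (0:ℝ)..t, (1 - D 0 τ x) * D 1 τ x) :=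
      intervalIntegral.continuous_primitive (fun a b => intervalIntegrable_of_bdd (R.sys.g0_meas hx) _
        (fun τ => R.sys.g0_bd hx τ x le_rfl) a b) 0
    have h1 : ContinuousOn (fun t => D 0 0 x - (∫ τ in (0:ℝ)..t, (1 - D 0 τ x) * D 1 τ x)
        + Real.exp (-x) * (r t - r 0)) (Icc 0 T) :=
      (continuousOn_const.sub hc.continuousOn).add
        (continuousOn_const.mul (R.r_contOn.sub continuousOn_const))
    have h2 : ContinuousOn (fun t => D 0 t x) (Icc 0 T) :=
      h1.congr (fun t ht => R.sys.eqn 0 t x le_rfl ht.1 ht.2 hx)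
    exact h2 s hs
  | succ n ih => exact R.sys.cont_step n ih

lemma D_char_cont (R : Reg T L D r c C p q) (n : ℕ) {t x : ℝ} {ξ : ℝ → ℝ} (htT : t ≤ T)
    (hx : 0 < x) (hch : IsChar D t x ξ) : ContinuousOn (fun s => D n s (ξ s)) (Icc 0 t) := by
  intro s hs
  have hs' : s ∈ Icc 0 T := ⟨hs.1, hs.2.trans htT⟩
  have h1 := R.sys.D_joint n (Sys.char_pos hch hx hs) (R.D_contOn n hs')
  have h2 : Tendsto (fun u => (u, ξ u)) (𝓝[Icc 0 t] s) (𝓝[Icc 0 T] s ×ˢ 𝓝 (ξ s)) :=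
    (tendsto_id.mono_left (nhdsWithin_mono s (Icc_subset_Icc le_rfl htT))).prodMk (hch.cont s hs)
  exact h1.comp h2

lemma r_char_cont (R : Reg T L D r c C p q) {t : ℝ} (htT : t ≤ T) : ContinuousOn r (Icc 0 t) :=
  R.r_contOn.mono (Icc_subset_Icc le_rfl htT)

/-- Lower bound for `W` backward along a characteristic. -/
lemma char_W_ge (R : Reg T L D r c C p q) {t x : ℝ} {ξ : ℝ → ℝ} (htT : t ≤ T)
    (hx : 0 < x) (hxL : t + x ≤ L) (hch : IsChar D t x ξ) {s : ℝ} (hs : s ∈ Icc 0 t) :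
    (1 - D 0 t x) + Real.exp (-L) * (r t - r s) ≤ 1 - D 0 s (ξ s) := by
  have key := mono_lemma_cont (r := r) (a := s) (b := t)
    (G := fun σ => (1 - D 0 σ (ξ σ)) + Real.exp (-L) * r σ) hs.2 R.sys.rmono
    (fun w hw => ?_) ?_
  · rw [hch.fin] at key; linarith
  · have hw' : w ∈ Ico 0 t := ⟨hs.1.trans hw.1, hw.2⟩
    refine ⟨_, _, le_of_eq ?_, ?_,
      (R.sys.rexpW hch hx htT hw').add (RExp.self.const_mul (Real.exp (-L)))⟩
    · ring
    · have h1 := hch.le w ⟨hw'.1, hw'.2.le⟩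
      have := Real.exp_le_exp.mpr (show -L ≤ -ξ w by linarith [hw'.1])
      linarith
  · exact ((continuousOn_const.sub (R.D_char_cont 0 htT hx hch)).add
      (continuousOn_const.mul (R.r_char_cont htT))).mono (Icc_subset_Icc hs.1 le_rfl)

lemma char_W_le (R : Reg T L D r c C p q) {t x : ℝ} {ξ : ℝ → ℝ} (htT : t ≤ T)
    (hx : 0 < x) (hch : IsChar D t x ξ) {s : ℝ} (hs : s ∈ Icc 0 t) :
    1 - D 0 s (ξ s) ≤ (1 - D 0 t x) + (r t - r s) := by
  have key := mono_lemma_cont (r := r) (a := s) (b := t)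
    (G := fun σ => -((1 - D 0 σ (ξ σ)) + 1 * r σ)) hs.2 R.sys.rmono
    (fun w hw => ?_) ?_
  · rw [hch.fin] at key; linarith
  · have hw' : w ∈ Ico 0 t := ⟨hs.1.trans hw.1, hw.2⟩
    refine ⟨_, _, le_of_eq ?_, ?_,
      ((R.sys.rexpW hch hx htT hw').add (RExp.self.const_mul 1)).neg⟩
    · ring
    · have h1 := Sys.char_pos hch hx (s := w) ⟨hw'.1, hw'.2.le⟩
      have := Real.exp_le_one_iff.mpr (show -ξ w ≤ 0 by linarith)
      linarith
  · exact ((continuousOn_const.sub (R.D_char_cont 0 htT hx hch)).add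
      (continuousOn_const.mul (R.r_char_cont htT))).neg.mono (Icc_subset_Icc hs.1 le_rfl)

lemma char_le (R : Reg T L D r c C p q) {t x : ℝ} {ξ : ℝ → ℝ} (htT : t ≤ T)
    (hx : 0 < x) (hch : IsChar D t x ξ) {s : ℝ} (hs : s ∈ Icc 0 t) :
    ξ s ≤ x + (t - s) * ((1 - D 0 t x) + (r t - r s)) := by
  set B := (1 - D 0 t x) + (r t - r s) with hB
  have key := mono_of_right_deriv (a := s) (b := t) (G := fun w => -(ξ w + B * w)) hs.2
    ((hch.cont.mono (Icc_subset_Icc hs.1 le_rfl)).add (by fun_prop)).neg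
    (fun w hw => ((hch.der w ⟨hs.1.trans hw.1, hw.2⟩).add
      (((hasDerivWithinAt_id w (Ici w))).const_mul B)).neg) (fun w hw => ?_)
  · simp only [hch.fin] at key
    linarith
  · have h1 := R.char_W_le htT hx hch (s := w) ⟨hs.1.trans hw.1, hw.2.le⟩
    have h2 := R.sys.rmono hw.1
    linarith

end Reg

namespace Reg

variable {T L : ℝ} {D : ℕ → ℝ → ℝ → ℝ} {r : ℝ → ℝ} {c C p q : ℝ}

lemma char_small (R : Reg T L D r c C p q) {s t ρ : ℝ} (hs : s ∈ Icc 0 t) (htT : t ≤ T)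
    (hρ : (t - s) * (r t - r s) < ρ) :
    ∃ x ξ, 0 < x ∧ t + x ≤ L ∧ IsChar D t x ξ ∧ ξ s < ρ := by
  have h1 : Tendsto (fun x => x + (t - s) * ((1 - D 0 t x) + (r t - r s))) (𝓝[>] 0)
      (𝓝 (0 + (t - s) * (0 + (r t - r s)))) :=
    (tendsto_id.mono_left nhdsWithin_le_nhds).add
      (((R.sys.W_lim t).add tendsto_const_nhds).const_mul _)
  rw [zero_add, zero_add] at h1
  have h2 := h1.eventually (Iio_mem_nhds hρ)
  have h3 : ∀ᶠ x in 𝓝[>] (0:ℝ), x ∈ Ioc 0 (L - T) := Ioc_mem_nhdsGT (sub_pos.mpr R.TL)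
  obtain ⟨x, hx, hx2⟩ := (h2.and h3).exists
  obtain ⟨ξ, hch⟩ := R.sys.exists_char (hs.1.trans hs.2) htT hx2.1
  exact ⟨x, ξ, hx2.1, by linarith [hx2.2], hch, (R.char_le htT hx2.1 hch hs).trans_lt hx⟩

lemma bdd_far (R : Reg T L D r c C p q) {s t ρ m : ℝ} (hs : s ∈ Icc 0 t) (htT : t ≤ T)
    (hm : ∀ y, 0 < y → D 1 t y ≤ m)
    (hρ : (t - s) * (r t - r s) < ρ) : D 1 s ρ ≤ m := by
  obtain ⟨x, ξ, hx, _, hch, hlt⟩ := R.char_small hs htT hρ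
  have h1 := R.sys.char_monoP hch hx htT hs.1 hs.2 le_rfl
  rw [hch.fin] at h1
  exact (R.sys.anti 1 s (Sys.char_pos hch hx hs) hlt.le).trans (h1.trans (hm x hx))

lemma bdd_step (R : Reg T L D r c C p q) {m : ℝ} (hm0 : 0 < m) :
    ∃ δ, 0 < δ ∧ ∀ t ∈ Icc 0 T, (∀ y, 0 < y → D 1 t y ≤ m) →
      ∀ s ∈ Icc 0 t, t - s ≤ δ → ∀ y, 0 < y → D 1 s y ≤ m := by
  have hC := R.C0
  have hc := R.c0
  have hTL := R.TL
  obtain ⟨ρ, hρ0, hρ1, hρ2⟩ : ∃ ρ, 0 < ρ ∧ ρ ≤ L - T ∧ ρ ≤ 3 * c / (8 * m ^ 2) :=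
    ⟨min (L - T) (3 * c / (8 * m ^ 2)), lt_min (by linarith) (by positivity), min_le_left _ _,
      min_le_right _ _⟩
  refine ⟨Real.sqrt (ρ / (2 * C)), by positivity, ?_⟩
  intro t ht hbd s hs hδ
  have hst : 0 ≤ t - s := sub_nonneg.mpr hs.2
  have hsq : (t - s) ^ 2 ≤ ρ / (2 * C) := by
    rw [← Real.sq_sqrt (show 0 ≤ ρ / (2 * C) by positivity)]
    exact pow_le_pow_left₀ hst hδ 2
  -- rough bound
  have rough : ∀ u ∈ Icc s t, ∀ y, 0 < y → D 1 u y ≤ 2 * m := by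
    intro u hu y hy
    have hu' : u ∈ Icc 0 t := ⟨hs.1.trans hu.1, hu.2⟩
    have huT : u ∈ Icc 0 T := ⟨hu'.1, hu'.2.trans ht.2⟩
    have hlt : (t - u) * (r t - r u) < ρ := by
      have h1 := R.r_lip hu'.1 hu'.2 ht.2
      have h2 : 0 ≤ t - u := sub_nonneg.mpr hu.2
      have h3 : t - u ≤ t - s := by linarith [hu.1]
      have h4 : (t - u) ^ 2 ≤ ρ / (2 * C) := (pow_le_pow_left₀ h2 h3 2).trans hsq
      rw [le_div_iff₀ (by positivity)] at h4
      have h5 := mul_le_mul_of_nonneg_left h1 h2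
      nlinarith
    have hfar := R.bdd_far hu' ht.2 hbd hlt
    rcases le_total ρ y with hle | hle
    · exact ((R.sys.anti 1 u hρ0 hle).trans hfar).trans (by linarith)
    · have h6 := R.invP_le huT hy hle (by linarith [huT.2])
      have hPρ := R.sys.pos 1 u ρ hρ0
      have hPy := R.sys.pos 1 u y hy
      have h7 : (m ^ 2)⁻¹ ≤ (D 1 u ρ ^ 2)⁻¹ :=
        inv_anti₀ (by positivity) (pow_le_pow_left₀ hPρ.le hfar 2)
      have h8 : 2 / c * (ρ - y) ≤ 2 / c * (3 * c / (8 * m ^ 2)) :=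
        mul_le_mul_of_nonneg_left (by linarith) (by positivity)
      have h9 : 2 / c * (3 * c / (8 * m ^ 2)) = 3 / 4 * (m ^ 2)⁻¹ := by field_simp; ring
      have h10 : ((2 * m) ^ 2)⁻¹ ≤ (D 1 u y ^ 2)⁻¹ := by
        have : ((2 * m) ^ 2)⁻¹ = 1 / 4 * (m ^ 2)⁻¹ := by field_simp; ring
        rw [this]; linarith
      rw [inv_le_inv₀ (by positivity) (by positivity)] at h10
      exact le_of_sq_le_sq h10 (by positivity)
  -- `r` is constant
  have hr : r t - r s ≤ 0 := by
    have hz : Tendsto (fun x : ℝ => 4 * m ^ 2 * x * (t - s)) (𝓝[>] 0) (𝓝 0) := by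
      have : Continuous (fun x : ℝ => 4 * m ^ 2 * x * (t - s)) := by fun_prop
      have h2 := this.tendsto 0
      simp only [mul_zero, zero_mul] at h2
      exact h2.mono_left nhdsWithin_le_nhds
    refine le_of_tendsto_of_tendsto (R.sys.r_lim hs.1 hs.2 ht.2) hz ?_
    filter_upwards [self_mem_nhdsWithin] with x hx
    have hx : 0 < x := hx
    have := intervalIntegral.integral_mono_on (μ := volume) hs.2
      (intervalIntegrable_of_bdd (R.sys.g0_meas hx) _ (fun τ => R.sys.g0_bd hx τ x le_rfl) s t)
      (intervalIntegrable_const (c := 4 * m ^ 2 * x))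
      (fun τ hτ => by
        have hW : 1 - D 0 τ x ≤ 2 * m * x := R.sys.W_le_of hx (f := fun z => 2 * m * z)
          (f' := fun _ => 2 * m)
          (fun z hz => by simpa using (hasDerivAt_id z).const_mul (2 * m))
          (by
            have : Continuous (fun z : ℝ => 2 * m * z) := by fun_prop
            have h2 := this.tendsto 0
            simp only [mul_zero] at h2
            exact h2.mono_left nhdsWithin_le_nhds)
          (fun z hz => rough τ hτ z hz.1)
        have hP := rough τ hτ x hx
        calc (1 - D 0 τ x) * D 1 τ x ≤ (2 * m * x) * (2 * m) :=
              mul_le_mul hW hP (R.sys.pos 1 τ x hx).le (by positivity)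
          _ = 4 * m ^ 2 * x := by ring)
    refine this.trans (le_of_eq ?_)
    simp; ring
  intro y hy
  refine R.bdd_far hs ht.2 hbd (lt_of_le_of_lt ?_ hy)
  exact mul_nonpos_of_nonneg_of_nonpos hst hr

lemma unbounded (R : Reg T L D r c C p q) (h0 : ∀ m, ∃ y, 0 < y ∧ m < D 1 0 y) {t : ℝ}
    (ht : t ∈ Icc 0 T) (m : ℝ) : ∃ y, 0 < y ∧ m < D 1 t y := by
  by_contra hcon
  push Not at hcon
  have hm0 : 0 < m := (R.sys.pos 1 t 1 one_pos).trans_le (hcon 1 one_pos)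
  obtain ⟨δ, hδ, hstep⟩ := R.bdd_step hm0
  have hind : ∀ n : ℕ, ∀ y, 0 < y → D 1 (max 0 (t - n * δ)) y ≤ m := by
    intro n
    induction n with
    | zero =>
      simp only [Nat.cast_zero, zero_mul, sub_zero, max_eq_right ht.1]
      exact hcon
    | succ n ih =>
      have hn : 0 ≤ (n:ℝ) * δ := by positivity
      refine hstep (max 0 (t - n * δ)) ⟨le_max_left _ _, max_le R.T0.le (by linarith [ht.2])⟩ ih _
        ⟨le_max_left _ _, max_le_max le_rfl ?_⟩ ?_
      · push_cast; linarith
      · have h1 : max 0 (t - n * δ) ≤ max 0 (t - (n+1:ℕ) * δ) + δ := by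
          refine max_le ?_ ?_
          · linarith [le_max_left 0 (t - (n+1:ℕ) * δ)]
          · have := le_max_right 0 (t - (n+1:ℕ) * δ)
            push_cast at this ⊢
            linarith
        linarith
  obtain ⟨n, hn⟩ := exists_nat_ge (t / δ)
  rw [div_le_iff₀ hδ] at hn
  obtain ⟨y, hy, hym⟩ := h0 m
  have := hind n y hy
  rw [max_eq_left (by linarith)] at this
  linarith

end Reg

/-- The region of uniform bounds, together with blow-up of the first moment at all times. -/
structure Reg2 (T L : ℝ) (D : ℕ → ℝ → ℝ → ℝ) (r : ℝ → ℝ) (c C p q : ℝ) : Prop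
    extends Reg T L D r c C p q where
  U : ∀ t ∈ Icc 0 T, ∀ m, ∃ y, 0 < y ∧ m < D 1 t y

namespace Reg2

variable {T L : ℝ} {D : ℕ → ℝ → ℝ → ℝ} {r : ℝ → ℝ} {c C p q : ℝ}

lemma invP_lim (R : Reg2 T L D r c C p q) {t : ℝ} (ht : t ∈ Icc 0 T) :
    Tendsto (fun y => (D 1 t y ^ 2)⁻¹) (𝓝[>] 0) (𝓝 0) := by
  have h1 : Tendsto (fun y => D 1 t y) (𝓝[>] 0) atTop := by
    rw [tendsto_atTop]
    intro m
    obtain ⟨y, hy, hym⟩ := R.U t ht m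
    filter_upwards [Ioc_mem_nhdsGT hy] with z hz
    exact hym.le.trans (R.sys.anti 1 t hz.1 hz.2)
  exact ((tendsto_pow_atTop (two_ne_zero)).comp h1).inv_tendsto_atTop

lemma invP_ub (R : Reg2 T L D r c C p q) {t y : ℝ} (ht : t ∈ Icc 0 T) (hy : 0 < y)
    (hyL : t + y ≤ L) : (D 1 t y ^ 2)⁻¹ ≤ 2 * y / c := by
  have hl : Tendsto (fun z => (D 1 t z ^ 2)⁻¹ + 2 / c * (y - z)) (𝓝[>] 0)
      (𝓝 (0 + 2 / c * (y - 0))) := by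
    have : Continuous (fun z => 2 / c * (y - z)) := by fun_prop
    exact (R.invP_lim ht).add ((this.tendsto 0).mono_left nhdsWithin_le_nhds)
  have := ge_of_tendsto hl (b := (D 1 t y ^ 2)⁻¹) (by
    filter_upwards [Ioc_mem_nhdsGT hy] with z hz
    have h1 := R.invP_le ht hz.1 hz.2 hyL
    linarith)
  calc _ ≤ _ := this
    _ = 2 * y / c := by ring

lemma P_sq_ge (R : Reg2 T L D r c C p q) {t y : ℝ} (ht : t ∈ Icc 0 T) (hy : 0 < y)
    (hyL : t + y ≤ L) : c / (2 * y) ≤ D 1 t y ^ 2 := by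
  have h1 := R.invP_ub ht hy hyL
  have hP := R.sys.pos 1 t y hy
  have h2 := inv_anti₀ (by positivity) h1
  rwa [inv_inv, inv_div] at h2

lemma P_ge (R : Reg2 T L D r c C p q) {t y : ℝ} (ht : t ∈ Icc 0 T) (hy : 0 < y)
    (hyL : t + y ≤ L) : Real.sqrt (c / (2 * y)) ≤ D 1 t y :=
  (Real.sqrt_le_left (R.sys.pos 1 t y hy).le).mpr (R.P_sq_ge ht hy hyL)

lemma W_ge (R : Reg2 T L D r c C p q) {t y : ℝ} (ht : t ∈ Icc 0 T) (hy : 0 < y)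
    (hyL : t + y ≤ L) : Real.sqrt (2 * c * y) ≤ 1 - D 0 t y :=
  R.sys.W_ge_of hy (fun z hz => hasDerivAt_sqrt_mul R.c0 hz.1) tendsto_sqrt_mul
    (fun z hz => R.P_ge ht hz.1 (by linarith [hz.2]))

lemma WP_ge (R : Reg2 T L D r c C p q) {t y : ℝ} (ht : t ∈ Icc 0 T) (hy : 0 < y)
    (hyL : t + y ≤ L) : c ≤ (1 - D 0 t y) * D 1 t y := by
  have hc := R.c0
  calc c = Real.sqrt (2 * c * y) * Real.sqrt (c / (2 * y)) := by
        rw [← Real.sqrt_mul (by positivity)]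
        have : 2 * c * y * (c / (2 * y)) = c ^ 2 := by field_simp
        rw [this, Real.sqrt_sq hc.le]
    _ ≤ _ := mul_le_mul (R.W_ge ht hy hyL) (R.P_ge ht hy hyL) (Real.sqrt_nonneg _)
        (R.sys.W_pos t hy).le

lemma r_ge (R : Reg2 T L D r c C p q) {s t : ℝ} (hs : 0 ≤ s) (hst : s ≤ t) (htT : t ≤ T) :
    c * (t - s) ≤ r t - r s := by
  refine ge_of_tendsto (R.sys.r_lim hs hst htT) ?_
  filter_upwards [Ioc_mem_nhdsGT (sub_pos.mpr R.TL)] with x hx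
  have := intervalIntegral.integral_mono_on (μ := volume) hst
    (intervalIntegrable_const (c := c))
    (intervalIntegrable_of_bdd (R.sys.g0_meas hx.1) _ (fun τ => R.sys.g0_bd hx.1 τ x le_rfl) s t)
    (fun τ hτ => R.WP_ge ⟨hs.trans hτ.1, hτ.2.trans htT⟩ hx.1 (by linarith [hx.2, hτ.2]))
  refine le_trans (le_of_eq ?_) this
  simp; ring

end Reg2

lemma sqrt_mvt {f f' : ℝ → ℝ} {M a b : ℝ} (ha : 0 < a) (hab : a ≤ b)
    (hf : ∀ y ∈ Icc a b, HasDerivAt f (f' y) y)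
    (hb : ∀ y ∈ Icc a b, |f' y| ≤ M / (2 * Real.sqrt y)) :
    |f b - f a| ≤ M * (Real.sqrt b - Real.sqrt a) := by
  have hs : ∀ y ∈ Icc a b, HasDerivAt (fun z => M * Real.sqrt z) (M / (2 * Real.sqrt y)) y := by
    intro y hy
    have := (Real.hasDerivAt_sqrt (ha.trans_le hy.1).ne').const_mul M
    refine this.congr_deriv ?_
    ring
  have h1 : AntitoneOn (fun z => f z - M * Real.sqrt z) (Icc a b) := by
    refine antitoneOn_of_hasDerivWithinAt_nonpos (convex_Icc a b)
      (fun w hw => ((hf w hw).fun_sub (hs w hw)).continuousAt.continuousWithinAt)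
      (fun w hw => ((hf w (interior_subset hw)).fun_sub (hs w (interior_subset hw))).hasDerivWithinAt)
      (fun w hw => ?_)
    have := (abs_le.mp (hb w (interior_subset hw))).2
    linarith
  have h2 : MonotoneOn (fun z => f z + M * Real.sqrt z) (Icc a b) := by
    refine monotoneOn_of_hasDerivWithinAt_nonneg (convex_Icc a b)
      (fun w hw => ((hf w hw).fun_add (hs w hw)).continuousAt.continuousWithinAt)
      (fun w hw => ((hf w (interior_subset hw)).fun_add (hs w (interior_subset hw))).hasDerivWithinAt)
      (fun w hw => ?_)
    have := (abs_le.mp (hb w (interior_subset hw))).1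
    linarith
  have e1 := h1 ⟨le_rfl, hab⟩ ⟨hab, le_rfl⟩ hab
  have e2 := h2 ⟨le_rfl, hab⟩ ⟨hab, le_rfl⟩ hab
  simp only at e1 e2
  rw [abs_le]
  constructor <;> linarith

lemma sub_le_of_log {a b C : ℝ} (ha : 0 < a) (haC : a ≤ C) (hb : 0 < b) (hbC : b ≤ C) :
    |b - a| ≤ C * |Real.log b - Real.log a| := by
  have aux : ∀ a b : ℝ, 0 < a → a ≤ b → b ≤ C → |b - a| ≤ C * |Real.log b - Real.log a| := by
    intro a b ha hab hbC
    have hb : 0 < b := ha.trans_le hab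
    rw [abs_of_nonneg (sub_nonneg.mpr hab),
      abs_of_nonneg (sub_nonneg.mpr (Real.log_le_log ha hab))]
    have e1 := Real.log_le_sub_one_of_pos (show 0 < a / b by positivity)
    rw [Real.log_div ha.ne' hb.ne'] at e1
    have e2 : b * (a / b) = a := by field_simp
    have h3 : b - a ≤ b * (Real.log b - Real.log a) := by nlinarith
    exact h3.trans (mul_le_mul_of_nonneg_right hbC
      (sub_nonneg.mpr (Real.log_le_log ha hab)))
  rcases le_total a b with h | h
  · exact aux a b ha h hbC
  · have := aux b a hb h haC
    rwa [abs_sub_comm, abs_sub_comm (Real.log a)] at this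

namespace Sys

variable {T : ℝ} {D : ℕ → ℝ → ℝ → ℝ} {r : ℝ → ℝ}

lemma char_order (h : Sys T D r) {t x1 x2 : ℝ} {ξ1 ξ2 : ℝ → ℝ} (hx1 : 0 < x1) (hx : x1 < x2)
    (h1 : IsChar D t x1 ξ1) (h2 : IsChar D t x2 ξ2) {s : ℝ} (hs : s ∈ Icc 0 t) :
    ξ1 s ≤ ξ2 s := by
  by_contra hcon
  push Not at hcon
  -- intermediate value
  have hc : ContinuousOn (fun u => ξ2 u - ξ1 u) (Icc s t) :=
    (h2.cont.sub h1.cont).mono (Icc_subset_Icc hs.1 le_rfl)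
  have hiv := intermediate_value_Icc hs.2 hc
  have h0 : (0:ℝ) ∈ Icc (ξ2 s - ξ1 s) (ξ2 t - ξ1 t) := by
    rw [h1.fin, h2.fin]; constructor <;> linarith
  obtain ⟨w, hw, hw0⟩ := hiv h0
  have hweq : ξ1 w = ξ2 w := by simp only at hw0; linarith
  have hw' : 0 ≤ w := hs.1.trans hw.1
  obtain ⟨K, hK⟩ : ∃ K : NNReal, (K:ℝ) = ((0+1).factorial : ℝ) / x1 ^ (0+1) :=
    ⟨⟨_, by positivity⟩, rfl⟩
  have hEq := ODE_solution_unique_of_mem_Icc_right (v := fun u y => -(1 - D 0 u y))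
    (s := fun _ => Ici x1) (K := K) (a := w) (b := t) (f := ξ1) (g := ξ2)
    (fun u _ => LipschitzOnWith.of_dist_le_mul (fun y hy z hz => by
      rw [Real.dist_eq, Real.dist_eq, hK]
      have := h.lip 0 u hx1 hy hz
      refine le_trans (le_of_eq ?_) this
      congr 1; ring))
    (h1.cont.mono (Icc_subset_Icc hw' le_rfl))
    (fun u hu => h1.der u ⟨hw'.trans hu.1, hu.2⟩)
    (fun u hu => h1.ge u ⟨hw'.trans hu.1, hu.2.le⟩)
    (h2.cont.mono (Icc_subset_Icc hw' le_rfl))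
    (fun u hu => h2.der u ⟨hw'.trans hu.1, hu.2⟩)
    (fun u hu => hx.le.trans (h2.ge u ⟨hw'.trans hu.1, hu.2.le⟩))
    hweq
  have := hEq (show t ∈ Icc w t from ⟨hw.2, le_rfl⟩)
  rw [h1.fin, h2.fin] at this
  linarith

end Sys

namespace Reg2

variable {T L : ℝ} {D : ℕ → ℝ → ℝ → ℝ} {r : ℝ → ℝ} {c C p q : ℝ}

lemma char_diff (R : Reg2 T L D r c C p q) {t x1 x2 : ℝ} {ξ1 ξ2 : ℝ → ℝ} (htT : t ≤ T)
    (hx1 : 0 < x1) (hx : x1 < x2)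
    (h1 : IsChar D t x1 ξ1) (h2 : IsChar D t x2 ξ2) {s : ℝ} (hs : s ∈ Icc 0 t) :
    ξ2 s - ξ1 s ≤ x2 + (t - s) * (1 - D 0 t x2) := by
  have hx2 : 0 < x2 := hx1.trans hx
  have hW : ∀ w ∈ Icc 0 t, (1 - D 0 w (ξ2 w)) - (1 - D 0 w (ξ1 w)) ≤ 1 - D 0 t x2 := by
    intro w hw
    have key := mono_lemma_cont (r := r) (a := w) (b := t)
      (G := fun σ => -((1 - D 0 σ (ξ2 σ)) - (1 - D 0 σ (ξ1 σ)))) hw.2 R.sys.rmono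
      (fun z hz => ?_) ?_
    · rw [h1.fin, h2.fin] at key
      linarith [R.sys.W_pos t hx1]
    · have hz' : z ∈ Ico 0 t := ⟨hw.1.trans hz.1, hz.2⟩
      refine ⟨_, _, le_of_eq ?_, ?_,
        ((R.sys.rexpW h2 hx2 htT hz').sub (R.sys.rexpW h1 hx1 htT hz')).neg⟩
      · ring
      · have := R.sys.char_order hx1 hx h1 h2 (s := z) ⟨hz'.1, hz'.2.le⟩
        have := Real.exp_le_exp.mpr (show -ξ2 z ≤ -ξ1 z by linarith)
        linarith
    · exact (((continuousOn_const.sub (R.D_char_cont 0 htT hx2 h2)).sub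
        (continuousOn_const.sub (R.D_char_cont 0 htT hx1 h1))).neg).mono (Icc_subset_Icc hw.1 le_rfl)
  set B := 1 - D 0 t x2 with hB
  have key := mono_of_right_deriv (a := s) (b := t) (G := fun w => -((ξ2 w - ξ1 w) + B * w)) hs.2
    (((h2.cont.sub h1.cont).mono (Icc_subset_Icc hs.1 le_rfl)).add (by fun_prop)).neg
    (fun w hw => (((h2.der w ⟨hs.1.trans hw.1, hw.2⟩).sub (h1.der w ⟨hs.1.trans hw.1, hw.2⟩)).add
      (((hasDerivWithinAt_id w (Ici w))).const_mul B)).neg) (fun w hw => ?_)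
  · simp only [h1.fin, h2.fin] at key
    linarith
  · have := hW w ⟨hs.1.trans hw.1, hw.2.le⟩
    linarith

lemma char_ge (R : Reg2 T L D r c C p q) {t x : ℝ} {ξ : ℝ → ℝ} (htT : t ≤ T)
    (hx : 0 < x) (hxL : t + x ≤ L) (hch : IsChar D t x ξ) {s : ℝ} (hs : s ∈ Icc 0 t) :
    x + Real.exp (-L) * c / 2 * (t - s) ^ 2 ≤ ξ s := by
  set κ := Real.exp (-L) * c / 2 with hκ
  have key := mono_of_right_deriv (a := s) (b := t) (G := fun w => ξ w - κ * (t - w) ^ 2)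
    (G' := fun w => -(1 - D 0 w (ξ w)) + 2 * κ * (t - w)) hs.2
    ((hch.cont.mono (Icc_subset_Icc hs.1 le_rfl)).sub (by fun_prop))
    (fun w hw => by
      have e : HasDerivAt (fun w => κ * (t - w) ^ 2) (-(2 * κ * (t - w))) w := by
        have := ((((hasDerivAt_id w).const_sub t).fun_pow 2).const_mul κ)
        refine this.congr_deriv ?_
        simp; ring
      refine ((hch.der w ⟨hs.1.trans hw.1, hw.2⟩).fun_sub e.hasDerivWithinAt).congr_deriv ?_
      ring) (fun w hw => ?_)
  · simp only [hch.fin] at key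
    linarith
  · have hw' : w ∈ Icc 0 t := ⟨hs.1.trans hw.1, hw.2.le⟩
    have e1 := R.char_W_ge htT hx hxL hch hw'
    have e2 := R.r_ge hw'.1 hw'.2 htT
    have e3 := mul_le_mul_of_nonneg_left e2 (Real.exp_pos (-L)).le
    have e4 := R.sys.W_pos t hx
    have e5 : 2 * κ * (t - w) = Real.exp (-L) * (c * (t - w)) := by rw [hκ]; ring
    linarith

lemma char_sqrt (R : Reg2 T L D r c C p q) : ∃ M, 0 ≤ M ∧ ∀ t x1 x2 ξ1 ξ2, t ≤ T → 0 < x1 →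
    x1 < x2 → t + x2 ≤ L → IsChar D t x1 ξ1 → IsChar D t x2 ξ2 → ∀ s ∈ Icc 0 t,
    Real.sqrt (ξ2 s) - Real.sqrt (ξ1 s) ≤ M * Real.sqrt x2 := by
  set κ := Real.exp (-L) * c / 2 with hκ
  have hc := R.c0
  have hC := R.C0
  have hκ0 : 0 < κ := by rw [hκ]; positivity
  refine ⟨1 + Real.sqrt (2 * C) / Real.sqrt κ, by positivity, ?_⟩
  intro t x1 x2 ξ1 ξ2 htT hx1 hx hxL h1 h2 s hs
  have hx2 := hx1.trans hx
  have ht : t ∈ Icc 0 T := ⟨hs.1.trans hs.2, htT⟩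
  have ho := R.sys.char_order hx1 hx h1 h2 hs
  have hp1 := Sys.char_pos h1 hx1 hs
  have hp2 := Sys.char_pos h2 hx2 hs
  have hd := R.char_diff htT hx1 hx h1 h2 hs
  have hg := R.char_ge htT hx2 hxL h2 hs
  rw [← hκ] at hg
  have hW := R.W_le ht hx2 hxL
  have hts : 0 ≤ t - s := sub_nonneg.mpr hs.2
  rw [Real.sqrt_mul (by positivity)] at hW
  have hsq2 := Real.sq_sqrt hx2.le
  have hsx := Real.sqrt_pos.mpr hx2
  have hsξ := Real.sqrt_pos.mpr hp2
  have hsκ := Real.sqrt_pos.mpr hκ0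
  have a1 : Real.sqrt x2 ≤ Real.sqrt (ξ2 s) := Real.sqrt_le_sqrt (h2.ge s hs)
  have a2 : Real.sqrt κ * (t - s) ≤ Real.sqrt (ξ2 s) := by
    rw [← Real.sqrt_sq hts, ← Real.sqrt_mul hκ0.le]
    exact Real.sqrt_le_sqrt (by linarith)
  have a3 : (Real.sqrt (ξ2 s) - Real.sqrt (ξ1 s)) * Real.sqrt (ξ2 s) ≤ ξ2 s - ξ1 s := by
    have e1 := Real.sq_sqrt hp2.le
    have e2 := Real.sq_sqrt hp1.le
    have e3 := Real.sqrt_le_sqrt ho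
    have e4 := Real.sqrt_nonneg (ξ1 s)
    nlinarith
  have a4 : (t - s) ≤ Real.sqrt (ξ2 s) / Real.sqrt κ := by
    rw [le_div_iff₀ hsκ]; linarith
  have a5 : (t - s) * (1 - D 0 t x2) ≤
      (Real.sqrt (ξ2 s) / Real.sqrt κ) * (Real.sqrt (2 * C) * Real.sqrt x2) :=
    mul_le_mul a4 hW (R.sys.W_pos t hx2).le (by positivity)
  have a6 : x2 ≤ Real.sqrt x2 * Real.sqrt (ξ2 s) := by nlinarith
  have a7 : (Real.sqrt (ξ2 s) - Real.sqrt (ξ1 s)) * Real.sqrt (ξ2 s) ≤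
      ((1 + Real.sqrt (2 * C) / Real.sqrt κ) * Real.sqrt x2) * Real.sqrt (ξ2 s) := by
    have : ((1 + Real.sqrt (2 * C) / Real.sqrt κ) * Real.sqrt x2) * Real.sqrt (ξ2 s)
      = Real.sqrt x2 * Real.sqrt (ξ2 s) +
        (Real.sqrt (ξ2 s) / Real.sqrt κ) * (Real.sqrt (2 * C) * Real.sqrt x2) := by ring
    rw [this]; linarith
  exact le_of_mul_le_mul_right a7 hsξ

end Reg2

namespace Reg2

variable {T L : ℝ} {D : ℕ → ℝ → ℝ → ℝ} {r : ℝ → ℝ} {c C p q : ℝ}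

lemma g_der (R : Reg2 T L D r c C p q) (t : ℝ) {y : ℝ} (hy : 0 < y) :
    HasDerivAt (fun z => Real.exp (-z) * (3 / D 1 t z - 1 / D 2 t z))
      (Real.exp (-y) * (-(3 / D 1 t y - 1 / D 2 t y) + (3 * D 2 t y / D 1 t y ^ 2
        - D 3 t y / D 2 t y ^ 2))) y := by
  have hP := R.sys.pos 1 t y hy
  have hQ := R.sys.pos 2 t y hy
  have h1 := (R.sys.der 1 t y hy).fun_inv hP.ne'
  have h2 := (R.sys.der 2 t y hy).fun_inv hQ.ne'
  have h3 : HasDerivAt (fun z : ℝ => Real.exp (-z)) (-Real.exp (-y)) y := by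
    have := (hasDerivAt_neg y).exp
    refine this.congr_deriv ?_
    ring
  have h4 := h3.fun_mul ((h1.const_mul 3).fun_sub h2)
  have h5 : (fun z => Real.exp (-z) * (3 / D 1 t z - 1 / D 2 t z)) =
      fun z => Real.exp (-z) * (3 * (D 1 t z)⁻¹ - (D 2 t z)⁻¹) := by
    funext z; rw [div_eq_mul_inv, one_div]
  rw [h5]
  refine h4.congr_deriv ?_
  norm_num
  ring

lemma P_mul_sqrt (R : Reg2 T L D r c C p q) {t y : ℝ} (ht : t ∈ Icc 0 T) (hy : 0 < y)
    (hyL : t + y ≤ L) : D 1 t y * Real.sqrt y ≤ Real.sqrt C := by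
  have h1 := R.P_sq_le ht hy hyL
  have hC := R.C0
  apply Real.le_sqrt_of_sq_le
  rw [mul_pow, Real.sq_sqrt hy.le]
  rw [le_div_iff₀ (by positivity)] at h1
  nlinarith

lemma Z_bd (R : Reg2 T L D r c C p q) {t y : ℝ} (ht : t ∈ Icc 0 T) (hy : 0 < y)
    (hyL : t + y ≤ L) : D 3 t y / D 2 t y ^ 2 * Real.sqrt y ≤
      16 * Real.sqrt 2 ^ 3 * Real.sqrt C ^ 3 * C ^ 2 / c ^ 4 * L := by
  have hC := R.C0
  have hc := R.c0
  have hy2 : 0 < y / 2 := by positivity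
  have hyL2 : t + y / 2 ≤ L := by linarith
  have hP := R.sys.pos 1 t y hy
  have hQ := R.sys.pos 2 t y hy
  have hZ := R.sys.pos 3 t y hy
  have hP2 := R.sys.pos 1 t _ hy2
  have hQ2 := R.sys.pos 2 t _ hy2
  set σ := Real.sqrt y with hσ
  have hσ0 : 0 < σ := Real.sqrt_pos.mpr hy
  have hσy : σ ^ 2 = y := Real.sq_sqrt hy.le
  have a1 := R.P_mul_sqrt ht hy2 hyL2
  have a2 : Real.sqrt (y / 2) = σ / Real.sqrt 2 := Real.sqrt_div hy.le 2
  rw [a2] at a1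
  have h2 : 0 < Real.sqrt 2 := by positivity
  have a3 : D 1 t (y/2) * σ ≤ Real.sqrt 2 * Real.sqrt C := by
    have : D 1 t (y / 2) * (σ / Real.sqrt 2) = (D 1 t (y/2) * σ) / Real.sqrt 2 := by ring
    rw [this, div_le_iff₀ h2] at a1
    linarith
  have a4 := pow_le_pow_left₀ (by positivity) a3 3
  have a5 := R.Ec t ht _ hy2 hyL2
  rw [le_div_iff₀ hQ2] at a5
  have a6 := R.sys.xZ t y hy
  -- `Z σ^5` bound
  have a7 : c * (D 3 t y * σ ^ 5) ≤ 2 * (Real.sqrt 2 * Real.sqrt C) ^ 3 := by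
    have e1 : D 3 t y * σ ^ 5 = y * D 3 t y * σ ^ 3 := by rw [← hσy]; ring
    have e2 : y * D 3 t y * σ ^ 3 ≤ 2 * D 2 t (y/2) * σ ^ 3 :=
      mul_le_mul_of_nonneg_right a6 (by positivity)
    have e3 : c * D 2 t (y/2) * σ ^ 3 ≤ D 1 t (y/2) ^ 3 * σ ^ 3 :=
      mul_le_mul_of_nonneg_right a5 (by positivity)
    rw [e1]
    have e4 := mul_le_mul_of_nonneg_left e2 hc.le
    rw [mul_pow] at a4
    nlinarith
  have b1 := R.EC t ht y hy hyL
  rw [div_le_iff₀ hQ] at b1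
  have b2 := R.P_sq_ge ht hy hyL
  rw [div_le_iff₀ (by positivity)] at b2
  have b3 : (c / 2) ^ 3 ≤ (D 1 t y ^ 2 * σ ^ 2) ^ 3 :=
    pow_le_pow_left₀ (by positivity) (by rw [hσy]; linarith) 3
  have b4 : (D 1 t y ^ 3) ^ 2 ≤ (C * D 2 t y) ^ 2 := pow_le_pow_left₀ (by positivity) b1 2
  have b5 : c ^ 3 ≤ 8 * C ^ 2 * (D 2 t y ^ 2 * σ ^ 6) := by
    have := mul_le_mul_of_nonneg_right b4 (show 0 ≤ σ ^ 6 by positivity)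
    nlinarith
  have hyL' : σ ^ 2 ≤ L := by rw [hσy]; linarith [ht.1]
  have hL : 0 < L := R.T0.trans R.TL
  rw [div_mul_eq_mul_div, div_le_iff₀ (by positivity)]
  have c1 : c ^ 4 * (D 3 t y * σ * σ ^ 6) ≤
      16 * Real.sqrt 2 ^ 3 * Real.sqrt C ^ 3 * C ^ 2 * L * D 2 t y ^ 2 * σ ^ 6 := by
    calc c ^ 4 * (D 3 t y * σ * σ ^ 6) = c ^ 3 * (c * (D 3 t y * σ ^ 5)) * σ ^ 2 := by ring
      _ ≤ (8 * C ^ 2 * (D 2 t y ^ 2 * σ ^ 6)) * (2 * (Real.sqrt 2 * Real.sqrt C) ^ 3) * L := by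
          refine mul_le_mul (mul_le_mul b5 a7 (by positivity) (by positivity)) hyL' (by positivity)
            (by positivity)
      _ = _ := by ring
  have c2 : c ^ 4 * (D 3 t y * σ) ≤
      16 * Real.sqrt 2 ^ 3 * Real.sqrt C ^ 3 * C ^ 2 * L * D 2 t y ^ 2 :=
    le_of_mul_le_mul_right (by linarith) (show 0 < σ ^ 6 by positivity)
  have c3 : 16 * Real.sqrt 2 ^ 3 * Real.sqrt C ^ 3 * C ^ 2 / c ^ 4 * L * D 2 t y ^ 2
    = (16 * Real.sqrt 2 ^ 3 * Real.sqrt C ^ 3 * C ^ 2 * L * D 2 t y ^ 2) / c ^ 4 := by ring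
  rw [c3, le_div_iff₀ (by positivity)]
  linarith

lemma g_lip (R : Reg2 T L D r c C p q) : ∃ M, 0 ≤ M ∧ ∀ t ∈ Icc 0 T, ∀ y1 y2, 0 < y1 → y1 ≤ y2 →
    t + y2 ≤ L → |Real.exp (-y2) * (3 / D 1 t y2 - 1 / D 2 t y2) -
      Real.exp (-y1) * (3 / D 1 t y1 - 1 / D 2 t y1)| ≤ M * (Real.sqrt y2 - Real.sqrt y1) := by
  have hC := R.C0
  have hc := R.c0
  have hp := R.p0
  have hq := R.q0
  have hL : 0 < L := R.T0.trans R.TL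
  set K := 16 * Real.sqrt 2 ^ 3 * Real.sqrt C ^ 3 * C ^ 2 / c ^ 4 * L with hK
  have hK0 : 0 ≤ K := by rw [hK]; positivity
  refine ⟨2 * ((3 / p + 1 / q) * Real.sqrt L + 3 * Real.sqrt C / c + K), by positivity, ?_⟩
  intro t ht y1 y2 hy1 hyy hyL
  refine sqrt_mvt hy1 hyy (fun y hy => R.g_der t (hy1.trans_le hy.1)) (fun y hy => ?_)
  have hy0 : 0 < y := hy1.trans_le hy.1
  have hyL' : t + y ≤ L := by linarith [hy.2]
  have hP := R.sys.pos 1 t y hy0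
  have hQ := R.sys.pos 2 t y hy0
  have hZ := R.sys.pos 3 t y hy0
  have hσ0 : 0 < Real.sqrt y := Real.sqrt_pos.mpr hy0
  have hσL : Real.sqrt y ≤ Real.sqrt L := Real.sqrt_le_sqrt (by linarith [ht.1])
  have z := R.Z_bd ht hy0 hyL'
  rw [← hK] at z
  have a1 : 3 / D 1 t y ≤ 3 / p := div_le_div_of_nonneg_left (by norm_num) hp (R.Pp t ht y hy0 hyL')
  have a2 : 1 / D 2 t y ≤ 1 / q := div_le_div_of_nonneg_left (by norm_num) hq (R.Qq t ht y hy0 hyL')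
  have a3 : 3 * D 2 t y / D 1 t y ^ 2 * Real.sqrt y ≤ 3 * Real.sqrt C / c := by
    have e1 := R.Ec t ht y hy0 hyL'
    rw [le_div_iff₀ hQ] at e1
    have e2 := R.P_mul_sqrt ht hy0 hyL'
    rw [div_mul_eq_mul_div, div_le_div_iff₀ (by positivity) hc]
    have e3 : 3 * (c * D 2 t y) * Real.sqrt y ≤ 3 * D 1 t y ^ 3 * Real.sqrt y :=
      mul_le_mul_of_nonneg_right (by linarith) hσ0.le
    have e4 := mul_le_mul_of_nonneg_right e2 (show 0 ≤ 3 * D 1 t y ^ 2 by positivity)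
    nlinarith
  have hexp : Real.exp (-y) ≤ 1 := Real.exp_le_one_iff.mpr (by linarith)
  have p1 : 0 < 3 / D 1 t y := by positivity
  have p2 : 0 < 1 / D 2 t y := by positivity
  have p3 : 0 < 3 * D 2 t y / D 1 t y ^ 2 := by positivity
  have p4 : 0 < D 3 t y / D 2 t y ^ 2 := by positivity
  rw [abs_mul, abs_of_pos (Real.exp_pos _), le_div_iff₀ (by positivity)]
  have b1 : |-(3 / D 1 t y - 1 / D 2 t y) + (3 * D 2 t y / D 1 t y ^ 2 - D 3 t y / D 2 t y ^ 2)|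
      ≤ 3 / p + 1 / q + 3 * D 2 t y / D 1 t y ^ 2 + D 3 t y / D 2 t y ^ 2 := by
    rw [abs_le]; constructor <;> linarith
  have b2 : Real.exp (-y) * |-(3 / D 1 t y - 1 / D 2 t y) + (3 * D 2 t y / D 1 t y ^ 2 -
      D 3 t y / D 2 t y ^ 2)| ≤ 3 / p + 1 / q + 3 * D 2 t y / D 1 t y ^ 2 + D 3 t y / D 2 t y ^ 2 :=
    (mul_le_of_le_one_left (abs_nonneg _) hexp).trans b1
  have b3 := mul_le_mul_of_nonneg_right b2 (show 0 ≤ 2 * Real.sqrt y by positivity)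
  have b4 := mul_le_mul_of_nonneg_left hσL (show 0 ≤ 3 / p + 1 / q by positivity)
  nlinarith

lemma E_holder (R : Reg2 T L D r c C p q) {M0 : ℝ} (hM0 : 0 ≤ M0)
    (hE0 : ∀ y1 y2, 0 < y1 → y1 ≤ y2 → y2 ≤ L →
      |Real.log (D 1 0 y2 ^ 3 / D 2 0 y2) - Real.log (D 1 0 y1 ^ 3 / D 2 0 y1)| ≤
        M0 * (Real.sqrt y2 - Real.sqrt y1)) :
    ∃ M, 0 ≤ M ∧ ∀ t ∈ Icc 0 T, ∀ x1 x2, 0 < x1 → x1 ≤ x2 → t + x2 ≤ L →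
      |D 1 t x2 ^ 3 / D 2 t x2 - D 1 t x1 ^ 3 / D 2 t x1| ≤ M * Real.sqrt x2 := by
  obtain ⟨M1, hM1, hg⟩ := R.g_lip
  obtain ⟨M2, hM2, hsq⟩ := R.char_sqrt
  have hC := R.C0
  have hrT : 0 ≤ r T := by rw [← R.sys.r0]; exact R.sys.rmono R.T0.le
  refine ⟨C * (M0 * M2 + M1 * M2 * r T), by positivity, ?_⟩
  intro t ht x1 x2 hx1 hx12 hxL
  rcases hx12.eq_or_lt with rfl | hx
  · rw [sub_self, abs_zero]; positivity
  have hx2 := hx1.trans hx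
  obtain ⟨ξ1, h1⟩ := R.sys.exists_char ht.1 ht.2 hx1
  obtain ⟨ξ2, h2⟩ := R.sys.exists_char ht.1 ht.2 hx2
  set B := M1 * (M2 * Real.sqrt x2) with hB
  have hB0 : 0 ≤ B := by positivity
  have hgd : ∀ s ∈ Icc 0 t, |Real.exp (-ξ2 s) * (3 / D 1 s (ξ2 s) - 1 / D 2 s (ξ2 s)) -
      Real.exp (-ξ1 s) * (3 / D 1 s (ξ1 s) - 1 / D 2 s (ξ1 s))| ≤ B := by
    intro s hs
    refine (hg s ⟨hs.1, hs.2.trans ht.2⟩ (ξ1 s) (ξ2 s) (Sys.char_pos h1 hx1 hs)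
      (R.sys.char_order hx1 hx h1 h2 hs) ?_).trans
      (mul_le_mul_of_nonneg_left (hsq t x1 x2 ξ1 ξ2 ht.2 hx1 hx hxL h1 h2 s hs) hM1)
    have := h2.le s hs
    linarith
  have hlogc : ∀ x ξ, 0 < x → IsChar D t x ξ → ContinuousOn
      (fun σ => 3 * Real.log (D 1 σ (ξ σ)) - Real.log (D 2 σ (ξ σ))) (Icc 0 t) := by
    intro x ξ hx hch
    refine (continuousOn_const.mul ((R.D_char_cont 1 ht.2 hx hch).log fun s hs => ?_)).sub
      ((R.D_char_cont 2 ht.2 hx hch).log fun s hs => ?_)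
    · exact (R.sys.pos 1 s _ (Sys.char_pos hch hx hs)).ne'
    · exact (R.sys.pos 2 s _ (Sys.char_pos hch hx hs)).ne'
  have k1 := mono_lemma_cont (r := r) (a := 0) (b := t)
    (G := fun σ => ((3 * Real.log (D 1 σ (ξ2 σ)) - Real.log (D 2 σ (ξ2 σ))) -
      (3 * Real.log (D 1 σ (ξ1 σ)) - Real.log (D 2 σ (ξ1 σ)))) - B * r σ) ht.1 R.sys.rmono
    (fun s hs => ⟨_, _, le_of_eq (by ring), by
        have := (abs_le.mp (hgd s ⟨hs.1, hs.2.le⟩)).2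
        linarith,
      ((R.sys.rexpF h2 hx2 ht.2 hs).sub (R.sys.rexpF h1 hx1 ht.2 hs)).sub
        (RExp.self.const_mul B)⟩)
    (((hlogc _ _ hx2 h2).sub (hlogc _ _ hx1 h1)).sub
      (continuousOn_const.mul (R.r_char_cont ht.2)))
  have k2 := mono_lemma_cont (r := r) (a := 0) (b := t)
    (G := fun σ => ((3 * Real.log (D 1 σ (ξ1 σ)) - Real.log (D 2 σ (ξ1 σ))) -
      (3 * Real.log (D 1 σ (ξ2 σ)) - Real.log (D 2 σ (ξ2 σ)))) - B * r σ) ht.1 R.sys.rmono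
    (fun s hs => ⟨_, _, le_of_eq (by ring), by
        have := (abs_le.mp (hgd s ⟨hs.1, hs.2.le⟩)).1
        linarith,
      ((R.sys.rexpF h1 hx1 ht.2 hs).sub (R.sys.rexpF h2 hx2 ht.2 hs)).sub
        (RExp.self.const_mul B)⟩)
    (((hlogc _ _ hx1 h1).sub (hlogc _ _ hx2 h2)).sub
      (continuousOn_const.mul (R.r_char_cont ht.2)))
  have h0 : (0:ℝ) ∈ Icc 0 t := ⟨le_rfl, ht.1⟩
  have q1 := Sys.char_pos h1 hx1 h0
  have q2 := Sys.char_pos h2 hx2 h0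
  simp only [h1.fin, h2.fin] at k1 k2
  rw [← R.sys.logE q1, ← R.sys.logE q2, ← R.sys.logE hx1, ← R.sys.logE hx2, R.sys.r0] at k1 k2
  have l0 := hE0 (ξ1 0) (ξ2 0) q1 (R.sys.char_order hx1 hx h1 h2 h0)
    (by have := h2.le 0 h0; linarith)
  have l1 := l0.trans (mul_le_mul_of_nonneg_left
    (hsq t x1 x2 ξ1 ξ2 ht.2 hx1 hx hxL h1 h2 0 h0) hM0)
  obtain ⟨l2, l3⟩ := abs_le.mp l1
  have hr : B * r t ≤ B * r T := mul_le_mul_of_nonneg_left (R.sys.rmono ht.2) hB0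
  have fin : |Real.log (D 1 t x2 ^ 3 / D 2 t x2) - Real.log (D 1 t x1 ^ 3 / D 2 t x1)| ≤
      M0 * (M2 * Real.sqrt x2) + B * r T := by
    rw [abs_le]; constructor <;> linarith
  have hxL1 : t + x1 ≤ L := by linarith
  refine (sub_le_of_log (R.sys.Epos hx1) (R.EC t ht x1 hx1 hxL1) (R.sys.Epos hx2)
    (R.EC t ht x2 hx2 hxL)).trans ((mul_le_mul_of_nonneg_left fin hC.le).trans (le_of_eq ?_))
  rw [hB]; ring

end Reg2

structure Reg3 (T L : ℝ) (D : ℕ → ℝ → ℝ → ℝ) (r : ℝ → ℝ) (c C p q : ℝ) (φ : ℝ → ℝ) (M : ℝ) : Prop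
    extends Reg2 T L D r c C p q where
  M0 : 0 ≤ M
  φc : ∀ t ∈ Icc 0 T, c ≤ φ t
  φC : ∀ t ∈ Icc 0 T, φ t ≤ C
  hφ : ∀ t ∈ Icc 0 T, ∀ x, 0 < x → t + x ≤ L → |D 1 t x ^ 3 / D 2 t x - φ t| ≤ M * Real.sqrt x

lemma Reg2.exists_phi {T L : ℝ} {D : ℕ → ℝ → ℝ → ℝ} {r : ℝ → ℝ} {c C p q : ℝ}
    (R : Reg2 T L D r c C p q) {M0 : ℝ} (hM0 : 0 ≤ M0)
    (hE0 : ∀ y1 y2, 0 < y1 → y1 ≤ y2 → y2 ≤ L →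
      |Real.log (D 1 0 y2 ^ 3 / D 2 0 y2) - Real.log (D 1 0 y1 ^ 3 / D 2 0 y1)| ≤
        M0 * (Real.sqrt y2 - Real.sqrt y1)) : ∃ φ M, Reg3 T L D r c C p q φ M := by
  obtain ⟨M, hM, hh⟩ := R.E_holder hM0 hE0
  set S : ℝ → Set ℝ := fun t =>
    (fun x => D 1 t x ^ 3 / D 2 t x - M * Real.sqrt x) '' (Ioc 0 (L - t)) with hS
  have hbd : ∀ t ∈ Icc 0 T, ∀ a ∈ S t, a ≤ C := by
    rintro t ht a ⟨x, hx, rfl⟩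
    have := R.EC t ht x hx.1 (by linarith [hx.2])
    have h2 : 0 ≤ M * Real.sqrt x := by positivity
    simp only
    linarith
  have hne : ∀ t ∈ Icc 0 T, (S t).Nonempty := by
    intro t ht
    have := R.TL
    exact ⟨_, L - t, ⟨by linarith [ht.2], le_rfl⟩, rfl⟩
  have hφ : ∀ t ∈ Icc 0 T, ∀ x, 0 < x → t + x ≤ L →
      |D 1 t x ^ 3 / D 2 t x - sSup (S t)| ≤ M * Real.sqrt x := by
    intro t ht x hx hxL
    have h1 : D 1 t x ^ 3 / D 2 t x - M * Real.sqrt x ≤ sSup (S t) :=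
      le_csSup ⟨C, fun a ha => hbd t ht a ha⟩ ⟨x, ⟨hx, by linarith⟩, rfl⟩
    have h2 : sSup (S t) ≤ D 1 t x ^ 3 / D 2 t x + M * Real.sqrt x := by
      refine csSup_le (hne t ht) ?_
      rintro a ⟨z, hz, rfl⟩
      simp only
      have e1 : 0 ≤ M * Real.sqrt x := by positivity
      have e2 : 0 ≤ M * Real.sqrt z := by positivity
      rcases le_total x z with hle | hle
      · have := (abs_le.mp (hh t ht x z hx hle (by linarith [hz.2]))).2
        linarith
      · have := (abs_le.mp (hh t ht z x hz.1 hle hxL)).1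
        linarith
    rw [abs_le]; constructor <;> linarith
  refine ⟨fun t => sSup (S t), M, ⟨R, hM, ?_, fun t ht => csSup_le (hne t ht) (hbd t ht), hφ⟩⟩
  intro t ht
  have hl : Tendsto (fun x => sSup (S t) + M * Real.sqrt x) (𝓝[>] 0)
      (𝓝 (sSup (S t) + M * Real.sqrt 0)) := by
    have : Continuous (fun x => sSup (S t) + M * Real.sqrt x) := by fun_prop
    exact (this.tendsto 0).mono_left nhdsWithin_le_nhds
  rw [Real.sqrt_zero, mul_zero, add_zero] at hl
  refine ge_of_tendsto hl ?_
  filter_upwards [Ioc_mem_nhdsGT (sub_pos.mpr R.TL)] with x hx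
  have e1 : t + x ≤ L := by linarith [hx.2, ht.2]
  have := (abs_le.mp (hφ t ht x hx.1 e1)).2
  linarith [R.Ec t ht x hx.1 e1]

namespace Reg3

variable {T L : ℝ} {D : ℕ → ℝ → ℝ → ℝ} {r : ℝ → ℝ} {c C p q : ℝ} {φ : ℝ → ℝ} {M : ℝ}

lemma inv_diff (R : Reg3 T L D r c C p q φ M) {t x : ℝ} (ht : t ∈ Icc 0 T) (hx : 0 < x)
    (hxL : t + x ≤ L) : |(D 1 t x ^ 3 / D 2 t x)⁻¹ - (φ t)⁻¹| ≤ M / c ^ 2 * Real.sqrt x := by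
  have hc := R.c0
  have h1 := R.hφ t ht x hx hxL
  have h2 := R.φc t ht
  have h3 := R.Ec t ht x hx hxL
  set E := D 1 t x ^ 3 / D 2 t x
  have hE : 0 < E := hc.trans_le h3
  have hφ : 0 < φ t := hc.trans_le h2
  have e : E⁻¹ - (φ t)⁻¹ = -(E - φ t) / (E * φ t) := by field_simp; ring
  rw [e, abs_div, abs_neg, abs_of_pos (mul_pos hE hφ), div_le_iff₀ (mul_pos hE hφ)]
  have e2 : c ^ 2 ≤ E * φ t := by rw [sq]; exact mul_le_mul h3 h2 hc.le hE.le
  have e3 : M / c ^ 2 * Real.sqrt x * c ^ 2 = M * Real.sqrt x := by field_simp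
  have hM := R.M0
  have e4 := mul_le_mul_of_nonneg_left e2 (show 0 ≤ M / c ^ 2 * Real.sqrt x by positivity)
  linarith

lemma invP_asymp (R : Reg3 T L D r c C p q φ M) {t y : ℝ} (ht : t ∈ Icc 0 T) (hy : 0 < y)
    (hyL : t + y ≤ L) : |(D 1 t y ^ 2)⁻¹ - 2 * y / φ t| ≤ 2 * M / c ^ 2 * Real.sqrt y * y := by
  have hM := R.M0
  have hc := R.c0
  set K := 2 * M / c ^ 2 * Real.sqrt y with hK
  have hm : ∀ z ∈ Ioc 0 y, |((D 1 t y ^ 2)⁻¹ - 2 * y / φ t) - ((D 1 t z ^ 2)⁻¹ - 2 * z / φ t)| ≤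
      K * (y - z) := by
    intro z hz
    have := (convex_Icc z y).norm_image_sub_le_of_norm_hasDerivWithin_le
      (f := fun w => (D 1 t w ^ 2)⁻¹ - 2 * w / φ t)
      (f' := fun w => 2 / (D 1 t w ^ 3 / D 2 t w) - 2 / φ t) (C := K) (x := z) (y := y)
      (fun w hw => by
        have h1 : HasDerivAt (fun w => 2 * w / φ t) (2 / φ t) w := by
          simpa using ((hasDerivAt_id w).const_mul 2).div_const (φ t)
        exact ((R.invP_der t (hz.1.trans_le hw.1)).fun_sub h1).hasDerivWithinAt)
      (fun w hw => by
        have hw0 : 0 < w := hz.1.trans_le hw.1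
        have h1 := R.inv_diff ht hw0 (by linarith [hw.2])
        have h2 : 2 / (D 1 t w ^ 3 / D 2 t w) - 2 / φ t =
          2 * ((D 1 t w ^ 3 / D 2 t w)⁻¹ - (φ t)⁻¹) := by
          rw [div_eq_mul_inv 2 (D 1 t w ^ 3 / D 2 t w), div_eq_mul_inv 2 (φ t)]; ring
        rw [h2, Real.norm_eq_abs, abs_mul, abs_of_pos (by norm_num : (0:ℝ) < 2)]
        have h3 : M / c ^ 2 * Real.sqrt w ≤ M / c ^ 2 * Real.sqrt y :=
          mul_le_mul_of_nonneg_left (Real.sqrt_le_sqrt hw.2) (by positivity)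
        have h4 : K = 2 * (M / c ^ 2 * Real.sqrt y) := by rw [hK]; ring
        rw [h4]; linarith)
      ⟨le_rfl, hz.2⟩ ⟨hz.2, le_rfl⟩
    rw [Real.norm_eq_abs, Real.norm_eq_abs, abs_of_nonneg (sub_nonneg.mpr hz.2)] at this
    exact this
  have hl : Tendsto (fun z => |((D 1 t y ^ 2)⁻¹ - 2 * y / φ t) - ((D 1 t z ^ 2)⁻¹ - 2 * z / φ t)|)
      (𝓝[>] 0) (𝓝 |((D 1 t y ^ 2)⁻¹ - 2 * y / φ t) - (0 - 2 * 0 / φ t)|) := by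
    have h1 : Continuous (fun z => 2 * z / φ t) := by fun_prop
    exact (tendsto_const_nhds.sub ((R.invP_lim ht).sub
      ((h1.tendsto 0).mono_left nhdsWithin_le_nhds))).abs
  have h0 : ((D 1 t y ^ 2)⁻¹ - 2 * y / φ t) - (0 - 2 * 0 / φ t) = (D 1 t y ^ 2)⁻¹ - 2 * y / φ t := by
    simp
  rw [h0] at hl
  refine le_of_tendsto hl ?_
  filter_upwards [Ioc_mem_nhdsGT hy] with z hz
  refine (hm z hz).trans ?_
  have : 0 ≤ K := by rw [hK]; positivity
  exact mul_le_mul_of_nonneg_left (by linarith [hz.1]) this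

lemma a_sqrt (R : Reg3 T L D r c C p q φ M) {t y : ℝ} (ht : t ∈ Icc 0 T) (hy : 0 < y) :
    Real.sqrt (φ t / (2 * y)) * Real.sqrt y ≤ Real.sqrt C := by
  have hC := R.C0
  have hφ : 0 < φ t := R.c0.trans_le (R.φc t ht)
  rw [← Real.sqrt_mul (by positivity)]
  apply Real.sqrt_le_sqrt
  have : φ t / (2 * y) * y = φ t / 2 := by field_simp
  rw [this]; linarith [R.φC t ht]

lemma P_asymp (R : Reg3 T L D r c C p q φ M) : ∃ K, 0 ≤ K ∧ ∀ t ∈ Icc 0 T, ∀ y, 0 < y → t + y ≤ L →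
    |D 1 t y - Real.sqrt (φ t / (2 * y))| ≤ K := by
  have hM := R.M0
  have hc := R.c0
  have hC := R.C0
  refine ⟨2 * M / c ^ 2 * C * Real.sqrt C, by positivity, ?_⟩
  intro t ht y hy hyL
  have hφ : 0 < φ t := hc.trans_le (R.φc t ht)
  have h1 := R.invP_asymp ht hy hyL
  have hP := R.sys.pos 1 t y hy
  have ha1 := R.a_sqrt ht hy
  have hP1 := R.P_mul_sqrt ht hy hyL
  set a := Real.sqrt (φ t / (2 * y)) with ha
  have ha0 : 0 < a := Real.sqrt_pos.mpr (by positivity)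
  have haa : a ^ 2 = φ t / (2 * y) := Real.sq_sqrt (by positivity)
  have hai : 2 * y / φ t = (a ^ 2)⁻¹ := by rw [haa, inv_div]
  rw [hai] at h1
  set P := D 1 t y
  set σ := Real.sqrt y with hσ
  have hσ0 : 0 < σ := Real.sqrt_pos.mpr hy
  have hσy : σ ^ 2 = y := Real.sq_sqrt hy.le
  rw [← hσy] at h1
  have e1 : (P ^ 2)⁻¹ - (a ^ 2)⁻¹ = -(P - a) * (a + P) / (P ^ 2 * a ^ 2) := by
    field_simp; ring
  rw [e1, abs_div, abs_mul, abs_neg, abs_of_pos (show 0 < a + P by positivity),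
    abs_of_pos (show 0 < P ^ 2 * a ^ 2 by positivity), div_le_iff₀ (by positivity)] at h1
  have e2 : |P - a| * a ≤ |P - a| * (a + P) :=
    mul_le_mul_of_nonneg_left (by linarith) (abs_nonneg _)
  have e3 : |P - a| * a ≤ (2 * M / c ^ 2 * (P * σ) ^ 2 * (a * σ)) * a := by
    refine (e2.trans h1).trans (le_of_eq ?_); ring
  have e4 := le_of_mul_le_mul_right e3 ha0
  have e5 : (P * σ) ^ 2 ≤ C := by
    have := pow_le_pow_left₀ (by positivity) hP1 2
    rwa [Real.sq_sqrt hC.le] at this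
  refine e4.trans ?_
  refine mul_le_mul (mul_le_mul_of_nonneg_left e5 (by positivity)) ha1 (by positivity) (by positivity)

lemma W_asymp (R : Reg3 T L D r c C p q φ M) {K : ℝ}
    (hP : ∀ t ∈ Icc 0 T, ∀ y, 0 < y → t + y ≤ L → |D 1 t y - Real.sqrt (φ t / (2 * y))| ≤ K)
    {t y : ℝ} (ht : t ∈ Icc 0 T) (hy : 0 < y) (hyL : t + y ≤ L) :
    |(1 - D 0 t y) - Real.sqrt (2 * φ t * y)| ≤ K * y := by
  have hφ : 0 < φ t := R.c0.trans_le (R.φc t ht)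
  have hd : ∀ (k : ℝ), ∀ z ∈ Ioc 0 y, HasDerivAt (fun z => Real.sqrt (2 * φ t * z) + k * z)
      (Real.sqrt (φ t / (2 * z)) + k) z := by
    intro k z hz
    have h1 : HasDerivAt (fun z => k * z) k z := by simpa using (hasDerivAt_id z).const_mul k
    exact (hasDerivAt_sqrt_mul hφ hz.1).fun_add h1
  have hl : ∀ k : ℝ, Tendsto (fun z => Real.sqrt (2 * φ t * z) + k * z) (𝓝[>] 0) (𝓝 0) := by
    intro k
    have : Continuous (fun z => Real.sqrt (2 * φ t * z) + k * z) := by fun_prop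
    have h2 := this.tendsto 0
    simp only [mul_zero, Real.sqrt_zero, add_zero] at h2
    exact h2.mono_left nhdsWithin_le_nhds
  have u := R.sys.W_le_of (t := t) hy (hd K) (hl K) (fun z hz => by
    have := (abs_le.mp (hP t ht z hz.1 (by linarith [hz.2]))).2
    linarith)
  have l := R.sys.W_ge_of (t := t) hy (hd (-K)) (hl (-K)) (fun z hz => by
    have := (abs_le.mp (hP t ht z hz.1 (by linarith [hz.2]))).1
    linarith)
  rw [abs_le]; constructor <;> linarith

lemma Q_asymp (R : Reg3 T L D r c C p q φ M) {K : ℝ} (hK : 0 ≤ K)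
    (hP : ∀ t ∈ Icc 0 T, ∀ y, 0 < y → t + y ≤ L → |D 1 t y - Real.sqrt (φ t / (2 * y))| ≤ K)
    {t y : ℝ} (ht : t ∈ Icc 0 T) (hy : 0 < y) (hyL : t + y ≤ L) :
    |D 2 t y - Real.sqrt (φ t / (2 * y)) ^ 3 / φ t| ≤
      (3 * C * K / c + Real.sqrt C ^ 3 * M / c ^ 2) * y⁻¹ := by
  have hM := R.M0
  have hc := R.c0
  have hC := R.C0
  have hφ : 0 < φ t := hc.trans_le (R.φc t ht)
  have h1 := hP t ht y hy hyL
  have hP0 := R.sys.pos 1 t y hy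
  have hQ0 := R.sys.pos 2 t y hy
  have ha1 := R.a_sqrt ht hy
  have hP1 := R.P_mul_sqrt ht hy hyL
  have hi := R.inv_diff ht hy hyL
  have hEc := R.Ec t ht y hy hyL
  have ha0 : 0 < Real.sqrt (φ t / (2 * y)) := Real.sqrt_pos.mpr (by positivity)
  have hQE : D 2 t y = D 1 t y ^ 3 * (D 1 t y ^ 3 / D 2 t y)⁻¹ := by field_simp
  rw [hQE]
  set E := D 1 t y ^ 3 / D 2 t y
  set a := Real.sqrt (φ t / (2 * y)) with ha
  set P := D 1 t y
  set σ := Real.sqrt y with hσ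
  have hσ0 : 0 < σ := Real.sqrt_pos.mpr hy
  have hσy : σ ^ 2 = y := Real.sq_sqrt hy.le
  have hE0 : 0 < E := hc.trans_le hEc
  rw [← div_eq_mul_inv _ y, le_div_iff₀ hy]
  have e1 : P ^ 3 * E⁻¹ - a ^ 3 / φ t = (P - a) * (P ^ 2 + P * a + a ^ 2) * E⁻¹ +
      a ^ 3 * (E⁻¹ - (φ t)⁻¹) := by ring
  have e2 : |P ^ 3 * E⁻¹ - a ^ 3 / φ t| ≤ |P - a| * (P ^ 2 + P * a + a ^ 2) * E⁻¹ +
      a ^ 3 * |E⁻¹ - (φ t)⁻¹| := by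
    rw [e1]
    refine (abs_add_le _ _).trans (le_of_eq ?_)
    rw [abs_mul, abs_mul, abs_mul, abs_of_pos (show 0 < P ^ 2 + P * a + a ^ 2 by positivity),
      abs_of_pos (show 0 < E⁻¹ by positivity), abs_of_pos (show 0 < a ^ 3 by positivity)]
  have hs := Real.sq_sqrt hC.le
  have f1 : (P ^ 2 + P * a + a ^ 2) * y ≤ 3 * C := by
    have g1 := pow_le_pow_left₀ (by positivity) hP1 2
    have g2 := pow_le_pow_left₀ (by positivity) ha1 2
    have g3 := mul_le_mul hP1 ha1 (by positivity) (by positivity)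
    rw [← hσy]
    nlinarith
  have f2 : E⁻¹ ≤ c⁻¹ := inv_anti₀ hc hEc
  have f3 : (a * σ) ^ 3 ≤ Real.sqrt C ^ 3 := pow_le_pow_left₀ (by positivity) ha1 3
  have f4 : |P - a| * ((P ^ 2 + P * a + a ^ 2) * y) * E⁻¹ ≤ K * (3 * C) * c⁻¹ :=
    mul_le_mul (mul_le_mul h1 f1 (by positivity) hK) f2 (by positivity) (by positivity)
  have f5 : a ^ 3 * |E⁻¹ - (φ t)⁻¹| * y ≤ Real.sqrt C ^ 3 * M / c ^ 2 := by
    calc a ^ 3 * |E⁻¹ - (φ t)⁻¹| * y ≤ a ^ 3 * (M / c ^ 2 * σ) * y :=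
          mul_le_mul_of_nonneg_right (mul_le_mul_of_nonneg_left hi (by positivity)) hy.le
      _ = (a * σ) ^ 3 * (M / c ^ 2) := by rw [← hσy]; ring
      _ ≤ Real.sqrt C ^ 3 * (M / c ^ 2) := mul_le_mul_of_nonneg_right f3 (by positivity)
      _ = _ := by ring
  have f6 := mul_le_mul_of_nonneg_right e2 hy.le
  have f7 : K * (3 * C) * c⁻¹ = 3 * C * K / c := by ring
  nlinarith

lemma WP_asymp (R : Reg3 T L D r c C p q φ M) {K : ℝ} (hK : 0 ≤ K)
    (hP : ∀ t ∈ Icc 0 T, ∀ y, 0 < y → t + y ≤ L → |D 1 t y - Real.sqrt (φ t / (2 * y))| ≤ K)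
    {t y : ℝ} (ht : t ∈ Icc 0 T) (hy : 0 < y) (hyL : t + y ≤ L) :
    |(1 - D 0 t y) * D 1 t y - φ t| ≤ (K * Real.sqrt C + Real.sqrt (2 * C) * K) * Real.sqrt y := by
  have hc := R.c0
  have hC := R.C0
  have hφ : 0 < φ t := hc.trans_le (R.φc t ht)
  have h1 := hP t ht y hy hyL
  have h2 := R.W_asymp hP ht hy hyL
  have hP0 := R.sys.pos 1 t y hy
  have hP1 := R.P_mul_sqrt ht hy hyL
  have hwa : Real.sqrt (2 * φ t * y) * Real.sqrt (φ t / (2 * y)) = φ t := by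
    rw [← Real.sqrt_mul (by positivity)]
    rw [show 2 * φ t * y * (φ t / (2 * y)) = φ t ^ 2 by field_simp]
    exact Real.sqrt_sq hφ.le
  have hw : Real.sqrt (2 * φ t * y) ≤ Real.sqrt (2 * C) * Real.sqrt y := by
    rw [← Real.sqrt_mul (by positivity)]
    exact Real.sqrt_le_sqrt (mul_le_mul_of_nonneg_right (by linarith [R.φC t ht]) hy.le)
  have hw0 := Real.sqrt_nonneg (2 * φ t * y)
  set w := Real.sqrt (2 * φ t * y)
  set a := Real.sqrt (φ t / (2 * y))
  set P := D 1 t y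
  set W := 1 - D 0 t y
  have hσy : Real.sqrt y ^ 2 = y := Real.sq_sqrt hy.le
  have hσ0 : 0 < Real.sqrt y := Real.sqrt_pos.mpr hy
  set σ := Real.sqrt y
  have e1 : W * P - φ t = (W - w) * P + w * (P - a) := by rw [← hwa]; ring
  rw [e1]
  refine (abs_add_le _ _).trans ?_
  rw [abs_mul, abs_mul, abs_of_pos hP0, abs_of_nonneg hw0]
  have f1 : |W - w| * P ≤ K * Real.sqrt C * σ := by
    calc |W - w| * P ≤ K * y * P := mul_le_mul_of_nonneg_right h2 hP0.le
      _ = K * (P * σ) * σ := by rw [← hσy]; ring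
      _ ≤ _ := mul_le_mul_of_nonneg_right (mul_le_mul_of_nonneg_left hP1 hK) hσ0.le
  have f2 : w * |P - a| ≤ Real.sqrt (2 * C) * σ * K :=
    mul_le_mul hw h1 (abs_nonneg _) (by positivity)
  linarith

lemma phi_lip (R : Reg3 T L D r c C p q φ M) : ∃ K, 0 ≤ K ∧ ∀ s t, 0 ≤ s → s ≤ t → t ≤ T →
    |φ t - φ s| ≤ K * (t - s) := by
  have hc := R.c0
  have hC := R.C0
  have hp := R.p0
  have hq := R.q0
  have hM := R.M0
  refine ⟨2 * M * Real.sqrt (2 * C) + C * ((3 / p + 1 / q) * C), by positivity, ?_⟩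
  intro s t hs0 hst htT
  rcases hst.eq_or_lt with rfl | hlt
  · simp
  have hd : 0 < t - s := sub_pos.mpr hlt
  have hs : s ∈ Icc 0 t := ⟨hs0, hst⟩
  have hsT : s ∈ Icc 0 T := ⟨hs0, hst.trans htT⟩
  have ht : t ∈ Icc 0 T := ⟨hs0.trans hst, htT⟩
  have hr := R.r_lip hs0 hst htT
  have hr0 : 0 ≤ r t - r s := sub_nonneg.mpr (R.sys.rmono hst)
  obtain ⟨x, ξ, hx, hxL, hch, hξ⟩ := R.char_small (ρ := 2 * C * (t - s) ^ 2) hs htT (by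
    have h1 := mul_le_mul_of_nonneg_left hr hd.le
    have h2 : 0 < C * (t - s) ^ 2 := by positivity
    nlinarith)
  have hreg : ∀ u ∈ Icc 0 t, u + ξ u ≤ L := fun u hu => by linarith [hch.le u hu]
  have hpos := Sys.char_pos hch hx hs
  have k1 := R.sys.char_F_le hch hx htT hp
    (fun u hu => R.Pp u ⟨hu.1, hu.2.trans htT⟩ _ (Sys.char_pos hch hx hu) (hreg u hu)) hs0 hst le_rfl
  have k2 := R.sys.char_F_ge hch hx htT hq
    (fun u hu => R.Qq u ⟨hu.1, hu.2.trans htT⟩ _ (Sys.char_pos hch hx hu) (hreg u hu)) hs0 hst le_rfl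
  rw [hch.fin, ← R.sys.logE hx, ← R.sys.logE hpos] at k1 k2
  have z1 : 0 ≤ 3 / p * (r t - r s) := by positivity
  have z2 : 0 ≤ 1 / q * (r t - r s) := by positivity
  have k3 : |Real.log (D 1 t x ^ 3 / D 2 t x) - Real.log (D 1 s (ξ s) ^ 3 / D 2 s (ξ s))| ≤
      (3 / p + 1 / q) * (r t - r s) := by
    rw [abs_le]; constructor <;> linarith
  have k4 := sub_le_of_log (R.sys.Epos hpos) (R.EC s hsT _ hpos (hreg s hs)) (R.sys.Epos hx)
    (R.EC t ht x hx hxL)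
  have k5 := k4.trans (mul_le_mul_of_nonneg_left (k3.trans
    (mul_le_mul_of_nonneg_left hr (by positivity))) hC.le)
  have sq : Real.sqrt (ξ s) ≤ Real.sqrt (2 * C) * (t - s) := by
    rw [← Real.sqrt_sq hd.le, ← Real.sqrt_mul (by positivity)]
    exact Real.sqrt_le_sqrt hξ.le
  have sq2 : Real.sqrt x ≤ Real.sqrt (2 * C) * (t - s) :=
    (Real.sqrt_le_sqrt (hch.ge s hs)).trans sq
  have m1 := (R.hφ t ht x hx hxL).trans (mul_le_mul_of_nonneg_left sq2 hM)
  have m2 := (R.hφ s hsT _ hpos (hreg s hs)).trans (mul_le_mul_of_nonneg_left sq hM)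
  obtain ⟨a1, a2⟩ := abs_le.mp m1
  obtain ⟨b1, b2⟩ := abs_le.mp m2
  obtain ⟨c1, c2⟩ := abs_le.mp k5
  rw [abs_le]; constructor <;> linarith

lemma r_eq (R : Reg3 T L D r c C p q φ M) {t : ℝ} (ht : t ∈ Icc 0 T) :
    r t = ∫ s in (0:ℝ)..t, φ s := by
  obtain ⟨K, hK, hP⟩ := R.P_asymp
  obtain ⟨K2, hK2, hl⟩ := R.phi_lip
  have hC := R.C0
  have hlip : LipschitzOnWith (Real.toNNReal K2) φ (Icc 0 T) := by
    refine LipschitzOnWith.of_dist_le_mul fun a ha b hb => ?_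
    rw [Real.coe_toNNReal _ hK2, Real.dist_eq, Real.dist_eq]
    rcases le_total a b with h | h
    · rw [abs_sub_comm, abs_sub_comm a b, abs_of_nonneg (sub_nonneg.mpr h)]
      exact hl a b ha.1 h hb.2
    · rw [abs_of_nonneg (sub_nonneg.mpr h)]
      exact hl b a hb.1 h ha.2
  have hφi : IntervalIntegrable φ volume 0 t := by
    apply ContinuousOn.intervalIntegrable
    rw [uIcc_of_le ht.1]
    exact hlip.continuousOn.mono (Icc_subset_Icc le_rfl ht.2)
  set N := K * Real.sqrt C + Real.sqrt (2 * C) * K with hN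
  have h1 := R.sys.r_lim le_rfl ht.1 ht.2
  rw [R.sys.r0, sub_zero] at h1
  refine tendsto_nhds_unique h1 ?_
  rw [tendsto_iff_norm_sub_tendsto_zero]
  have hz : Tendsto (fun x : ℝ => N * Real.sqrt x * |t - 0|) (𝓝[>] 0) (𝓝 0) := by
    have : Continuous (fun x : ℝ => N * Real.sqrt x * |t - 0|) := by fun_prop
    have h2 := this.tendsto 0
    simp only [mul_zero, zero_mul, Real.sqrt_zero] at h2
    exact h2.mono_left nhdsWithin_le_nhds
  refine squeeze_zero' (Eventually.of_forall fun x => norm_nonneg _) ?_ hz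
  filter_upwards [Ioc_mem_nhdsGT (sub_pos.mpr R.TL)] with x hx
  rw [← intervalIntegral.integral_sub (intervalIntegrable_of_bdd (R.sys.g0_meas hx.1) _
    (fun τ => R.sys.g0_bd hx.1 τ x le_rfl) 0 t) hφi]
  refine intervalIntegral.norm_integral_le_of_norm_le_const fun τ hτ => ?_
  rw [uIoc_of_le ht.1] at hτ
  have hτT : τ ∈ Icc 0 T := ⟨hτ.1.le, hτ.2.trans ht.2⟩
  exact R.WP_asymp hK hP hτT hx.1 (by linarith [hx.2, hτT.2])

end Reg3

/-- precise asymptotics of a critical solution near `x = 0`: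
there are a Lipschitz control density `φ` with `r(t) = ∫₀ᵗ φ` and a constant
`C' > 1` such that `C'⁻¹ ≤ φ ≤ C'` and
`−V(t,x) = √(2φ(t))·x^(1/2) + O(x)`, `−∂ₓV(t,x) = √(φ(t)/2)·x^(−1/2) + O(1)`,
`∂ₓ²V(t,x) = √(φ(t)/8)·x^(−3/2) + O(x⁻¹)`, `V·∂ₓV(t,x) = φ(t) + O(x^(1/2))`. -/
theorem critical_solution_asymptotics (T : ℝ) (hT : 0 < T) (v : ℕ → ℝ → ℝ) (r : ℝ → ℝ)
    (hsol : IsBurgersSolution T v r)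
    (hcons : ∀ t ∈ Set.Icc (0:ℝ) T, HasSum (fun k : ℕ => v (k + 1) t) 1)
    (hm1 : ¬ Summable (fun k : ℕ => ((k : ℝ) + 1) * v (k + 1) 0))
    (tbar : ℝ) (htbar : tbar ∈ Set.Ioc (0:ℝ) T) (xbar : ℝ) (hxbar : 0 < xbar)
    (c C : ℝ) (hc : 0 < c) (hcC : c ≤ C)
    (hE : ∀ x ∈ Set.Ioc (0:ℝ) (xbar + tbar), c ≤ EFun v 0 x ∧ EFun v 0 x ≤ C)
    (hE' : ∀ x ∈ Set.Ioc (0:ℝ) (xbar + tbar),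
      |deriv (fun y => EFun v 0 y) x| ≤ C * x ^ (-(1:ℝ)/2)) :
    ∃ φ : ℝ → ℝ, ∃ C' : ℝ, 1 < C' ∧
      (∃ K : NNReal, LipschitzOnWith K φ (Set.Icc (0:ℝ) tbar)) ∧
      (∀ t ∈ Set.Icc (0:ℝ) tbar, r t = ∫ s in (0:ℝ)..t, φ s) ∧
      (∀ t ∈ Set.Icc (0:ℝ) tbar, C'⁻¹ ≤ φ t ∧ φ t ≤ C') ∧
      (∀ t ∈ Set.Icc (0:ℝ) tbar, ∀ x ∈ Set.Ioc (0:ℝ) xbar,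
        |(-genFun v t x) - Real.sqrt (2 * φ t) * x ^ ((1:ℝ)/2)| ≤ C' * x ∧
        |(-deriv (genFun v t) x) - Real.sqrt (φ t / 2) * x ^ (-(1:ℝ)/2)| ≤ C' ∧
        |iteratedDeriv 2 (genFun v t) x - Real.sqrt (φ t / 8) * x ^ (-(3:ℝ)/2)|
          ≤ C' * x⁻¹ ∧
        |genFun v t x * deriv (genFun v t) x - φ t| ≤ C' * x ^ ((1:ℝ)/2)) := by
  have h0T : (0:ℝ) ∈ Set.Icc (0:ℝ) T := ⟨le_rfl, hT.le⟩
  have hv : ∀ t ∈ Set.Icc (0:ℝ) T, ∀ k : ℕ, 0 ≤ v (k + 1) t :=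
    fun t ht k => hsol.1 (k + 1) (by omega) t ht
  have S := sys_of_solution hsol hcons htbar
  have hclamp : ∀ t ∈ Set.Icc (0:ℝ) tbar, max 0 (min t tbar) = t := by
    intro t ht
    rw [min_eq_left ht.2, max_eq_right ht.1]
  have hDt : ∀ t ∈ Set.Icc (0:ℝ) tbar, ∀ n x,
      (fun n t x => momSer (fun k => v (k+1) (max 0 (min t tbar))) n x) n t x =
        momSer (fun k => v (k+1) t) n x := by
    intro t ht n x
    simp only [hclamp t ht]
  have hrt : ∀ t ∈ Set.Icc (0:ℝ) tbar, (fun t => r (max 0 (min t tbar))) t = r t := by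
    intro t ht
    simp only [hclamp t ht]
  generalize (fun n t x => momSer (fun k => v (k+1) (max 0 (min t tbar))) n x) = D at S hDt
  generalize (fun t => r (max 0 (min t tbar))) = ρ at S hrt
  have h0t : (0:ℝ) ∈ Set.Icc (0:ℝ) tbar := ⟨le_rfl, htbar.1.le⟩
  have hE1 : ∀ y, 0 < y → EFun v 0 y = D 1 0 y ^ 3 / D 2 0 y := by
    intro y hy
    rw [EFun_eq (hv 0 h0T) (hcons 0 h0T) hy, hDt 0 h0t, hDt 0 h0t]
  have hC : 0 < C := hc.trans_le hcC
  obtain ⟨c1, C1, p, q, R1⟩ := reg_of_init (L := xbar + tbar) (c := c) (C := C) S htbar.1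
    (by linarith) hc (fun y hy hyL => by rw [← hE1 y hy]; exact hE y ⟨hy, hyL⟩)
  have R2 : Reg2 tbar (xbar + tbar) D ρ c1 C1 p q := ⟨R1, fun t ht m => R1.unbounded (fun m => by
    obtain ⟨x, hx, hxm⟩ := momSer_one_unbounded (hv 0 h0T) (hcons 0 h0T) hm1 m
    exact ⟨x, hx, by rw [hDt 0 h0t]; exact hxm⟩) ht m⟩
  have hE0 : ∀ y1 y2, 0 < y1 → y1 ≤ y2 → y2 ≤ xbar + tbar →
      |Real.log (D 1 0 y2 ^ 3 / D 2 0 y2) - Real.log (D 1 0 y1 ^ 3 / D 2 0 y1)| ≤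
        (2 * C / c) * (Real.sqrt y2 - Real.sqrt y1) := by
    intro y1 y2 hy1 hyy hyL
    refine sqrt_mvt (f := fun y => Real.log (D 1 0 y ^ 3 / D 2 0 y))
      (f' := fun y => deriv (fun y => EFun v 0 y) y / (D 1 0 y ^ 3 / D 2 0 y)) hy1 hyy
      (fun y hy => ?_) (fun y hy => ?_)
    · have hy0 : 0 < y := hy1.trans_le hy.1
      have hev : (fun y => EFun v 0 y) =ᶠ[𝓝 y] fun y => D 1 0 y ^ 3 / D 2 0 y := by
        filter_upwards [Ioi_mem_nhds hy0] with z hz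
        exact hE1 z hz
      rw [hev.deriv_eq]
      have hd : DifferentiableAt ℝ (fun y => D 1 0 y ^ 3 / D 2 0 y) y :=
        ((S.der 1 0 y hy0).differentiableAt.pow 3).div (S.der 2 0 y hy0).differentiableAt
          (S.pos 2 0 y hy0).ne'
      exact hd.hasDerivAt.log (S.Epos hy0).ne'
    · have hy0 : 0 < y := hy1.trans_le hy.1
      have hyI : y ∈ Set.Ioc (0:ℝ) (xbar + tbar) := ⟨hy0, hy.2.trans hyL⟩
      have b1 := hE' y hyI
      have b2 := (hE y hyI).1
      rw [hE1 y hy0] at b2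
      have hs : 0 < Real.sqrt y := Real.sqrt_pos.mpr hy0
      have b3 : y ^ (-(1:ℝ)/2) = (Real.sqrt y)⁻¹ := by
        rw [show -(1:ℝ)/2 = -(1/2) by ring, Real.rpow_neg hy0.le, ← Real.sqrt_eq_rpow]
      rw [b3] at b1
      rw [abs_div, abs_of_pos (S.Epos hy0)]
      calc _ ≤ (C * (Real.sqrt y)⁻¹) / c := div_le_div₀ (by positivity) b1 hc b2
        _ = _ := by field_simp
  obtain ⟨φ, M, R⟩ := R2.exists_phi (by positivity) hE0
  obtain ⟨K, hK, hP⟩ := R.P_asymp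
  obtain ⟨K2, hK2, hl⟩ := R.phi_lip
  have hc1 := R.c0
  have hC1 := R.C0
  have hM := R.M0
  set KQ := 3 * C1 * K / c1 + Real.sqrt C1 ^ 3 * M / c1 ^ 2 with hKQ
  set KW := K * Real.sqrt C1 + Real.sqrt (2 * C1) * K with hKW
  have hKQ0 : 0 ≤ KQ := by rw [hKQ]; positivity
  have hKW0 : 0 ≤ KW := by rw [hKW]; positivity
  have hci : 0 < c1⁻¹ := by positivity
  have hfin : ∃ N, N = 2 + C1 + c1⁻¹ + K + KQ + KW := ⟨_, rfl⟩
  obtain ⟨N, hN⟩ := hfin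
  refine ⟨φ, N, by linarith, ⟨Real.toNNReal K2, ?_⟩, ?_, ?_, ?_⟩
  · refine LipschitzOnWith.of_dist_le_mul fun a ha b hb => ?_
    rw [Real.coe_toNNReal _ hK2, Real.dist_eq, Real.dist_eq]
    rcases le_total a b with h | h
    · rw [abs_sub_comm, abs_sub_comm a b, abs_of_nonneg (sub_nonneg.mpr h)]
      exact hl a b ha.1 h hb.2
    · rw [abs_of_nonneg (sub_nonneg.mpr h)]
      exact hl b a hb.1 h ha.2
  · intro t ht
    rw [← hrt t ht]
    exact R.r_eq ht
  · intro t ht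
    refine ⟨(inv_le_of_inv_le₀ hc1 (by linarith)).trans (R.φc t ht), ?_⟩
    linarith [R.φC t ht]
  · intro t ht x hx
    have hx0 := hx.1
    have htT : t ∈ Set.Icc (0:ℝ) T := ⟨ht.1, ht.2.trans htbar.2⟩
    have hxL : t + x ≤ xbar + tbar := by linarith [ht.2, hx.2]
    have hφ : 0 < φ t := hc1.trans_le (R.φc t ht)
    have g0 : genFun v t x = D 0 t x - 1 := by rw [genFun_eq, hDt t ht]
    have g1 : deriv (genFun v t) x = -D 1 t x := by
      rw [genFun_deriv (hv t htT) (hcons t htT) hx0, hDt t ht]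
    have g2 : iteratedDeriv 2 (genFun v t) x = D 2 t x := by
      rw [genFun_deriv2 (hv t htT) (hcons t htT) hx0, hDt t ht]
    have hσ0 : 0 < Real.sqrt x := Real.sqrt_pos.mpr hx0
    have hσx : Real.sqrt x ^ 2 = x := Real.sq_sqrt hx0.le
    have s1 : x ^ ((1:ℝ)/2) = Real.sqrt x := (Real.sqrt_eq_rpow x).symm
    have s2 : x ^ (-(1:ℝ)/2) = (Real.sqrt x)⁻¹ := by
      rw [show -(1:ℝ)/2 = -(1/2) by ring, Real.rpow_neg hx0.le, ← Real.sqrt_eq_rpow]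
    have s3 : x ^ (-(3:ℝ)/2) = (Real.sqrt x ^ 3)⁻¹ := by
      rw [show -(3:ℝ)/2 = -(1/2 * 3) by ring, Real.rpow_neg hx0.le, Real.rpow_mul hx0.le,
        ← Real.sqrt_eq_rpow]
      norm_num
    have e1 : Real.sqrt (2 * φ t) * Real.sqrt x = Real.sqrt (2 * φ t * x) :=
      (Real.sqrt_mul (by positivity) x).symm
    have e2 : Real.sqrt (φ t / 2) * (Real.sqrt x)⁻¹ = Real.sqrt (φ t / (2 * x)) := by
      rw [← div_eq_mul_inv, ← Real.sqrt_div (by positivity), div_div]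
    have e3 : Real.sqrt (φ t / 8) * (Real.sqrt x ^ 3)⁻¹ = Real.sqrt (φ t / (2 * x)) ^ 3 / φ t := by
      rw [← e2]
      have a1 : Real.sqrt (φ t / 8) = Real.sqrt (φ t / 2) / 2 := by
        rw [show φ t / 8 = φ t / 2 / 2 ^ 2 by ring, Real.sqrt_div (by positivity),
          Real.sqrt_sq (by norm_num)]
      have a2 : Real.sqrt (φ t / 2) ^ 3 = Real.sqrt (φ t / 2) * (φ t / 2) := by
        rw [pow_succ', Real.sq_sqrt (by positivity)]
      rw [a1, mul_pow, a2]
      field_simp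
    rw [g0, g1, g2, s1, s2, s3, e1, e2, e3]
    have f1 := R.W_asymp hP ht hx0 hxL
    have f2 := hP t ht x hx0 hxL
    have f3 := R.Q_asymp hK hP ht hx0 hxL
    have f4 := R.WP_asymp hK hP ht hx0 hxL
    rw [← hKQ] at f3
    rw [← hKW] at f4
    refine ⟨?_, ?_, ?_, ?_⟩
    · rw [neg_sub]
      exact f1.trans (mul_le_mul_of_nonneg_right (by linarith) hx0.le)
    · rw [neg_neg]
      exact f2.trans (by linarith)
    · exact f3.trans (mul_le_mul_of_nonneg_right (by linarith) (by positivity))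
    · rw [show (D 0 t x - 1) * -D 1 t x = (1 - D 0 t x) * D 1 t x by ring]
      exact f4.trans (mul_le_mul_of_nonneg_right (by linarith) hσ0.le)
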